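/- Let n ≥ 2 and let F(Y,X₁,…,Xₙ) ∈ ℤ[Y,X₁,…,Xₙ] be absolutely irreducible (irreducible in ℚ̄[Y,X₁,…,Xₙ]), monic in Y with deg_Y F ≥ 2, and with ‖F‖ ≥ 3. Suppose that every element of L_F := ℚ(X₁,…,Xₙ)[Y]/(F) that is algebraic over the subfield ℚ(X₂,…,Xₙ) already lies in ℚ(X₂,…,Xₙ). For a prime p and x ∈ 𝔽_pⁿ set v_p(x) := #{y ∈ 𝔽_p : F(y,x) = 0} and S(u,p) := Σ_{x ∈ 𝔽_pⁿ} (v_p(x) − 1) · e_p(u·x). Then there exists a finite set E of primes with |E| ≤ C(n,deg F) · log‖F‖ / log log‖F‖, for a constant C(n,deg F) depending only on n and deg F, such that for every prime p ∉ E: Σ_{u ∈ 𝔽_pⁿ, u₁ = 0} |S(u,p)|² ≤ C′(n,deg F) · p^{2n−1}. -/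

import Mathlib

open Polynomial

noncomputable section

/-- The rational function field `ℚ(X₁,…,Xₙ)`. -/
abbrev RF (n : ℕ) := FractionRing (MvPolynomial (Fin n) ℚ)

/-- Base change a polynomial `F ∈ ℤ[Y,X₁,…,Xₙ]` (written as a polynomial in `Y`
with coefficients in `ℤ[X₁,…,Xₙ]`) to `ℚ[Y,X₁,…,Xₙ]`. -/
def toQ {n : ℕ} (F : Polynomial (MvPolynomial (Fin n) ℤ)) :
    Polynomial (MvPolynomial (Fin n) ℚ) :=
  F.map (MvPolynomial.map (Int.castRingHom ℚ))

/-- View a polynomial in `ℚ[X][Y]` as a polynomial in `ℚ(X)[Y]`. -/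
def toFracQ {n : ℕ} (F : Polynomial (MvPolynomial (Fin n) ℚ)) : Polynomial (RF n) :=
  F.map (algebraMap (MvPolynomial (Fin n) ℚ) (RF n))

/-- View a polynomial in `ℤ[X][Y]` as a polynomial in `ℚ(X)[Y]`. -/
def toFrac {n : ℕ} (F : Polynomial (MvPolynomial (Fin n) ℤ)) : Polynomial (RF n) :=
  toFracQ (toQ F)

/-- The degree of `F(Y,X)` in the variable `Xᵢ`. -/
def degX {n : ℕ} {R : Type*} [CommSemiring R]
    (F : Polynomial (MvPolynomial (Fin n) R)) (i : Fin n) : ℕ :=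
  F.support.sup fun k => (F.coeff k).degreeOf i

/-- The total degree of `F(Y,X₁,…,Xₙ)` as a polynomial in `n+1` variables. -/
def totalDeg {n : ℕ} {R : Type*} [CommSemiring R]
    (F : Polynomial (MvPolynomial (Fin n) R)) : ℕ :=
  F.support.sup fun k => k + (F.coeff k).totalDegree

/-- `‖g‖`: the maximum absolute value of a coefficient of `g ∈ ℤ[X₁,…,Xₙ]`. -/
def mvNorm {n : ℕ} (g : MvPolynomial (Fin n) ℤ) : ℕ :=
  g.support.sup fun m => (g.coeff m).natAbs

/-- `‖F‖`: the maximum absolute value of a coefficient of `F ∈ ℤ[Y,X₁,…,Xₙ]`. -/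
def polyNorm {n : ℕ} (F : Polynomial (MvPolynomial (Fin n) ℤ)) : ℕ :=
  F.support.sup fun k => mvNorm (F.coeff k)

/-- The counting function
`N(F,B) = #{x ∈ ℤⁿ ∩ [−B,B]ⁿ : ∃ y ∈ ℤ, F(y,x) = 0}`. -/
def NFB {n : ℕ} (F : Polynomial (MvPolynomial (Fin n) ℤ)) (B : ℝ) : ℕ :=
  Set.ncard {x : Fin n → ℤ | (∀ i, |(x i : ℝ)| ≤ B) ∧
    ∃ y : ℤ, Polynomial.eval y (F.map (MvPolynomial.eval x)) = 0}

/-- `F ∈ ℤ[Y,X₁,…,Xₙ]` is absolutely irreducible: irreducible over `ℚ̄`. -/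
def AbsIrred {n : ℕ} (F : Polynomial (MvPolynomial (Fin n) ℤ)) : Prop :=
  Irreducible (F.map (MvPolynomial.map (Int.castRingHom (AlgebraicClosure ℚ))))

/-- `G` has positive degree in `Y` and in each variable `Xᵢ`. -/
def AllPosDeg {n : ℕ} (G : Polynomial (MvPolynomial (Fin n) ℤ)) : Prop :=
  0 < G.natDegree ∧ ∀ i : Fin n, 0 < degX G i

/-- A field extension `M` of `ℚ(X₁,…,Xₙ)` is an `n`-genuine extension: every
`G ∈ ℤ[Y,X₁,…,Xₙ]` irreducible over `ℚ(X)` with `M ≅ ℚ(X)[Y]/(G)` has positive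
degree in each of `Y, X₁, …, Xₙ`. -/
def IsGenuineExt (n : ℕ) (M : Type*) [Field M] [Algebra (RF n) M] : Prop :=
  ∀ G : Polynomial (MvPolynomial (Fin n) ℤ), Irreducible (toFrac G) →
    Nonempty (AdjoinRoot (toFrac G) ≃ₐ[RF n] M) → AllPosDeg G

/-- A field extension `M` of `ℚ(X₁,…,Xₙ)` is strongly `n`-genuine: every
intermediate field strictly containing `ℚ(X)` is `n`-genuine. -/
def IsStronglyGenuineExt (n : ℕ) (M : Type*) [Field M] [Algebra (RF n) M] : Prop :=
  ∀ M' : IntermediateField (RF n) M, M' ≠ ⊥ → IsGenuineExt n M'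

/-- The extension `ℚ(X)[Y]/(Fq)` presented by `Fq ∈ ℚ[X][Y]` is `n`-genuine. -/
def GenuineExtOfQ {n : ℕ} (Fq : Polynomial (MvPolynomial (Fin n) ℚ)) : Prop :=
  ∀ G : Polynomial (MvPolynomial (Fin n) ℤ), Irreducible (toFrac G) →
    Nonempty (AdjoinRoot (toFrac G) ≃ₐ[RF n] AdjoinRoot (toFracQ Fq)) → AllPosDeg G

/-- The extension `ℚ(X)[Y]/(Fq)` presented by `Fq ∈ ℚ[X][Y]` is strongly
`n`-genuine: for any field `M` isomorphic over `ℚ(X)` to `ℚ(X)[Y]/(Fq)`, every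
intermediate field strictly containing `ℚ(X)` is `n`-genuine. -/
def StronglyGenuineExtOfQ {n : ℕ} (Fq : Polynomial (MvPolynomial (Fin n) ℚ)) : Prop :=
  ∀ (M : Type) [Field M] [Algebra (RF n) M],
    Nonempty (AdjoinRoot (toFracQ Fq) ≃ₐ[RF n] M) → IsStronglyGenuineExt n M

/-- An absolutely irreducible `F ∈ ℤ[Y,X₁,…,Xₙ]` is an `n`-genuine polynomial. -/
def IsGenuinePoly {n : ℕ} (F : Polynomial (MvPolynomial (Fin n) ℤ)) : Prop :=
  AbsIrred F ∧ GenuineExtOfQ (toQ F)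

/-- An absolutely irreducible `F ∈ ℤ[Y,X₁,…,Xₙ]` is a strongly `n`-genuine polynomial. -/
def IsStronglyGenuinePoly {n : ℕ} (F : Polynomial (MvPolynomial (Fin n) ℤ)) : Prop :=
  AbsIrred F ∧ StronglyGenuineExtOfQ (toQ F)

/-- The ring map `ℚ[X₁,…,Xₙ] → ℚ[X₁,…,Xₙ]` induced by the linear substitution
`Xᵢ ↦ Σⱼ σᵢⱼ Xⱼ`. -/
def lsubMv {n : ℕ} (σ : Matrix (Fin n) (Fin n) ℚ) :
    MvPolynomial (Fin n) ℚ →+* MvPolynomial (Fin n) ℚ :=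
  (MvPolynomial.aeval (R := ℚ)
    fun i => ∑ j, MvPolynomial.C (σ i j) * MvPolynomial.X j).toRingHom

/-- `F_σ(Y,X) := F(Y,σ(X))` for a linear change of variables `σ`. -/
def applyGL {n : ℕ} (σ : Matrix (Fin n) (Fin n) ℚ)
    (Fq : Polynomial (MvPolynomial (Fin n) ℚ)) : Polynomial (MvPolynomial (Fin n) ℚ) :=
  Fq.map (lsubMv σ)

/-- `F` is `(1,n)`-allowable: absolutely irreducible, monic in `Y`, and
`ℚ(X)[Y]/(F_σ)` is an `n`-genuine extension for every `σ ∈ GLₙ(ℚ)`. -/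
def IsAllowable {n : ℕ} (F : Polynomial (MvPolynomial (Fin n) ℤ)) : Prop :=
  AbsIrred F ∧ F.Monic ∧
    ∀ σ : Matrix (Fin n) (Fin n) ℚ, IsUnit σ.det → GenuineExtOfQ (applyGL σ (toQ F))

/-- `F` is strongly `(1,n)`-allowable: absolutely irreducible, monic in `Y`, and
`ℚ(X)[Y]/(F_σ)` is a strongly `n`-genuine extension for every `σ ∈ GLₙ(ℚ)`. -/
def IsStronglyAllowable {n : ℕ} (F : Polynomial (MvPolynomial (Fin n) ℤ)) : Prop :=
  AbsIrred F ∧ F.Monic ∧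
    ∀ σ : Matrix (Fin n) (Fin n) ℚ, IsUnit σ.det → StronglyGenuineExtOfQ (applyGL σ (toQ F))

/-- `F` has the form (1.2) with parameter `m`:
`F = Y^{md} + f₁(X) Y^{m(d-1)} + ⋯ + f_{d-1}(X) Y^m + f_d(X)` with `f_d ≠ 0`. -/
def HasForm (n m : ℕ) (F : Polynomial (MvPolynomial (Fin n) ℤ)) : Prop :=
  ∃ (d : ℕ) (f : ℕ → MvPolynomial (Fin n) ℤ), 1 ≤ d ∧ f d ≠ 0 ∧
    F = Polynomial.X ^ (m * d) +
      ∑ j ∈ Finset.Icc 1 d, Polynomial.C (f j) * Polynomial.X ^ (m * (d - j))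

/-- `P` has a linear factor in `Y`: `P = (Y − Q(X))·H̃(Y,X)`. -/
def HasLinearFactorY {n : ℕ} {R : Type*} [CommRing R]
    (P : Polynomial (MvPolynomial (Fin n) R)) : Prop :=
  ∃ (Q : MvPolynomial (Fin n) R) (H : Polynomial (MvPolynomial (Fin n) R)),
    P = (Polynomial.X - Polynomial.C Q) * H

/-- The canonical map `ℚ[X₁,…,Xₙ] → ℚ(X)[Y]/(F)`. -/
def structMap {n : ℕ} (F : Polynomial (MvPolynomial (Fin n) ℤ)) :
    MvPolynomial (Fin n) ℚ →+* AdjoinRoot (toFrac F) :=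
  (algebraMap (RF n) (AdjoinRoot (toFrac F))).comp
    (algebraMap (MvPolynomial (Fin n) ℚ) (RF n))

/-- `z ∈ ℚ(X)[Y]/(F)` lies in the subfield `ℚ((Xᵢ)_{i≠j})`: it can be written
as a quotient of two polynomials not involving `Xⱼ`. -/
def CoordMem {n : ℕ} (j : Fin n) (F : Polynomial (MvPolynomial (Fin n) ℤ))
    (z : AdjoinRoot (toFrac F)) : Prop :=
  ∃ a b : MvPolynomial (Fin n) ℚ,
    MvPolynomial.degreeOf j a = 0 ∧ MvPolynomial.degreeOf j b = 0 ∧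
    structMap F b ≠ 0 ∧ z * structMap F b = structMap F a

/-- `z ∈ ℚ(X)[Y]/(F)` is algebraic over the subfield `ℚ((Xᵢ)_{i≠j})`. -/
def AlgOverCoord {n : ℕ} (j : Fin n) (F : Polynomial (MvPolynomial (Fin n) ℤ))
    (z : AdjoinRoot (toFrac F)) : Prop :=
  ∃ P : Polynomial (AdjoinRoot (toFrac F)), P ≠ 0 ∧ (∀ k, CoordMem j F (P.coeff k)) ∧
    Polynomial.eval z P = 0

/-- Substitute `Xᵢ = xᵢ` for `i ∈ I` into `F`, over `ℚ̄`. -/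
def substSome {n : ℕ} (I : Finset (Fin n)) (x : Fin n → ℚ)
    (F : Polynomial (MvPolynomial (Fin n) ℤ)) :
    Polynomial (MvPolynomial (Fin n) (AlgebraicClosure ℚ)) :=
  (toQ F).map
    ((MvPolynomial.aeval (R := ℚ) fun i =>
      if i ∈ I then MvPolynomial.C (algebraMap ℚ (AlgebraicClosure ℚ) (x i))
      else MvPolynomial.X i).toRingHom)

/-- Substitute `Xᵢ = xᵢ` for all `i ≠ i₀` into `F`, over `ℚ̄`. -/
def substKeepFirst {n : ℕ} (i0 : Fin n) (x : {i : Fin n // i ≠ i0} → ℤ)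
    (F : Polynomial (MvPolynomial (Fin n) ℤ)) :
    Polynomial (MvPolynomial (Fin n) (AlgebraicClosure ℚ)) :=
  F.map
    ((MvPolynomial.aeval (R := ℤ) fun i =>
      if h : i = i0 then (MvPolynomial.X i : MvPolynomial (Fin n) (AlgebraicClosure ℚ))
      else MvPolynomial.C ((x ⟨i, h⟩ : ℤ) : AlgebraicClosure ℚ)).toRingHom)

/-- `‖L‖`: maximum absolute value of an entry of an integer matrix. -/
def matNorm {n : ℕ} (L : Matrix (Fin n) (Fin n) ℤ) : ℕ :=
  Finset.univ.sup fun p : Fin n × Fin n => (L p.1 p.2).natAbs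

/-- The standard additive character `e_p(a) = exp(2πi a/p)` on `ZMod p`. -/
def eZp (p : ℕ) (a : ZMod p) : ℂ :=
  Complex.exp (2 * Real.pi * Complex.I * (a.val : ℂ) / (p : ℂ))


namespace Stp

/-- Partial derivative with respect to the inner variable. -/
def dX {R : Type*} [CommRing R] : Derivation R R[X][X] R[X][X] :=
  Derivation.mk'
    ((Bivariate.swap (R := R)).toLinearMap ∘ₗ ((derivative (R := R[X])).restrictScalars R) ∘ₗ
      (Bivariate.swap (R := R)).toLinearMap) (by
    intro a b
    simp [derivative_mul, Bivariate.swap_swap_apply]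
    ring)

section
variable {R : Type*} [CommRing R]

lemma dX_apply (a : R[X][X]) : dX a = Bivariate.swap (derivative (Bivariate.swap a)) := rfl

lemma dX_mul (a b : R[X][X]) : dX (a * b) = dX a * b + a * dX b := by
  rw [Derivation.leibniz]; simp only [smul_eq_mul]; ring

lemma dX_monomial (j : ℕ) (a : R[X]) : dX (monomial j a) = monomial j (derivative a) := by
  induction a using Polynomial.induction_on' with
  | add p q hp hq => simp [map_add, hp, hq]
  | monomial i r =>
    rw [dX_apply, Bivariate.swap_monomial_monomial, derivative_monomial, derivative_monomial]
    have : (monomial j r * (i : R[X])) = monomial j (r * i) := by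
      rw [← C_eq_natCast, monomial_mul_C]
    rw [this, Bivariate.swap_monomial_monomial]

lemma coeff_dX (a : R[X][X]) (j : ℕ) : (dX a).coeff j = derivative (a.coeff j) := by
  induction a using Polynomial.induction_on' with
  | add p q hp hq => simp [map_add, hp, hq]
  | monomial i r =>
    rw [dX_monomial, coeff_monomial, coeff_monomial]
    split_ifs <;> simp

lemma coeff_swap (a : R[X][X]) (i j : ℕ) : ((Bivariate.swap a).coeff i).coeff j = (a.coeff j).coeff i := by
  induction a using Polynomial.induction_on' with
  | add p q hp hq => simp [map_add, hp, hq]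
  | monomial m r =>
    induction r using Polynomial.induction_on' with
    | add p q hp hq => simp only [map_add, coeff_add, hp, hq]
    | monomial l s =>
      rw [Bivariate.swap_monomial_monomial]
      simp only [coeff_monomial]
      split_ifs <;> simp_all [coeff_monomial]

/-- Degree in the inner variable. -/
def dgX (a : R[X][X]) : ℕ := (Bivariate.swap a).natDegree

lemma dgX_le_iff (a : R[X][X]) (D : ℕ) : dgX a ≤ D ↔ ∀ j, (a.coeff j).natDegree ≤ D := by
  unfold dgX
  simp only [natDegree_le_iff_coeff_eq_zero]
  constructor
  · intro h j N hN
    rw [← coeff_swap, h N hN]; simp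
  · intro h N hN
    ext j
    rw [coeff_swap, h j N hN]; simp

lemma dgX_mul [IsDomain R] {a b : R[X][X]} (ha : a ≠ 0) (hb : b ≠ 0) :
    dgX (a * b) = dgX a + dgX b := by
  unfold dgX
  rw [map_mul, natDegree_mul]
  · simpa using ha
  · simpa using hb

lemma dgX_mul_le (a b : R[X][X]) : dgX (a * b) ≤ dgX a + dgX b := by
  unfold dgX
  rw [map_mul]; exact natDegree_mul_le

lemma dgX_dX_le (a : R[X][X]) : dgX (dX a) ≤ dgX a := by
  unfold dgX
  rw [dX_apply, Bivariate.swap_swap_apply]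
  exact (natDegree_derivative_le _).trans (Nat.sub_le _ _)

lemma dgX_dY_le (a : R[X][X]) : dgX (derivative a) ≤ dgX a := by
  rw [dgX_le_iff]
  intro j
  rw [coeff_derivative]
  have h := (dgX_le_iff a _).1 le_rfl (j+1)
  refine le_trans natDegree_mul_le ?_
  have : ((j : R[X]) + 1).natDegree = 0 := by
    have := natDegree_natCast (R := R) (j+1); push_cast at this; exact this
  omega

lemma dX_dY (a : R[X][X]) : dX (derivative a) = derivative (dX a) := by
  ext j : 1
  rw [coeff_dX, coeff_derivative, coeff_derivative, coeff_dX, derivative_mul]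
  simp

lemma natDegree_dX_le (a : R[X][X]) : (dX a).natDegree ≤ a.natDegree := by
  rw [natDegree_le_iff_coeff_eq_zero]
  intro N hN
  rw [coeff_dX, coeff_eq_zero_of_natDegree_lt hN]; simp

lemma natDegree_dX_lt {a : R[X][X]} (ha : a.Monic) (h : 0 < a.natDegree) :
    (dX a).natDegree < a.natDegree := by
  refine lt_of_le_of_ne (natDegree_dX_le a) ?_
  intro he
  have h2 : (dX a).coeff a.natDegree = 0 := by
    rw [coeff_dX, ha.coeff_natDegree]; simp
  rw [← he] at h2
  have h3 := leadingCoeff_eq_zero.1 h2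
  rw [h3] at he; simp at he; omega

/-- The closedness expression. -/
def Tf (f g h : R[X][X]) : R[X][X] :=
  f * (derivative g - dX h) - g * derivative f + h * dX f

/-- Certificate: the only bounded solution with zero distinguished coefficient is trivial. -/
def Cert (d D : ℕ) (f : R[X][X]) : Prop :=
  ∀ g h : R[X][X], g.natDegree < d → h.natDegree < d → dgX g ≤ D → dgX h ≤ D →
    Tf f g h = 0 → (h.coeff (d-1)).coeff 0 = 0 → g = 0 ∧ h = 0

end

lemma irr_of_cert {κ : Type*} [Field κ] (d D : ℕ) (hd : 1 ≤ d) (f : κ[X][X]) (hf : f.Monic)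
    (hfd : f.natDegree = d) (hD : dgX f ≤ D) (hchar : ∀ j : ℕ, 1 ≤ j → j ≤ d → (j : κ) ≠ 0)
    (hc : Cert d D f) : Irreducible f := by
  have hdj : ∀ a : κ[X][X], a.Monic → 1 ≤ a.natDegree → a.natDegree ≤ d →
      derivative a ≠ 0 ∧ (derivative a).natDegree < a.natDegree ∧ 
      (derivative a).coeff (a.natDegree - 1) = (a.natDegree : κ[X]) := by
    intro a ha h1 h2
    have h3 : (derivative a).coeff (a.natDegree - 1) = (a.natDegree : κ[X]) := by
      rw [coeff_derivative]
      have : a.natDegree - 1 + 1 = a.natDegree := by omega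
      rw [this, ha.coeff_natDegree]
      rw [one_mul]
      have : ((a.natDegree : ℕ) : κ[X]) = ((a.natDegree - 1 + 1 : ℕ) : κ[X]) := by rw [this]
      rw [this]; push_cast; rfl
    refine ⟨?_, natDegree_derivative_lt (by omega), h3⟩
    intro h0
    rw [h0] at h3
    have := hchar _ h1 h2
    apply this
    have h4 : ((a.natDegree : κ[X])) = C (a.natDegree : κ) := by simp
    rw [h4] at h3
    rw [coeff_zero] at h3
    exact (C_eq_zero.1 h3.symm)
  have hfne : f ≠ 1 := by rintro rfl; simp at hfd; omega
  have hnu : ¬ IsUnit f := by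
    intro h; exact hfne (hf.eq_one_of_isUnit h)
  obtain ⟨f1', hirr', f2', hff⟩ := WfDvdMonoid.exists_irreducible_factor hnu hf.ne_zero
  -- normalize
  have hlc : f1'.leadingCoeff * f2'.leadingCoeff = 1 := by
    rw [← leadingCoeff_mul, ← hff]; exact hf
  obtain ⟨f1, f2, h1, h2, hirr, hff⟩ : ∃ f1 f2 : κ[X][X], f1.Monic ∧ f2.Monic ∧ Irreducible f1 ∧
      f = f1 * f2 := by
    refine ⟨C f2'.leadingCoeff * f1', C f1'.leadingCoeff * f2', ?_, ?_, ?_, ?_⟩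
    · rw [Monic, leadingCoeff_mul, leadingCoeff_C, mul_comm, hlc]
    · rw [Monic, leadingCoeff_mul, leadingCoeff_C, hlc]
    · have hu : IsUnit (C f2'.leadingCoeff) := by
        rw [isUnit_C]; exact IsUnit.of_mul_eq_one (f1'.leadingCoeff) (by rw [mul_comm]; exact hlc)
      exact (irreducible_isUnit_mul hu).2 hirr'
    · rw [hff]
      have : C f2'.leadingCoeff * f1' * (C f1'.leadingCoeff * f2') = 
        C (f1'.leadingCoeff * f2'.leadingCoeff) * (f1' * f2') := by rw [C_mul]; ring
      rw [this, hlc]; simp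
  by_cases hf2 : f2 = 1
  · rw [hff, hf2, mul_one]; exact hirr
  exfalso
  have e1 : 1 ≤ f1.natDegree := by
    rcases Nat.eq_zero_or_pos f1.natDegree with h | h
    · exact absurd (h1.natDegree_eq_zero.1 h ▸ isUnit_one) hirr.not_isUnit
    · exact h
  have e2 : 1 ≤ f2.natDegree := by
    rcases Nat.eq_zero_or_pos f2.natDegree with h | h
    · exact absurd (h2.natDegree_eq_zero.1 h) hf2
    · exact h
  have esum : f1.natDegree + f2.natDegree = d := by
    rw [← hfd, hff, h1.natDegree_mul h2]
  have hdx : dgX f1 + dgX f2 ≤ D := by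
    rw [← dgX_mul h1.ne_zero h2.ne_zero, ← hff]; exact hD
  obtain ⟨d1ne, d1lt, d1c⟩ := hdj f1 h1 e1 (by omega)
  obtain ⟨d2ne, d2lt, d2c⟩ := hdj f2 h2 e2 (by omega)
  obtain ⟨dne, dlt, dc⟩ := hdj f hf (by omega) (by omega)
  have hprime : Prime f1 := hirr.prime
  by_cases hdiv : f1 ∣ f2
  · obtain ⟨f3, rfl⟩ := hdiv
    have h3 : f3.Monic := h1.of_mul_monic_left h2
    rw [h1.natDegree_mul h3] at esum
    have hx3 : dgX f1 + dgX f3 ≤ D := by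
      rw [dgX_mul h1.ne_zero h3.ne_zero] at hdx; omega
    have hdeg : (f3 * derivative f1).natDegree < d - 1 := by
      refine lt_of_le_of_lt natDegree_mul_le ?_; omega
    have := hc (f3 * dX f1) (f3 * derivative f1) ?_ ?_ ?_ ?_ ?_ ?_
    · rcases mul_eq_zero.1 this.2 with h | h
      · exact h3.ne_zero h
      · exact d1ne h
    · refine lt_of_le_of_lt natDegree_mul_le ?_
      have := natDegree_dX_le f1; omega
    · omega
    · refine (dgX_mul_le _ _).trans ?_
      have := dgX_dX_le f1; omega
    · refine (dgX_mul_le _ _).trans ?_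
      have := dgX_dY_le f1; omega
    · rw [hff, Tf]
      simp only [derivative_mul, dX_mul, dX_dY]
      ring
    · rw [coeff_eq_zero_of_natDegree_lt hdeg]; simp
  · -- coprime case
    set a : κ := (d : κ)
    set b : κ := (f1.natDegree : κ)
    have hb : b ≠ 0 := hchar _ e1 (by omega)
    have key := hc (C (C a) * (f2 * dX f1) - C (C b) * dX f)
      (C (C a) * (f2 * derivative f1) - C (C b) * derivative f) ?_ ?_ ?_ ?_ ?_ ?_
    · have h0 := key.2
      rw [hff, derivative_mul] at h0
      have h4 : C (C (a - b)) * (f2 * derivative f1) = f1 * (C (C b) * derivative f2) := by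
        rw [C_sub, C_sub]
        linear_combination h0
      have hab : a - b ≠ 0 := by
        have : a = b + (f2.natDegree : κ) := by
          simp only [a, b]; rw [← esum]; push_cast; rfl
        rw [this, add_sub_cancel_left]
        exact hchar _ e2 (by omega)
      have h5 : f1 ∣ C (C (a - b)) * (f2 * derivative f1) := ⟨_, h4⟩
      rcases hprime.dvd_or_dvd h5 with h | h
      · have hu : IsUnit (C (C (a-b)) : κ[X][X]) := by
          rw [isUnit_C, isUnit_C]; exact isUnit_iff_ne_zero.2 hab
        exact hprime.not_isUnit (isUnit_of_dvd_unit h hu)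
      · rcases hprime.dvd_or_dvd h with h | h
        · exact hdiv h
        · have := natDegree_le_of_dvd h d1ne
          omega
    · refine lt_of_le_of_lt (natDegree_sub_le _ _) ?_
      have h6 := natDegree_dX_lt hf (by omega)
      have h7 := natDegree_dX_lt h1 (by omega)
      have h8 := natDegree_C_mul_le (C a) (f2 * dX f1)
      have h9 := natDegree_C_mul_le (C b) (dX f)
      have h10 := natDegree_mul_le (p := f2) (q := dX f1)
      apply max_lt <;> omega
    · refine lt_of_le_of_lt (natDegree_sub_le _ _) ?_
      have h8 := natDegree_C_mul_le (C a) (f2 * derivative f1)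
      have h9 := natDegree_C_mul_le (C b) (derivative f)
      have h10 := natDegree_mul_le (p := f2) (q := derivative f1)
      apply max_lt <;> omega
    · unfold dgX
      rw [map_sub]
      refine (natDegree_sub_le _ _).trans ?_
      rw [map_mul _ (C (C a)), map_mul _ (C (C b)), Bivariate.swap_C_C, Bivariate.swap_C_C]
      have h8 := natDegree_C_mul_le (C a) (Bivariate.swap (f2 * dX f1))
      have h9 := natDegree_C_mul_le (C b) (Bivariate.swap (dX f))
      have h10 := dgX_mul_le f2 (dX f1)
      have h11 := dgX_dX_le f1
      have h12 := dgX_dX_le f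
      unfold dgX at *
      apply max_le <;> omega
    · unfold dgX
      rw [map_sub]
      refine (natDegree_sub_le _ _).trans ?_
      rw [map_mul _ (C (C a)), map_mul _ (C (C b)), Bivariate.swap_C_C, Bivariate.swap_C_C]
      have h8 := natDegree_C_mul_le (C a) (Bivariate.swap (f2 * derivative f1))
      have h9 := natDegree_C_mul_le (C b) (Bivariate.swap (derivative f))
      have h10 := dgX_mul_le f2 (derivative f1)
      have h11 := dgX_dY_le f1
      have h12 := dgX_dY_le f
      unfold dgX at *
      apply max_le <;> omega
    · have hCC : ∀ r : κ, dX (C (C r) : κ[X][X]) = 0 := by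
        intro r; exact dX.map_algebraMap r
      rw [hff, Tf]
      simp only [map_sub, derivative_mul, dX_mul, dX_dY, hCC, derivative_C]
      simp only [derivative_add, dX_mul, map_add, derivative_mul, dX_dY]
      ring
    · have h6 : (f2 * derivative f1).coeff (d-1) = C b := by
        have : d - 1 = f2.natDegree + (f1.natDegree - 1) := by omega
        rw [this, coeff_mul_add_eq_of_natDegree_le le_rfl (by omega), h2.coeff_natDegree, d1c]
        simp [b]
      rw [coeff_sub, coeff_C_mul, coeff_C_mul, h6]
      rw [hfd] at dc
      rw [dc]
      simp [a]; ring

end Stp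


namespace Stp

lemma exists_minor_field {κ ι ρ : Type*} [Field κ] [Fintype ι] [DecidableEq ι] (N : ρ → ι → κ)
    (h : ∀ v : ι → κ, (∀ a, ∑ c, N a c * v c = 0) → v = 0) :
    ∃ r : ι → ρ, (Matrix.of fun i c => N (r i) c).det ≠ 0 := by
  have hs : Submodule.span κ (Set.range N) = ⊤ := by
    by_contra hne
    obtain ⟨φ, hφ, hle⟩ := Submodule.exists_le_ker_of_lt_top _ (lt_top_iff_ne_top.2 hne)
    apply hφ
    have h0 : (fun c => φ (Pi.single c 1)) = 0 := by
      apply h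
      intro a
      have h1 : φ (N a) = 0 := hle (Submodule.subset_span ⟨a, rfl⟩)
      rw [← h1]
      conv_rhs => rw [← Finset.univ_sum_single (N a)]
      rw [map_sum]
      refine Finset.sum_congr rfl fun c _ => ?_
      have : Pi.single c (N a c) = N a c • (Pi.single c 1 : ι → κ) := by
        rw [← Pi.single_smul]; simp
      rw [this, map_smul, smul_eq_mul]
    refine LinearMap.pi_ext' fun c => ?_
    ext
    simpa using congrFun h0 c
  let b := Module.Basis.ofSpan hs.ge
  have hfin := Module.Finite.finite_basis b
  have := Fintype.ofFinite ((linearIndepOn_empty κ id).extend (Set.empty_subset (Set.range N)))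
  have hcard : Fintype.card ((linearIndepOn_empty κ id).extend (Set.empty_subset (Set.range N)))
      = Fintype.card ι := by
    rw [← Module.finrank_eq_card_basis b, Module.finrank_fintype_fun_eq_card]
  let e := Fintype.equivOfCardEq hcard.symm
  have hmem : ∀ i, ∃ a, N a = b (e i) := by
    intro i
    exact Module.Basis.ofSpan_subset hs.ge ⟨e i, rfl⟩
  choose r hr using hmem
  refine ⟨r, ?_⟩
  have hli : LinearIndependent κ (Matrix.of fun i c => N (r i) c).row := by
    have h2 : (Matrix.of fun i c => N (r i) c).row = b ∘ e := by
      funext i; exact hr i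
    rw [h2]
    exact b.linearIndependent.comp _ e.injective
  have := Matrix.linearIndependent_rows_iff_isUnit.1 hli
  rw [Matrix.isUnit_iff_isUnit_det] at this
  exact this.ne_zero

lemma exists_minor {R ι ρ : Type*} [CommRing R] [IsDomain R] [Fintype ι] [DecidableEq ι] (N : ρ → ι → R)
    (h : ∀ v : ι → R, (∀ a, ∑ c, N a c * v c = 0) → v = 0) :
    ∃ r : ι → ρ, (Matrix.of fun i c => N (r i) c).det ≠ 0 := by
  let K := FractionRing R
  obtain ⟨r, hr⟩ := exists_minor_field (fun a c => algebraMap R K (N a c)) (by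
    intro v hv
    obtain ⟨b, hb⟩ := IsLocalization.exist_integer_multiples_of_finite (nonZeroDivisors R) v
    choose w hw using hb
    have hb0 : algebraMap R K b ≠ 0 := by
      simpa using nonZeroDivisors.coe_ne_zero b
    have hw0 : w = 0 := by
      apply h
      intro a
      apply IsFractionRing.injective R K
      rw [map_sum, map_zero]
      have := congrArg (fun z => algebraMap R K b * z) (hv a)
      simp only [mul_zero, Finset.mul_sum] at this
      rw [← this]
      refine Finset.sum_congr rfl fun c _ => ?_
      rw [map_mul]
      have := hw c
      rw [Algebra.smul_def] at this
      change (algebraMap R K) (w c) = _ at this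
      rw [this]; ring
    funext c
    have h1 := hw c
    rw [hw0] at h1
    rw [Algebra.smul_def] at h1
    simp only [Pi.zero_apply, map_zero] at h1
    rcases mul_eq_zero.1 h1.symm with h2 | h2
    · exact absurd h2 hb0
    · exact h2)
  refine ⟨r, ?_⟩
  intro h0
  apply hr
  have := congrArg (algebraMap R K) h0
  rw [RingHom.map_det, map_zero] at this
  rw [← this]
  rfl

/-- Index of the unknown coefficients. -/
abbrev Ix (d D : ℕ) := (Fin d × Fin (D+1)) ⊕ (Fin d × Fin (D+1))

section
variable {R : Type*} [CommRing R] {d D : ℕ}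

/-- polynomial with given coefficients -/
def gp (v : Fin d × Fin (D+1) → R) : R[X][X] :=
  ∑ t : Fin d × Fin (D+1), monomial (t.1 : ℕ) (monomial (t.2 : ℕ) (v t))

lemma coeff_gp (v : Fin d × Fin (D+1) → R) (t : Fin d × Fin (D+1)) :
    ((gp v).coeff t.1).coeff t.2 = v t := by
  unfold gp
  rw [finsetSum_coeff, finsetSum_coeff, Finset.sum_eq_single t]
  · simp
  · intro b _ hb
    rw [coeff_monomial]
    split_ifs with h
    · rw [coeff_monomial, if_neg]
      intro h2
      exact hb (Prod.ext (Fin.ext h) (Fin.ext h2))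
    · simp
  · simp

lemma gp_natDegree (hd : 0 < d) (v : Fin d × Fin (D+1) → R) : (gp v).natDegree < d := by
  refine lt_of_le_of_lt (natDegree_sum_le_of_forall_le (n := d-1) _ _ ?_) (by omega)
  intro i _
  refine (natDegree_monomial_le _).trans ?_
  have := i.1.2; omega

lemma gp_dgX (v : Fin d × Fin (D+1) → R) : dgX (gp v) ≤ D := by
  unfold dgX gp
  rw [map_sum]
  refine natDegree_sum_le_of_forall_le _ _ ?_
  intro i _
  rw [Bivariate.swap_monomial_monomial]
  refine (natDegree_monomial_le _).trans ?_
  have := i.2.2; omega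

lemma eq_gp (g : R[X][X]) (h1 : g.natDegree < d) (h2 : dgX g ≤ D) :
    g = gp (fun t : Fin d × Fin (D+1) => (g.coeff t.1).coeff t.2) := by
  rw [dgX_le_iff] at h2
  have h3 := gp_natDegree (D := D) (by omega) (fun t : Fin d × Fin (D+1) => (g.coeff t.1).coeff t.2)
  have h4 := (dgX_le_iff _ _).1 (gp_dgX (fun t : Fin d × Fin (D+1) => (g.coeff t.1).coeff t.2))
  ext a b
  by_cases ha : a < d
  · by_cases hb : b < D + 1
    · exact (coeff_gp (fun t : Fin d × Fin (D+1) => (g.coeff t.1).coeff t.2) (⟨a, ha⟩, ⟨b, hb⟩)).symm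
    · rw [coeff_eq_zero_of_natDegree_lt (lt_of_le_of_lt (h2 a) (by omega)),
        coeff_eq_zero_of_natDegree_lt (lt_of_le_of_lt (h4 a) (by omega))]
  · rw [coeff_eq_zero_of_natDegree_lt (lt_of_lt_of_le h1 (by omega)),
        coeff_eq_zero_of_natDegree_lt (lt_of_lt_of_le h3 (by omega))]

/-- The row functionals. -/
def rowF (f : R[X][X]) (r : Option (ℕ × ℕ)) (v : Ix d D → R) : R :=
  match r with
  | none => ((gp (fun t => v (Sum.inr t))).coeff (d-1)).coeff 0
  | some ab => ((Tf f (gp fun t => v (Sum.inl t)) (gp fun t => v (Sum.inr t))).coeff ab.1).coeff ab.2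

lemma gp_lin (v : ι' → Fin d × Fin (D+1) → R) (w : ι' → R) (s : Finset ι') :
    gp (fun t => ∑ c ∈ s, v c t * w c) = ∑ c ∈ s, C (C (w c)) * gp (v c) := by
  unfold gp
  simp only [Finset.mul_sum]
  rw [Finset.sum_comm]
  refine Finset.sum_congr rfl fun t _ => ?_
  simp only [map_sum]
  refine Finset.sum_congr rfl fun c _ => ?_
  rw [C_mul_monomial, C_mul_monomial, mul_comm]

lemma Tf_lin {ι' : Type*} (f : R[X][X]) (g h : ι' → R[X][X]) (w : ι' → R) (s : Finset ι') :
    Tf f (∑ c ∈ s, C (C (w c)) * g c) (∑ c ∈ s, C (C (w c)) * h c) =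
      ∑ c ∈ s, C (C (w c)) * Tf f (g c) (h c) := by
  have hCC : ∀ r : R, dX (C (C r) : R[X][X]) = 0 := by
    intro r; exact dX.map_algebraMap r
  unfold Tf
  simp only [map_sum, derivative_sum, derivative_mul, dX_mul, hCC, derivative_C]
  rw [← Finset.sum_sub_distrib, Finset.mul_sum, Finset.sum_mul, Finset.sum_mul,
    ← Finset.sum_sub_distrib, ← Finset.sum_add_distrib]
  refine Finset.sum_congr rfl fun c _ => ?_
  ring

/-- The matrix entries. -/
def ent (f : R[X][X]) (r : Option (ℕ × ℕ)) (c : Ix d D) : R := rowF f r (Pi.single c 1)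

lemma rowF_eq (f : R[X][X]) (r : Option (ℕ × ℕ)) (v : Ix d D → R) :
    rowF f r v = ∑ c, ent f r c * v c := by
  have hv : ∀ t, v t = ∑ c, (Pi.single c 1 : Ix d D → R) t * v c := by
    intro t
    rw [Finset.sum_eq_single t]
    · simp
    · intro b _ hb
      rw [Pi.single_eq_of_ne (Ne.symm hb)]; simp
    · simp
  have h1 : (gp fun t => v (Sum.inl t)) =
      ∑ c, C (C (v c)) * gp (fun t => (Pi.single c 1 : Ix d D → R) (Sum.inl t)) := by
    rw [← gp_lin]
    congr 1; funext t; exact hv _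
  have h2 : (gp fun t => v (Sum.inr t)) =
      ∑ c, C (C (v c)) * gp (fun t => (Pi.single c 1 : Ix d D → R) (Sum.inr t)) := by
    rw [← gp_lin]
    congr 1; funext t; exact hv _
  match r with
  | none =>
    simp only [rowF, ent]
    rw [h2, finsetSum_coeff, finsetSum_coeff]
    refine Finset.sum_congr rfl fun c _ => ?_
    rw [coeff_C_mul, coeff_C_mul, mul_comm]
  | some ab =>
    simp only [rowF, ent]
    rw [h1, h2, Tf_lin, finsetSum_coeff, finsetSum_coeff]
    refine Finset.sum_congr rfl fun c _ => ?_
    rw [coeff_C_mul, coeff_C_mul, mul_comm]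

/-- The square matrix of selected rows. -/
def Mx (f : R[X][X]) (r : Ix d D → Option (ℕ × ℕ)) : Matrix (Ix d D) (Ix d D) R :=
  Matrix.of fun i c => ent f (r i) c

lemma gp_zero : gp (fun _ : Fin d × Fin (D+1) => (0:R)) = 0 := by simp [gp]

lemma cert_of_det [IsDomain R] (f : R[X][X]) (r : Ix d D → Option (ℕ × ℕ))
    (h : (Mx f r).det ≠ 0) : Cert d D f := by
  intro g h' hg hh hgx hhx hT hc
  let v : Ix d D → R := Sum.elim (fun t => (g.coeff t.1).coeff t.2) (fun t => (h'.coeff t.1).coeff t.2)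
  have hgv : g = gp fun t => v (Sum.inl t) := eq_gp g hg hgx
  have hhv : h' = gp fun t => v (Sum.inr t) := eq_gp h' hh hhx
  have hv : v = 0 := by
    apply Matrix.eq_zero_of_mulVec_eq_zero h
    funext i
    have : (Mx f r).mulVec v i = rowF f (r i) v := by
      rw [rowF_eq]; rfl
    rw [this]
    match hri : r i with
    | none => simp only [rowF]; rw [← hhv]; exact hc
    | some ab => simp only [rowF]; rw [← hhv, ← hgv, hT]; simp
  rw [hgv, hhv, hv]
  exact ⟨gp_zero, gp_zero⟩

lemma det_of_cert [IsDomain R] (hd : 0 < d) (f : R[X][X]) (h : Cert d D f) :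
    ∃ r : Ix d D → Option (ℕ × ℕ), (Mx f r).det ≠ 0 := by
  refine exists_minor (fun r c => ent f r c) ?_
  intro v hv
  simp only [← rowF_eq] at hv
  have := h (gp fun t => v (Sum.inl t)) (gp fun t => v (Sum.inr t)) (gp_natDegree hd _)
    (gp_natDegree hd _) (gp_dgX _) (gp_dgX _) ?_ ?_
  · funext c
    rcases c with t | t
    · rw [← coeff_gp (fun t => v (Sum.inl t)) t, this.1]; simp
    · rw [← coeff_gp (fun t => v (Sum.inr t)) t, this.2]; simp
  · ext a b
    exact hv (some (a, b))
  · exact hv none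

lemma dX_map {S : Type*} [CommRing S] (φ : R →+* S) (a : R[X][X]) :
    dX (a.map (mapRingHom φ)) = (dX a).map (mapRingHom φ) := by
  ext i : 1
  rw [coeff_dX, coeff_map, coeff_map, coeff_dX]
  simp [derivative_map]

lemma Tf_map {S : Type*} [CommRing S] (φ : R →+* S) (f a b : R[X][X]) :
    Tf (f.map (mapRingHom φ)) (a.map (mapRingHom φ)) (b.map (mapRingHom φ)) =
      (Tf f a b).map (mapRingHom φ) := by
  unfold Tf
  simp only [dX_map, derivative_map, Polynomial.map_add, Polynomial.map_sub, Polynomial.map_mul]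

lemma gp_map {S : Type*} [CommRing S] (φ : R →+* S) (v : Fin d × Fin (D+1) → R) :
    gp (fun t => φ (v t)) = (gp v).map (mapRingHom φ) := by
  unfold gp
  simp [Polynomial.map_sum]

lemma ent_map {S : Type*} [CommRing S] (φ : R →+* S) (f : R[X][X]) (r : Option (ℕ × ℕ))
    (c : Ix d D) : ent (f.map (mapRingHom φ)) r c = φ (ent f r c) := by
  have h : ∀ t, (Pi.single c 1 : Ix d D → S) t = φ ((Pi.single c 1 : Ix d D → R) t) := by
    intro t
    rw [Pi.single_apply, Pi.single_apply]; split_ifs <;> simp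
  match r with
  | none => 
    simp only [ent, rowF, h]
    rw [gp_map]; simp
  | some ab =>
    simp only [ent, rowF, h]
    rw [gp_map, gp_map, Tf_map]; simp

lemma det_map {S : Type*} [CommRing S] (φ : R →+* S) (f : R[X][X]) (r : Ix d D → Option (ℕ × ℕ)) :
    (Mx f r : Matrix (Ix d D) _ _).map φ = Mx (f.map (mapRingHom φ)) r := by
  ext i c
  simp [Mx, ent_map]

end
end Stp


namespace Stp

section
variable {k : Type*} [Field k]

/-- Polynomials of bounded weighted degree (inner variable weight one, outer variable weight `D`). -/
def Pw (D T : ℕ) : Submodule k k[X][X] where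
  carrier := {g | ∀ i j, T < i + D * j → (g.coeff j).coeff i = 0}
  add_mem' := by
    intro a b ha hb i j h
    simp [ha i j h, hb i j h]
  zero_mem' := by intro i j _; simp
  smul_mem' := by
    intro c a ha i j h
    simp [ha i j h]

lemma mem_Pw {D T : ℕ} {g : k[X][X]} : g ∈ Pw D T ↔ ∀ i j, T < i + D * j → (g.coeff j).coeff i = 0 :=
  Iff.rfl

lemma Pw_mono {D S T : ℕ} (h : S ≤ T) : (Pw D S : Submodule k k[X][X]) ≤ Pw D T :=
  fun _ hg i j hij => hg i j (by omega)

lemma Pw_mul {D S T : ℕ} {a b : k[X][X]} (ha : a ∈ Pw D S) (hb : b ∈ Pw D T) :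
    a * b ∈ Pw D (S + T) := by
  intro i j hij
  rw [coeff_mul, finsetSum_coeff]
  refine Finset.sum_eq_zero fun t ht => ?_
  rw [coeff_mul]
  refine Finset.sum_eq_zero fun s hs => ?_
  rw [Finset.HasAntidiagonal.mem_antidiagonal] at ht hs
  rw [← ht, ← hs, mul_add] at hij
  by_cases h : S < s.1 + D * t.1
  · rw [ha _ _ h, zero_mul]
  · rw [hb _ _ (by omega), mul_zero]

lemma Pw_dX {D T : ℕ} {a : k[X][X]} (ha : a ∈ Pw D T) : dX a ∈ Pw D T := by
  intro i j hij
  rw [coeff_dX, coeff_derivative, ha _ _ (by omega), zero_mul]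

lemma Pw_dY {D T : ℕ} {a : k[X][X]} (ha : a ∈ Pw D T) : derivative a ∈ Pw D T := by
  intro i j hij
  rw [coeff_derivative]
  have : ((j : k[X]) + 1) = C ((j:k) + 1) := by simp
  rw [this, coeff_mul_C, ha _ _ (by rw [mul_add]; omega), zero_mul]

lemma Pw_C {D T : ℕ} {a : k[X]} (ha : a.natDegree ≤ T) : C a ∈ Pw D T := by
  intro i j hij
  rw [coeff_C]
  split_ifs with h
  · subst h; exact coeff_eq_zero_of_natDegree_lt (by omega)
  · simp

lemma Pw_X {D : ℕ} : (X : k[X][X]) ∈ Pw D D := by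
  intro i j hij
  rw [coeff_X]
  split_ifs with h
  · subst h; rw [coeff_one, if_neg (by omega)]
  · simp

lemma Pw_one {D : ℕ} : (1 : k[X][X]) ∈ Pw D 0 := by
  have := Pw_C (k := k) (D := D) (T := 0) (a := 1) (by simp)
  simpa using this

lemma Pw_pow {D T : ℕ} {a : k[X][X]} (ha : a ∈ Pw D T) (n : ℕ) : a ^ n ∈ Pw D (n * T) := by
  induction n with
  | zero => simpa using Pw_one
  | succ n ih => rw [pow_succ, add_mul, one_mul]; exact Pw_mul ih ha

variable (f : k[X][X]) (d D : ℕ)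

/-- standing hypotheses -/
structure Good : Prop where
  monic : f.Monic
  deg : f.natDegree = d
  dpos : 1 ≤ d
  dg : dgX f ≤ D

variable {f d D}

lemma Good.mem_Pw (h : Good f d D) : f ∈ Pw D (D * d) := by
  intro i j hij
  have h2 := (dgX_le_iff _ _).1 h.dg j
  rcases lt_trichotomy j d with hj | hj | hj
  · apply coeff_eq_zero_of_natDegree_lt
    have : D * j + D ≤ D * d := by
      calc D * j + D = D * (j+1) := by ring
        _ ≤ D * d := Nat.mul_le_mul_left _ hj
    omega
  · subst hj
    have : f.coeff j = 1 := by
      rw [← h.deg]; exact h.monic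
    rw [this, coeff_one, if_neg (by omega)]
  · rw [coeff_eq_zero_of_natDegree_lt (n := j) (by rw [h.deg]; exact hj)]; simp

lemma Good.reduce (h : Good f d D) {T : ℕ} (N : ℕ) : ∀ {g : k[X][X]}, g ∈ Pw D T → g.natDegree < d + N →
    ∃ g' ∈ Pw D T, g'.natDegree < d ∧ AdjoinRoot.mk f g' = AdjoinRoot.mk f g := by
  induction N with
  | zero => intro g hg hd; exact ⟨g, hg, hd, rfl⟩
  | succ N ih =>
    intro g hg hd
    let q : k[X][X] := C (g.coeff (d+N)) * X ^ N * f
    have hq : q ∈ Pw D T := by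
      by_cases hT : T < D * d
      · have : g.coeff (d+N) = 0 := by
          ext i
          rw [hg i (d+N) (by rw [mul_add]; omega)]; simp
        simp [q, this]
      · have hTT : T = (T - D * d) + D * d := by omega
        rw [hTT]
        refine Pw_mul ?_ h.mem_Pw
        intro i j hij
        rw [coeff_C_mul, coeff_X_pow]
        split_ifs with hj
        · subst hj
          rw [mul_one]
          exact hg _ _ (by rw [mul_add]; omega)
        · simp
    obtain ⟨g', h1, h2, h3⟩ := ih (g := g - q) (Submodule.sub_mem _ hg hq) (by
      have hqd : q.natDegree ≤ d + N := by
        have := h.deg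
        calc q.natDegree ≤ (C (g.coeff (d+N)) * X ^ N).natDegree + f.natDegree := natDegree_mul_le
          _ ≤ N + d := by rw [this]; gcongr; exact natDegree_C_mul_X_pow_le _ _
          _ = d + N := by ring
      have h1 : (g - q).natDegree ≤ d + N := (natDegree_sub_le _ _).trans (by omega)
      have h2 : (g - q).coeff (d+N) = 0 := by
        have : q.coeff (d+N) = g.coeff (d+N) := by
          simp only [q]
          rw [mul_assoc, coeff_C_mul, coeff_X_pow_mul]
          have : f.coeff d = 1 := by
            have := h.monic; rw [Monic, leadingCoeff, h.deg] at this; exact this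
          rw [this, mul_one]
        rw [coeff_sub, this, sub_self]
      have hdp := h.dpos
      by_contra hcon
      have h4 : (g - q).natDegree = d + N := by omega
      rw [← h4, coeff_natDegree, leadingCoeff_eq_zero] at h2
      rw [h2] at h4; simp at h4; omega)
    refine ⟨g', h1, h2, ?_⟩
    rw [h3, map_sub]
    simp [q]

variable (f D)

/-- the quotient map as a linear map -/
def mkL : k[X][X] →ₐ[k] AdjoinRoot f := (AdjoinRoot.mkₐ f).restrictScalars k

lemma mkL_apply (g : k[X][X]) : mkL f g = AdjoinRoot.mk f g := rfl

/-- filtration on the coordinate ring -/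
def U (T : ℕ) : Submodule k (AdjoinRoot f) := (Pw D T).map (mkL f).toLinearMap

/-- reduced representatives -/
def Wmap (d T : ℕ) : (Fin d × Fin (T+1) → k) →ₗ[k] AdjoinRoot f where
  toFun v := AdjoinRoot.mk f (gp v)
  map_add' v w := by
    rw [← map_add]; congr 1
    simp [gp, Finset.sum_add_distrib]
  map_smul' c v := by
    have : gp (c • v) = c • gp v := by
      simp [gp, Finset.smul_sum, smul_monomial]
    rw [this]
    exact map_smul (mkL f) c (gp v)

/-- reduced elements of bounded degree -/
def Wd (d T : ℕ) : Submodule k (AdjoinRoot f) := LinearMap.range (Wmap f d T)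

variable {f D}

lemma mem_U {T : ℕ} {a : AdjoinRoot f} : a ∈ U f D T ↔ ∃ g ∈ Pw D T, AdjoinRoot.mk f g = a := Iff.rfl

lemma U_mono {S T : ℕ} (h : S ≤ T) : U f D S ≤ U f D T := Submodule.map_mono (Pw_mono h)

lemma U_mul {S T : ℕ} {a b : AdjoinRoot f} (ha : a ∈ U f D S) (hb : b ∈ U f D T) :
    a * b ∈ U f D (S + T) := by
  obtain ⟨g, hg, rfl⟩ := mem_U.1 ha
  obtain ⟨g', hg', rfl⟩ := mem_U.1 hb
  exact mem_U.2 ⟨g * g', Pw_mul hg hg', map_mul _ _ _⟩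

lemma U_mk {T : ℕ} {g : k[X][X]} (h : g ∈ Pw D T) : AdjoinRoot.mk f g ∈ U f D T := ⟨g, h, rfl⟩

lemma U_one : (1 : AdjoinRoot f) ∈ U f D 0 := mem_U.2 ⟨1, Pw_one, map_one _⟩

lemma U_pow {T : ℕ} {a : AdjoinRoot f} (ha : a ∈ U f D T) (n : ℕ) : a ^ n ∈ U f D (n * T) := by
  obtain ⟨g, hg, rfl⟩ := mem_U.1 ha
  exact mem_U.2 ⟨g ^ n, Pw_pow hg n, map_pow _ _ _⟩

lemma Good.Wmap_inj (h : Good f d D) (T : ℕ) : Function.Injective (Wmap f d T) := by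
  rw [injective_iff_map_eq_zero]
  intro v hv
  have h1 : AdjoinRoot.mk f (gp v) = 0 := hv
  rw [AdjoinRoot.mk_eq_zero] at h1
  have h2 : gp v = 0 := by
    by_contra hne
    have := natDegree_le_of_dvd h1 hne
    have h3 := gp_natDegree (d := d) (D := T) h.dpos v
    rw [h.deg] at this; omega
  funext t
  rw [← coeff_gp v t, h2]; simp

lemma Good.finrank_Wd (h : Good f d D) (T : ℕ) : Module.finrank k (Wd f d T) = d * (T+1) := by
  rw [Wd, LinearMap.finrank_range_of_inj (h.Wmap_inj T)]
  simp

lemma Good.finite_Wd (_h : Good f d D) (T : ℕ) : FiniteDimensional k (Wd f d T) := by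
  unfold Wd; infer_instance

lemma Good.U_le_Wd (h : Good f d D) (T : ℕ) : U f D T ≤ Wd f d T := by
  intro a ha
  obtain ⟨g, hg, rfl⟩ := mem_U.1 ha
  obtain ⟨g', h1, h2, h3⟩ := h.reduce (g.natDegree + 1) hg (by have := h.dpos; omega)
  refine ⟨fun t => (g'.coeff t.1).coeff t.2, ?_⟩
  rw [← h3]
  change AdjoinRoot.mk f _ = _
  rw [← eq_gp g' h2]
  rw [dgX_le_iff]
  intro j
  rw [natDegree_le_iff_coeff_eq_zero]
  intro i hi
  exact h1 i j (by omega)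

lemma Good.Wd_le_U (h : Good f d D) (T : ℕ) : Wd f d T ≤ U f D (T + D * d) := by
  rintro _ ⟨v, rfl⟩
  refine U_mk ?_
  intro i j hij
  have h1 := gp_natDegree h.dpos v
  have h2 := (dgX_le_iff _ _).1 (gp_dgX v) j
  by_cases hj : j < d
  · apply coeff_eq_zero_of_natDegree_lt
    have : D * j ≤ D * d := Nat.mul_le_mul_left _ hj.le
    omega
  · rw [coeff_eq_zero_of_natDegree_lt (n := j) (by omega)]; simp

lemma Good.exists_U (_h : Good f d D) (a : AdjoinRoot f) : ∃ T, a ∈ U f D T := by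
  obtain ⟨g, rfl⟩ := AdjoinRoot.mk_surjective a
  refine ⟨dgX g + D * g.natDegree, U_mk ?_⟩
  intro i j hij
  have h2 := (dgX_le_iff g (dgX g)).1 le_rfl j
  by_cases hj : j ≤ g.natDegree
  · apply coeff_eq_zero_of_natDegree_lt
    have : D * j ≤ D * g.natDegree := Nat.mul_le_mul_left _ hj
    omega
  · rw [coeff_eq_zero_of_natDegree_lt (n := j) (by omega)]; simp

end
end Stp


namespace Stp

section van
variable {k A : Type*} [Field k] [CommRing A] [Algebra k A] (Δ : Derivation k A A) (φ : A →ₐ[k] k)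

/-- vanishing to order `M` -/
def Van (M : ℕ) (a : A) : Prop := ∀ ν < M, φ (Δ^[ν] a) = 0

variable {Δ φ}

lemma Van_succ {M : ℕ} {a : A} : Van Δ φ (M+1) a ↔ φ a = 0 ∧ Van Δ φ M (Δ a) := by
  constructor
  · intro h
    refine ⟨h 0 (by omega), fun ν hν => ?_⟩
    have := h (ν+1) (by omega)
    rwa [Function.iterate_succ_apply] at this
  · rintro ⟨h1, h2⟩ ν hν
    rcases ν with _ | ν
    · exact h1
    · rw [Function.iterate_succ_apply]; exact h2 ν (by omega)

lemma Van_mono {M N : ℕ} (h : M ≤ N) {a : A} (ha : Van Δ φ N a) : Van Δ φ M a :=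
  fun ν hν => ha ν (by omega)

lemma iter_add (ν : ℕ) (a b : A) : Δ^[ν] (a + b) = Δ^[ν] a + Δ^[ν] b := by
  induction ν generalizing a b with
  | zero => rfl
  | succ n ih => simp only [Function.iterate_succ_apply, map_add, ih]

lemma iter_smul (ν : ℕ) (c : k) (a : A) : Δ^[ν] (c • a) = c • Δ^[ν] a := by
  induction ν generalizing a with
  | zero => rfl
  | succ n ih => rw [Function.iterate_succ_apply, Derivation.map_smul, ih, Function.iterate_succ_apply]

lemma Van_add {M : ℕ} {a b : A} (ha : Van Δ φ M a) (hb : Van Δ φ M b) : Van Δ φ M (a + b) := by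
  intro ν hν
  rw [iter_add, map_add, ha ν hν, hb ν hν, add_zero]

lemma Van_mul_right {M : ℕ} : ∀ {a : A} (_ : Van Δ φ M a) (b : A), Van Δ φ M (a * b) := by
  induction M with
  | zero => intro a _ b ν hν; omega
  | succ M ih =>
    intro a ha b
    rw [Van_succ]
    refine ⟨by rw [map_mul, (Van_succ.1 ha).1, zero_mul], ?_⟩
    rw [Derivation.leibniz, smul_eq_mul, smul_eq_mul]
    refine Van_add (ih (Van_mono (by omega) ha) _) ?_
    rw [mul_comm]
    exact ih (Van_succ.1 ha).2 _

lemma Van_mul (s : ℕ) : ∀ {M N : ℕ} (_ : M + N = s) {a b : A} (_ : Van Δ φ M a) (_ : Van Δ φ N b),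
    Van Δ φ s (a * b) := by
  induction s with
  | zero => intro M N _ a b _ _ ν hν; omega
  | succ s ih =>
    intro M N hMN a b ha hb
    rcases M with _ | M
    · rw [mul_comm]; apply Van_mul_right; convert hb using 1; omega
    rcases N with _ | N
    · apply Van_mul_right; convert ha using 1; omega
    rw [Van_succ]
    refine ⟨by rw [map_mul, (Van_succ.1 ha).1, zero_mul], ?_⟩
    rw [Derivation.leibniz, smul_eq_mul, smul_eq_mul]
    refine Van_add (ih (by omega) ha (Van_succ.1 hb).2) (ih (by omega) hb (Van_succ.1 ha).2)

lemma Van_pow {t : A} (ht : φ t = 0) (n : ℕ) : Van Δ φ n (t ^ n) := by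
  induction n with
  | zero => intro ν hν; omega
  | succ n ih =>
    rw [pow_succ]
    refine Van_mul (n+1) rfl ih ?_
    rw [Van_succ]
    exact ⟨ht, fun ν hν => by omega⟩

lemma lead {t : A} (ht : φ t = 0) (n : ℕ) : ∀ b : A,
    φ (Δ^[n] (t ^ n * b)) = n.factorial * φ (Δ t) ^ n * φ b := by
  induction n with
  | zero => intro b; simp
  | succ n ih =>
    intro b
    rw [Function.iterate_succ_apply, Derivation.leibniz, Derivation.leibniz_pow, iter_add, map_add]
    have h1 : Van Δ φ (n+1) (t ^ (n+1) * Δ b) := Van_mul_right (Van_pow ht _) _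
    rw [smul_eq_mul, h1 n (by omega), zero_add]
    have : b • (n+1) • t ^ (n + 1 - 1) • Δ t = t ^ n * (((n+1 : ℕ) : A) * Δ t * b) := by
      simp only [smul_eq_mul, nsmul_eq_mul, Nat.add_sub_cancel]; ring
    rw [this, ih, map_mul, map_mul, map_natCast, Nat.factorial_succ]
    push_cast
    ring

end van

section
variable {k : Type*} [Field k] (f : k[X][X])

/-- the curve derivation before descending -/
def Δ0 : Derivation k k[X][X] k[X][X] :=
  derivative f • dX - dX f • (Polynomial.derivative' (R := k[X])).restrictScalars k

lemma Δ0_apply (g : k[X][X]) : Δ0 f g = derivative f * dX g - dX f * derivative g := by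
  simp [Δ0, Polynomial.derivative'_apply]

lemma mkL_surj : Function.Surjective (mkL f) := AdjoinRoot.mk_surjective

lemma Del_aux (g : k[X][X]) (hg : mkL f g = 0) : mkL f (Δ0 f g) = 0 := by
  rw [mkL_apply, AdjoinRoot.mk_eq_zero] at hg
  obtain ⟨h, rfl⟩ := hg
  rw [mkL_apply, AdjoinRoot.mk_eq_zero, Δ0_apply, dX_mul, derivative_mul]
  refine ⟨derivative f * dX h - dX f * derivative h, ?_⟩
  ring

/-- the curve derivation -/
def Del : Derivation k (AdjoinRoot f) (AdjoinRoot f) :=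
  Derivation.liftOfSurjective (f := mkL f) (mkL_surj f) (d := Δ0 f) (Del_aux f)

lemma Del_mk (g : k[X][X]) : Del f (AdjoinRoot.mk f g) =
    AdjoinRoot.mk f (derivative f * dX g - dX f * derivative g) := by
  rw [← Δ0_apply]
  exact Derivation.liftOfSurjective_apply (f := mkL f) (mkL_surj f) (Del_aux f) g

/-- coordinate functions -/
def xx : AdjoinRoot f := AdjoinRoot.mk f (C X)
/-- coordinate functions -/
def yy : AdjoinRoot f := AdjoinRoot.mk f X

lemma Del_xx : Del f (xx f) = AdjoinRoot.mk f (derivative f) := by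
  rw [xx, Del_mk]
  have : dX (C X : k[X][X]) = 1 := by
    rw [← monomial_zero_left, dX_monomial]; simp
  rw [this]; simp

/-- points on the affine curve -/
def Pt := {P : k × k // f.eval₂ (evalRingHom P.1) P.2 = 0}

variable {f}

/-- evaluation at a point -/
def ev (P : Pt f) : AdjoinRoot f →ₐ[k] k :=
  { AdjoinRoot.lift (evalRingHom P.1.1) P.1.2 P.2 with
    commutes' := by
      intro r
      change AdjoinRoot.lift (evalRingHom P.1.1) P.1.2 P.2 (algebraMap k (AdjoinRoot f) r) = r
      have : algebraMap k (AdjoinRoot f) r = AdjoinRoot.of f (C r) := rfl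
      rw [this, AdjoinRoot.lift_of]; simp }

lemma ev_mk (P : Pt f) (g : k[X][X]) : ev P (AdjoinRoot.mk f g) = g.eval₂ (evalRingHom P.1.1) P.1.2 := by
  change AdjoinRoot.lift (evalRingHom P.1.1) P.1.2 P.2 (AdjoinRoot.mk f g) = _
  rw [AdjoinRoot.lift_mk]

lemma ev_xx (P : Pt f) : ev P (xx f) = P.1.1 := by rw [xx, ev_mk]; simp
lemma ev_yy (P : Pt f) : ev P (yy f) = P.1.2 := by rw [yy, ev_mk]; simp

lemma sep {P Q : Pt f} (h : P ≠ Q) : ∃ g : AdjoinRoot f, ev Q g = 0 ∧ ev P g ≠ 0 := by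
  by_cases hx : P.1.1 = Q.1.1
  · refine ⟨yy f - algebraMap k _ Q.1.2, ?_, ?_⟩
    · simp [ev_yy]
    · simp only [map_sub, ev_yy, AlgHom.commutes, Algebra.algebraMap_self, RingHom.id_apply]
      intro h2
      exact h (Subtype.ext (Prod.ext hx (sub_eq_zero.1 h2)))
  · refine ⟨xx f - algebraMap k _ Q.1.1, ?_, ?_⟩
    · simp [ev_xx]
    · simp only [map_sub, ev_xx, AlgHom.commutes, Algebra.algebraMap_self, RingHom.id_apply]
      intro h2
      exact hx (sub_eq_zero.1 h2)

/-- jets at the points of `S` -/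
def jet (S : Finset (Pt f)) (M : ℕ) : AdjoinRoot f →ₗ[k] (S × Fin M → k) where
  toFun a t := ev t.1.1 ((Del f)^[t.2] a)
  map_add' a b := by funext t; simp
  map_smul' c a := by funext t; simp [iter_smul]

lemma test_exists (S : Finset (Pt f)) (M : ℕ)
    (hM : M ≤ 1 ∨ ∀ P ∈ S, ev P (AdjoinRoot.mk f (derivative f)) ≠ 0)
    (hfac : ∀ ν < M, (ν.factorial : k) ≠ 0) (P : Pt f) (hP : P ∈ S) (ν : ℕ) (hν : ν < M) :
    ∃ b : AdjoinRoot f, (∀ Q ∈ S, Q ≠ P → Van (Del f) (ev Q) M b) ∧ Van (Del f) (ev P) ν b ∧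
      ev P ((Del f)^[ν] b) ≠ 0 := by
  classical
  have : ∀ Q, ∃ g : AdjoinRoot f, Q ≠ P → ev Q g = 0 ∧ ev P g ≠ 0 := by
    intro Q
    by_cases h : Q = P
    · exact ⟨0, fun h' => absurd h h'⟩
    · obtain ⟨g, hg⟩ := sep (Ne.symm h); exact ⟨g, fun _ => hg⟩
  choose g hg using this
  set t : AdjoinRoot f := xx f - algebraMap k _ P.1.1
  have ht : ev P t = 0 := by simp [t, ev_xx]
  have hDt : Del f t = AdjoinRoot.mk f (derivative f) := by
    simp only [t, map_sub, Derivation.map_algebraMap, sub_zero, Del_xx]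
  refine ⟨t ^ ν * ∏ Q ∈ S.erase P, g Q ^ M, ?_, ?_, ?_⟩
  · intro Q hQ hQP
    rw [← Finset.mul_prod_erase _ _ (Finset.mem_erase.2 ⟨hQP, hQ⟩), mul_left_comm]
    exact Van_mul_right (Van_pow (hg Q hQP).1 _) _
  · exact Van_mul_right (Van_pow ht _) _
  · rw [lead ht, hDt]
    refine mul_ne_zero (mul_ne_zero (hfac ν hν) ?_) ?_
    · rcases hM with h | h
      · have : ν = 0 := by omega
        simp [this]
      · exact pow_ne_zero _ (h P hP)
    · rw [map_prod, Finset.prod_ne_zero_iff]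
      intro Q hQ
      rw [map_pow]
      exact pow_ne_zero _ (hg Q (Finset.mem_erase.1 hQ).1).2

lemma jet_surj (S : Finset (Pt f)) (M : ℕ)
    (hM : M ≤ 1 ∨ ∀ P ∈ S, ev P (AdjoinRoot.mk f (derivative f)) ≠ 0)
    (hfac : ∀ ν < M, (ν.factorial : k) ≠ 0) : Function.Surjective (jet S M) := by
  classical
  rw [← LinearMap.range_eq_top]
  by_contra hne
  obtain ⟨φ, hφ, hle⟩ := Submodule.exists_le_ker_of_lt_top _ (lt_top_iff_ne_top.2 hne)
  apply hφ
  set lam : S × Fin M → k := fun t => φ (Pi.single t 1) with hlam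
  have hφv : ∀ v, φ v = ∑ t, v t * lam t := by
    intro v
    conv_lhs => rw [← Finset.univ_sum_single v]
    rw [map_sum]
    refine Finset.sum_congr rfl fun c _ => ?_
    have : Pi.single c (v c) = v c • (Pi.single c 1 : S × Fin M → k) := by
      rw [← Pi.single_smul]; simp
    rw [this, map_smul, smul_eq_mul]
  have hz : ∀ n, ∀ P : S, ∀ ν : Fin M, M ≤ ν + n → lam (P, ν) = 0 := by
    intro n
    induction n with
    | zero => intro P ν h; have := ν.2; omega
    | succ n ih =>
      intro P ν h
      obtain ⟨b, h1, h2, h3⟩ := test_exists S M hM hfac P.1 P.2 ν ν.2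
      have h4 : φ (jet S M b) = 0 := hle ⟨b, rfl⟩
      rw [hφv, Finset.sum_eq_single (P, ν)] at h4
      · rcases mul_eq_zero.1 h4 with h5 | h5
        · exact absurd h5 h3
        · exact h5
      · rintro ⟨Q, μ⟩ _ hne
        by_cases hQ : Q = P
        · subst hQ
          rcases lt_trichotomy (μ : ℕ) ν with hlt | heq | hgt
          · have : jet S M b (Q, μ) = 0 := h2 μ hlt
            rw [this, zero_mul]
          · exact absurd (by rw [Fin.ext heq]) hne
          · rw [ih Q μ (by omega), mul_zero]
        · have : jet S M b (Q, μ) = 0 := h1 Q.1 Q.2 (fun h => hQ (Subtype.ext h)) μ μ.2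
          rw [this, zero_mul]
      · simp
  ext v
  rw [LinearMap.comp_apply]
  have : lam = 0 := by
    funext ⟨P, ν⟩; exact hz M P ν (by omega)
  rw [hφv, this]; simp

lemma Good.zero_count {d D : ℕ} (h : Good f d D) (hirr : Irreducible f) (S : Finset (Pt f)) (M : ℕ)
    (hM : M ≤ 1 ∨ ∀ P ∈ S, ev P (AdjoinRoot.mk f (derivative f)) ≠ 0)
    (hfac : ∀ ν < M, (ν.factorial : k) ≠ 0) {T : ℕ} {q : AdjoinRoot f} (hq : q ∈ U f D T)
    (hq0 : q ≠ 0) (hv : ∀ P ∈ S, Van (Del f) (ev P) M q) : M * S.card ≤ d * (T + D * d) := by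
  classical
  have hdom : IsDomain (AdjoinRoot f) := AdjoinRoot.isDomain_of_prime hirr.prime
  have hsurj := jet_surj S M hM hfac
  -- find a large level
  have h1 : ∃ T1, ∀ t : S × Fin M, ∃ a ∈ U f D T1, jet S M a = Pi.single t 1 := by
    choose a ha using fun t : S × Fin M => hsurj (Pi.single t 1)
    choose τ hτ using fun t => h.exists_U (a t)
    refine ⟨Finset.univ.sup τ, fun t => ⟨a t, U_mono (Finset.le_sup (Finset.mem_univ t)) (hτ t), ha t⟩⟩
  obtain ⟨T1, hT1⟩ := h1
  set T2 := T1 + T + D * d with hT2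
  have := h.finite_Wd T2
  have := h.finite_Wd T1
  let J : Wd f d T2 →ₗ[k] (S × Fin M → k) := (jet S M).domRestrict (Wd f d T2)
  have hJ : LinearMap.range J = ⊤ := by
    rw [eq_top_iff]
    intro v _
    rw [← Finset.univ_sum_single v]
    refine Submodule.sum_mem _ fun t _ => ?_
    obtain ⟨a, ha, hat⟩ := hT1 t
    have : Pi.single t (v t) = v t • (Pi.single t 1 : S × Fin M → k) := by
      rw [← Pi.single_smul]; simp
    rw [this]
    refine Submodule.smul_mem _ _ ⟨⟨a, h.U_le_Wd _ (U_mono (by omega) ha)⟩, hat⟩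
  let μ : Wd f d T1 →ₗ[k] Wd f d T2 :=
    LinearMap.codRestrict _ ((LinearMap.mulLeft k q).domRestrict (Wd f d T1)) (by
      rintro ⟨a, ha⟩
      apply h.U_le_Wd
      have := U_mul hq (h.Wd_le_U _ ha)
      exact U_mono (by omega) this)
  have hμ : Function.Injective μ := by
    intro a b hab
    have : q * a.1 = q * b.1 := congrArg Subtype.val hab
    exact Subtype.ext (mul_left_cancel₀ hq0 this)
  have hker : LinearMap.range μ ≤ LinearMap.ker J := by
    rintro _ ⟨a, rfl⟩
    rw [LinearMap.mem_ker]
    funext t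
    exact Van_mul_right (hv t.1.1 t.1.2) a.1 t.2 t.2.2
  have e1 := LinearMap.finrank_range_add_finrank_ker J
  have e2 := Submodule.finrank_mono hker
  rw [LinearMap.finrank_range_of_inj hμ, h.finrank_Wd] at e2
  rw [hJ, finrank_top, h.finrank_Wd, Module.finrank_fintype_fun_eq_card] at e1
  simp only [Fintype.card_prod, Fintype.card_coe, Fintype.card_fin] at e1
  have e3 : d * (T2 + 1) = d * (T1 + 1) + d * (T + D * d) := by rw [hT2]; ring
  have e4 : M * S.card = S.card * M := mul_comm _ _
  omega

end
end Stp


namespace Stp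

section
variable {k : Type*} [Field k] {f : k[X][X]} {d D : ℕ}

/-- polynomials over the coordinate ring with coefficients of bounded level -/
def CU (f : k[X][X]) (D T : ℕ) (P : (AdjoinRoot f)[X]) : Prop := ∀ s, P.coeff s ∈ U f D T

lemma CU_mono {S T : ℕ} (h : S ≤ T) {P : (AdjoinRoot f)[X]} (hP : CU f D S P) : CU f D T P :=
  fun s => U_mono h (hP s)

lemma CU_mul {S T : ℕ} {P Q : (AdjoinRoot f)[X]} (hP : CU f D S P) (hQ : CU f D T Q) :
    CU f D (S + T) (P * Q) := by
  intro s
  rw [coeff_mul]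
  exact Submodule.sum_mem _ fun t _ => U_mul (hP _) (hQ _)

lemma CU_sum {ι : Type*} {T : ℕ} (s : Finset ι) {P : ι → (AdjoinRoot f)[X]} (hP : ∀ i ∈ s, CU f D T (P i)) :
    CU f D T (∑ i ∈ s, P i) := by
  intro t
  rw [finsetSum_coeff]
  exact Submodule.sum_mem _ fun i hi => hP i hi t

lemma CU_map (g : k[X]) : CU f D 0 (g.map (algebraMap k (AdjoinRoot f))) := by
  intro s
  rw [coeff_map, Algebra.algebraMap_eq_smul_one]
  exact Submodule.smul_mem _ _ U_one

lemma CU_one : CU f D 0 1 := by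
  have := CU_map (f := f) (D := D) 1
  simpa using this

lemma CU_monomial {T : ℕ} (l : ℕ) {c : AdjoinRoot f} (hc : c ∈ U f D T) : CU f D T (monomial l c) := by
  intro s
  rw [coeff_monomial]
  split_ifs
  · exact hc
  · exact Submodule.zero_mem _

lemma CU_prod {ι : Type*} {T : ℕ} (s : Finset ι) {P : ι → (AdjoinRoot f)[X]} (hP : ∀ i ∈ s, CU f D T (P i)) :
    CU f D (s.card * T) (∏ i ∈ s, P i) := by
  classical
  induction s using Finset.induction_on with
  | empty => simpa using CU_one
  | insert a s ha ih =>
    rw [Finset.prod_insert ha, Finset.card_insert_of_notMem ha, add_mul, one_mul, add_comm]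
    exact CU_mul (hP a (Finset.mem_insert_self _ _)) (ih fun i hi => hP i (Finset.mem_insert_of_mem hi))

lemma CU_det {T : ℕ} (Mt : Matrix (Fin d) (Fin d) (AdjoinRoot f)[X]) (h : ∀ i j, CU f D T (Mt i j)) :
    CU f D (d * T) Mt.det := by
  rw [Matrix.det_apply]
  refine CU_sum _ fun σ _ => ?_
  have h1 : CU f D (d * T) (∏ i, Mt (σ i) i) := by
    have := CU_prod (f := f) (D := D) (T := T) Finset.univ (P := fun i => Mt (σ i) i) (fun i _ => h _ _)
    simpa using this
  rcases Int.units_eq_one_or (Equiv.Perm.sign σ) with hs | hs <;> rw [hs]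
  · simpa using h1
  · intro s
    rw [Units.neg_smul, one_smul, coeff_neg]
    exact Submodule.neg_mem _ (h1 s)

lemma Good.sparse (h : Good f d D) {p E : ℕ} (hE : E < p) (r : (AdjoinRoot f)[X]) (hr : CU f D E r)
    (hz : r.eval (xx f ^ p) = 0) : r = 0 := by
  have hv : ∀ s, ∃ v : Fin d × Fin (E+1) → k, AdjoinRoot.mk f (gp v) = r.coeff s :=
    fun s => h.U_le_Wd E (hr s)
  choose v hv using hv
  set N := r.natDegree + 1
  set G : k[X][X] := ∑ s ∈ Finset.range N, gp (v s) * C (X ^ (p * s)) with hG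
  have h1 : AdjoinRoot.mk f G = 0 := by
    rw [← hz, eval_eq_sum_range, hG, map_sum]
    refine Finset.sum_congr rfl fun s _ => ?_
    rw [map_mul, hv, xx, ← map_pow, ← map_pow, ← C_pow, ← C_pow, pow_mul]
  rw [AdjoinRoot.mk_eq_zero] at h1
  have h2 : G = 0 := by
    by_contra hne
    have h3 := natDegree_le_of_dvd h1 hne
    have h4 : G.natDegree ≤ d - 1 := by
      refine natDegree_sum_le_of_forall_le _ _ fun s _ => ?_
      refine (natDegree_mul_C_le _ _).trans ?_
      have := gp_natDegree h.dpos (v s); omega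
    have := h.dpos
    rw [h.deg] at h3; omega
  ext s
  rw [coeff_zero]
  by_cases hs : s < N
  swap
  · exact coeff_eq_zero_of_natDegree_lt (by omega)
  rw [← hv s]
  have : gp (v s) = 0 := by
    ext j i
    simp only [coeff_zero]
    by_cases hi : E < i
    · exact coeff_eq_zero_of_natDegree_lt (lt_of_le_of_lt ((dgX_le_iff _ _).1 (gp_dgX (v s)) j) hi)
    have h5 : ((G.coeff j).coeff (i + p * s)) = 0 := by rw [h2]; simp
    rw [hG, finsetSum_coeff, finsetSum_coeff, Finset.sum_eq_single s] at h5
    · rw [coeff_mul_C, coeff_mul_X_pow] at h5; exact h5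
    · intro b _ hb
      rw [coeff_mul_C, coeff_mul_X_pow']
      split_ifs with hle
      · refine coeff_eq_zero_of_natDegree_lt (lt_of_le_of_lt ((dgX_le_iff _ _).1 (gp_dgX (v b)) j) ?_)
        have hbs : b < s := by
          rcases lt_or_gt_of_ne hb with hlt | hgt
          · exact hlt
          · have : p * (s+1) ≤ p * b := Nat.mul_le_mul_left _ hgt
            rw [mul_add] at this; omega
        have : p * (b+1) ≤ p * s := Nat.mul_le_mul_left _ hbs
        rw [mul_add] at this; omega
      · rfl
    · intro hn; exact absurd (Finset.mem_range.2 hs) hn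
  rw [this, map_zero]

lemma natDegree_map_inj_zero {A K : Type*} [CommRing A] [Field K] (φ : A →+* K) (hφ : Function.Injective φ)
    (fK : K[X][X]) (R : A[X][X]) (hR : R.natDegree < fK.natDegree)
    (hdvd : fK ∣ R.map (mapRingHom φ)) : R = 0 := by
  have h1 : R.map (mapRingHom φ) = 0 := by
    by_contra hne
    have := natDegree_le_of_dvd hdvd hne
    have h2 := natDegree_map_le (f := mapRingHom φ) (p := R)
    omega
  have hi : Function.Injective (mapRingHom φ) := Polynomial.map_injective φ hφ
  exact (Polynomial.map_eq_zero_iff hi).1 h1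

lemma Good.indep (h : Good f d D) (hirr : Irreducible f)
    {K : Type*} [Field K] [Algebra k K] [Algebra (AdjoinRoot f) K] [IsScalarTower k (AdjoinRoot f) K]
    (hinj : Function.Injective (algebraMap (AdjoinRoot f) K))
    (hK : Irreducible (f.map (mapRingHom (algebraMap k K))))
    {p E B : ℕ} (hroot : f.eval₂ ((aeval (xx f ^ p) : k[X] →ₐ[k] AdjoinRoot f) : k[X] →+* AdjoinRoot f) (yy f ^ p) = 0)
    (hE : d * E < p) (c : Fin B → Fin d → AdjoinRoot f)
    (hc : ∀ l m, c l m ∈ U f D E)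
    (hz : ∑ l, ∑ m, c l m * xx f ^ (p * l) * yy f ^ (p * m) = 0) : ∀ l m, c l m = 0 := by
  classical
  have hdom : IsDomain (AdjoinRoot f) := AdjoinRoot.isDomain_of_prime hirr.prime
  set fA : (AdjoinRoot f)[X][X] := f.map (mapRingHom (algebraMap k (AdjoinRoot f))) with hfA
  have hfAm : fA.Monic := h.monic.map _
  have hfAd : fA.natDegree = d := by rw [hfA, h.monic.natDegree_map, h.deg]
  have hd := h.dpos
  set R : (AdjoinRoot f)[X][X] := ∑ l : Fin B, ∑ m : Fin d, monomial (m : ℕ) (monomial (l : ℕ) (c l m)) with hR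
  have hRd : R.natDegree < d := by
    refine lt_of_le_of_lt (natDegree_sum_le_of_forall_le (n := d-1) _ _ ?_) (by omega)
    intro l _
    refine natDegree_sum_le_of_forall_le _ _ ?_
    intro m _
    refine (natDegree_monomial_le _).trans ?_
    have := m.2; omega
  set Mt : Matrix (Fin d) (Fin d) (AdjoinRoot f)[X] :=
    Matrix.of fun i j => ((R * X ^ (j : ℕ)) %ₘ fA).coeff i with hMt
  have hCU : ∀ i j, CU f D E (Mt i j) := by
    intro i j
    have h1 : (R * X ^ (j:ℕ)) %ₘ fA = ∑ l : Fin B, ∑ m : Fin d, C (monomial (l:ℕ) (c l m)) *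
        ((X ^ ((m:ℕ) + j) %ₘ f).map (mapRingHom (algebraMap k (AdjoinRoot f)))) := by
      have h2 : R * X ^ (j:ℕ) = ∑ l : Fin B, ∑ m : Fin d, (monomial (l:ℕ) (c l m)) • (X : (AdjoinRoot f)[X][X]) ^ ((m:ℕ)+j) := by
        rw [hR, Finset.sum_mul]
        refine Finset.sum_congr rfl fun l _ => ?_
        rw [Finset.sum_mul]
        refine Finset.sum_congr rfl fun m _ => ?_
        rw [smul_eq_C_mul, ← C_mul_X_pow_eq_monomial, pow_add, mul_assoc]
      rw [h2]
      change modByMonicHom fA _ = _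
      rw [map_sum]
      refine Finset.sum_congr rfl fun l _ => ?_
      rw [map_sum]
      refine Finset.sum_congr rfl fun m _ => ?_
      rw [map_smul, smul_eq_C_mul]
      change _ * (_ %ₘ fA) = _
      rw [map_modByMonic _ h.monic]
      simp [hfA]
    simp only [hMt, Matrix.of_apply]
    rw [h1, finsetSum_coeff]
    refine CU_sum _ fun l _ => ?_
    rw [finsetSum_coeff]
    refine CU_sum _ fun m _ => ?_
    rw [coeff_C_mul, coeff_map]
    exact CU_mul (S := E) (T := 0) (CU_monomial _ (hc l m)) (CU_map _)
  have hdet0 : Mt.det = 0 := by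
    apply h.sparse hE _ (CU_det Mt hCU)
    set ω : (AdjoinRoot f)[X] →+* AdjoinRoot f := evalRingHom (xx f ^ p) with hω
    change ω Mt.det = 0
    rw [RingHom.map_det]
    rw [← Matrix.exists_vecMul_eq_zero_iff]
    refine ⟨fun i => (yy f ^ p) ^ (i:ℕ), ?_, ?_⟩
    · intro h0
      have := congrFun h0 ⟨0, hd⟩
      simp at this
    · funext j
      have hfz : fA.eval₂ ω (yy f ^ p) = 0 := by
        rw [hfA, eval₂_map]
        rw [← hroot]
        congr 1
        ext
        · simp [hω]
        · simp [hω]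
      have hRz : R.eval₂ ω (yy f ^ p) = 0 := by
        rw [← hz, hR, eval₂_finsetSum]
        refine Finset.sum_congr rfl fun l _ => ?_
        rw [eval₂_finsetSum]
        refine Finset.sum_congr rfl fun m _ => ?_
        rw [eval₂_monomial, hω, coe_evalRingHom, eval_monomial, pow_mul, pow_mul]
      have h1 : ((R * X ^ (j : ℕ)) %ₘ fA).eval₂ ω (yy f ^ p) = 0 := by
        have := modByMonic_add_div (R * X ^ (j:ℕ)) fA
        have h3 := congrArg (eval₂ ω (yy f ^ p)) this
        rw [eval₂_add, eval₂_mul, eval₂_mul, hfz, hRz] at h3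
        simpa using h3
      have h2 : ((R * X ^ (j : ℕ)) %ₘ fA).natDegree < d := by
        have := natDegree_modByMonic_lt (R * X ^ (j : ℕ)) hfAm (by
          intro h1
          rw [h1] at hfAd; simp at hfAd; omega)
        omega
      rw [eval₂_eq_sum_range' _ h2, Finset.sum_range] at h1
      simp only [Matrix.vecMul, dotProduct, Pi.zero_apply]
      rw [← h1]
      refine Finset.sum_congr rfl fun i _ => ?_
      rw [mul_comm]
      simp [hMt]
  obtain ⟨v, hv0, hv⟩ := Matrix.exists_mulVec_eq_zero_iff.2 hdet0
  set Sv : (AdjoinRoot f)[X][X] := ∑ j : Fin d, monomial (j:ℕ) (v j) with hSv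
  have hSd : Sv.natDegree < d := by
    refine lt_of_le_of_lt (natDegree_sum_le_of_forall_le (n := d-1) _ _ ?_) (by omega)
    intro m _
    refine (natDegree_monomial_le _).trans ?_
    have := m.2; omega
  have hdvd : fA ∣ R * Sv := by
    rw [← modByMonic_eq_zero_iff_dvd hfAm]
    have h1 : (R * Sv) %ₘ fA = ∑ j, C (v j) * ((R * X ^ (j:ℕ)) %ₘ fA) := by
      have h2 : R * Sv = ∑ j, v j • (R * X ^ (j:ℕ)) := by
        rw [hSv, Finset.mul_sum]
        refine Finset.sum_congr rfl fun l _ => ?_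
        rw [smul_eq_C_mul, ← C_mul_X_pow_eq_monomial]; ring
      rw [h2]
      change modByMonicHom fA _ = _
      rw [map_sum]
      refine Finset.sum_congr rfl fun l _ => ?_
      rw [map_smul, smul_eq_C_mul]
      rfl
    have h2 : ((R * Sv) %ₘ fA).natDegree < d := by
      have := natDegree_modByMonic_lt (R * Sv) hfAm (by
        intro h1
        rw [h1] at hfAd; simp at hfAd; omega)
      omega
    ext1 i
    by_cases hi : i < d
    · rw [h1, finsetSum_coeff, coeff_zero]
      have := congrFun hv ⟨i, hi⟩
      simp only [Matrix.mulVec, dotProduct, Pi.zero_apply] at this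
      rw [← this]
      refine Finset.sum_congr rfl fun j _ => ?_
      rw [coeff_C_mul, mul_comm]; simp [hMt]
    · rw [coeff_eq_zero_of_natDegree_lt (by omega), coeff_zero]
  have hmap : fA.map (mapRingHom (algebraMap (AdjoinRoot f) K)) = f.map (mapRingHom (algebraMap k K)) := by
    rw [hfA, Polynomial.map_map]
    congr 1
    rw [IsScalarTower.algebraMap_eq k (AdjoinRoot f) K, mapRingHom_comp]
  have hprime := (hK).prime
  have hKd : (f.map (mapRingHom (algebraMap k K))).natDegree = d := by
    rw [h.monic.natDegree_map, h.deg]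
  have hd2 := Polynomial.map_dvd (mapRingHom (algebraMap (AdjoinRoot f) K)) hdvd
  rw [hmap, Polynomial.map_mul] at hd2
  have hR0 : R = 0 := by
    rcases hprime.dvd_or_dvd hd2 with h1 | h1
    · exact natDegree_map_inj_zero _ hinj _ R (by rw [hKd]; exact hRd) h1
    · exfalso
      have h2 := natDegree_map_inj_zero _ hinj _ Sv (by rw [hKd]; exact hSd) h1
      apply hv0
      funext j
      have := congrArg (fun P => Polynomial.coeff P (j:ℕ)) h2
      simp only [hSv, finsetSum_coeff, coeff_monomial, coeff_zero] at this
      rw [Finset.sum_eq_single j] at this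
      · simpa using this
      · intro b _ hb; rw [if_neg]; intro h3; exact hb (Fin.ext h3)
      · simp
  intro l m
  have := congrArg (fun P => (Polynomial.coeff P (m:ℕ)).coeff (l:ℕ)) hR0
  simp only [hR, finsetSum_coeff, coeff_monomial, coeff_zero] at this
  rw [Finset.sum_eq_single l, Finset.sum_eq_single m] at this
  · simpa using this
  · intro b _ hb; rw [if_neg]; · simp
    · intro h3; exact hb (Fin.ext h3)
  · simp
  · intro b _ hb
    refine Finset.sum_eq_zero fun m' _ => ?_
    split_ifs
    · rw [coeff_monomial, if_neg]; intro h3; exact hb (Fin.ext h3)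
    · simp
  · simp

end
end Stp


namespace Stp

section
variable {k : Type*} [Field k] {f : k[X][X]} {d D : ℕ}

lemma Good.Del_U (h : Good f d D) {T : ℕ} {a : AdjoinRoot f} (ha : a ∈ U f D T) :
    Del f a ∈ U f D (T + D * d) := by
  obtain ⟨g, hg, rfl⟩ := mem_U.1 ha
  rw [Del_mk]
  refine U_mk (Submodule.sub_mem _ ?_ ?_)
  · rw [add_comm]; exact Pw_mul (Pw_dY h.mem_Pw) (Pw_dX hg)
  · rw [add_comm]; exact Pw_mul (Pw_dX h.mem_Pw) (Pw_dY hg)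

lemma Good.iter_U (h : Good f d D) {T : ℕ} {a : AdjoinRoot f} (ha : a ∈ U f D T) (ν : ℕ) :
    (Del f)^[ν] a ∈ U f D (T + ν * (D * d)) := by
  induction ν with
  | zero => simpa using ha
  | succ n ih =>
    rw [Function.iterate_succ_apply']
    have := h.Del_U ih
    rwa [show T + (n+1) * (D * d) = T + n * (D*d) + D * d by ring]

lemma xx_U : xx f ∈ U f D 1 := U_mk (Pw_C (by simp))
lemma yy_U : yy f ∈ U f D D := U_mk Pw_X

lemma red_exists {τ e : ℕ} (he : 1 ≤ e) (G : (AdjoinRoot f)[X]) (hGm : G.Monic) (hGe : G.natDegree = e)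
    (hG : CU f D τ G) (m : ℕ) : ∃ g : (AdjoinRoot f)[X], g.natDegree < e ∧ CU f D (m * τ) g ∧ G ∣ X ^ m - g := by
  induction m with
  | zero => exact ⟨1, by simp; omega, by simpa using CU_one, by simp⟩
  | succ m ih =>
    obtain ⟨g, h1, h2, h3⟩ := ih
    refine ⟨X * g - C (g.coeff (e-1)) * G, ?_, ?_, ?_⟩
    · by_contra hcon
      have hle : (X * g - C (g.coeff (e-1)) * G).natDegree ≤ e := by
        refine (natDegree_sub_le _ _).trans (max_le ?_ ?_)
        · refine natDegree_mul_le.trans ?_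
          have := natDegree_X_le (R := AdjoinRoot f); omega
        · exact (natDegree_C_mul_le _ _).trans hGe.le
      have hc : (X * g - C (g.coeff (e-1)) * G).coeff e = 0 := by
        have h4 : G.coeff e = 1 := by rw [← hGe]; exact hGm
        have h5 : (X * g).coeff e = g.coeff (e-1) := by
          conv_lhs => rw [show e = (e-1)+1 by omega]
          rw [coeff_X_mul]
        rw [coeff_sub, coeff_C_mul, h4, h5, mul_one, sub_self]
      have heq : (X * g - C (g.coeff (e-1)) * G).natDegree = e := by omega
      have h6 : (X * g - C (g.coeff (e-1)) * G).leadingCoeff = 0 := by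
        rw [leadingCoeff, heq]; exact hc
      rw [leadingCoeff_eq_zero] at h6
      rw [h6] at heq; simp at heq; omega
    · intro s
      rw [coeff_sub, coeff_C_mul]
      refine Submodule.sub_mem _ ?_ ?_
      · rcases s with _ | s
        · simp
        · rw [coeff_X_mul]; exact U_mono (by rw [add_mul]; omega) (h2 s)
      · rw [add_mul, one_mul]; exact U_mul (h2 _) (hG _)
    · have : X ^ (m+1) - (X * g - C (g.coeff (e-1)) * G) = X * (X ^ m - g) + C (g.coeff (e-1)) * G := by ring
      rw [this]
      exact dvd_add (Dvd.dvd.mul_left h3 _) (Dvd.intro_left _ rfl)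

lemma iter_mul_const (ν : ℕ) (c w : AdjoinRoot f) (hw : Del f w = 0) :
    (Del f)^[ν] (c * w) = (Del f)^[ν] c * w := by
  induction ν generalizing c with
  | zero => rfl
  | succ n ih =>
    rw [Function.iterate_succ_apply, Derivation.leibniz, hw, smul_zero, zero_add, smul_eq_mul, mul_comm, ih,
      Function.iterate_succ_apply]

lemma iter_sum {ι : Type*} (ν : ℕ) (s : Finset ι) (c : ι → AdjoinRoot f) :
    (Del f)^[ν] (∑ i ∈ s, c i) = ∑ i ∈ s, (Del f)^[ν] (c i) := by
  induction ν generalizing c with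
  | zero => rfl
  | succ n ih =>
    simp only [Function.iterate_succ_apply]
    rw [map_sum, ih]

/-- the linear conditions -/
def Lam (f : k[X][X]) (d B I : ℕ) (hh : ℕ → (AdjoinRoot f)[X]) (ν s : ℕ) :
    (Fin B → Fin d → (Fin d × Fin (I+1) → k)) →ₗ[k] AdjoinRoot f where
  toFun v := ∑ l, ∑ m, (Del f)^[ν] (Wmap f d I (v l m)) * xx f ^ (l:ℕ) * (hh m).coeff s
  map_add' v w := by simp [add_mul, Finset.sum_add_distrib]
  map_smul' c v := by
    simp only [Pi.smul_apply, map_smul, iter_smul, RingHom.id_apply, Finset.smul_sum, smul_mul_assoc]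

lemma Good.step (h : Good f d D) (hirr : Irreducible f)
    {K : Type*} [Field K] [Algebra k K] [Algebra (AdjoinRoot f) K] [IsScalarTower k (AdjoinRoot f) K]
    (hinj : Function.Injective (algebraMap (AdjoinRoot f) K))
    (hK : Irreducible (f.map (mapRingHom (algebraMap k K))))
    {p : ℕ} (hp : p.Prime) [CharP k p]
    (hroot : f.eval₂ ((aeval (xx f ^ p) : k[X] →ₐ[k] AdjoinRoot f) : k[X] →+* AdjoinRoot f) (yy f ^ p) = 0)
    {e : ℕ} (he : 1 ≤ e) (G : (AdjoinRoot f)[X]) (hGm : G.Monic) (hGe : G.natDegree = e)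
    (hG : CU f D (D * d) G) (S : Finset (Pt f))
    (hS1 : ∀ P ∈ S, P.1.1 ^ p = P.1.1)
    (hS2 : ∀ P ∈ S, ev P (AdjoinRoot.mk f (derivative f)) ≠ 0)
    (hS3 : ∀ P ∈ S, G.eval₂ (ev P : AdjoinRoot f →+* k) (P.1.2 ^ p) = 0)
    (I M B : ℕ) (hM : M ≤ p) (hI : d * (I + D * d) < p)
    (hcount : M * e * (d * ((I + D * d) + M * (D * d) + B + d * (D * d) + 1)) < B * d * (d * (I + 1))) :
    M * S.card ≤ d * (I + D * d + p * B + p * d * D + D * d) := by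
  classical
  have hdom : IsDomain (AdjoinRoot f) := AdjoinRoot.isDomain_of_prime hirr.prime
  set Ts := (I + D * d) + M * (D * d) + B + d * (D * d) with hTs
  choose hh h1 h2 h3 using red_exists he G hGm hGe hG
  have := h.finite_Wd Ts
  have hmem : ∀ (ν : Fin M) (s : Fin e) v, Lam f d B I hh ν s v ∈ Wd f d Ts := by
    intro ν s v
    apply h.U_le_Wd
    simp only [Lam, LinearMap.coe_mk, AddHom.coe_mk]
    refine Submodule.sum_mem _ fun l _ => Submodule.sum_mem _ fun m _ => ?_
    have e1 := h.iter_U (h.Wd_le_U I (LinearMap.mem_range_self (Wmap f d I) (v l m))) ν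
    have e2 := U_mul (U_mul e1 (U_pow (D := D) (xx_U (f := f)) (l:ℕ))) (h2 m s)
    refine U_mono ?_ e2
    have e3 : (ν : ℕ) * (D * d) ≤ M * (D * d) := Nat.mul_le_mul_right _ ν.2.le
    have e4 : (m : ℕ) * (D * d) ≤ d * (D * d) := Nat.mul_le_mul_right _ m.2.le
    have := l.2
    omega
  let Λ : (Fin B → Fin d → (Fin d × Fin (I+1) → k)) →ₗ[k] (Fin M × Fin e → Wd f d Ts) :=
    LinearMap.pi fun t => LinearMap.codRestrict _ (Lam f d B I hh t.1 t.2) (hmem t.1 t.2)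
  have hker : LinearMap.ker Λ ≠ ⊥ := by
    apply LinearMap.ker_ne_bot_of_finrank_lt
    rw [Module.finrank_pi_fintype, Module.finrank_pi_fintype]
    simp only [h.finrank_Wd, Module.finrank_pi_fintype, Module.finrank_self]
    simp only [Finset.sum_const, Finset.card_univ, Fintype.card_prod, Fintype.card_fin, smul_eq_mul, mul_one]
    calc _ < B * d * (d * (I + 1)) := hcount
      _ = _ := by ring
  obtain ⟨v, hv, hv0⟩ := (Submodule.ne_bot_iff _).1 hker
  have hv' : ∀ (ν : Fin M) (s : Fin e), Lam f d B I hh ν s v = 0 := by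
    intro ν s
    have := congrFun (LinearMap.mem_ker.1 hv) (ν, s)
    exact congrArg Subtype.val this
  set c : Fin B → Fin d → AdjoinRoot f := fun l m => Wmap f d I (v l m) with hc
  have hcU : ∀ l m, c l m ∈ U f D (I + D * d) := fun l m => h.Wd_le_U I ⟨v l m, rfl⟩
  set q := ∑ l, ∑ m, c l m * xx f ^ (p * l) * yy f ^ (p * m) with hq
  have hq0 : q ≠ 0 := by
    intro h0
    have := h.indep hirr hinj hK hroot hI c hcU h0
    apply hv0
    funext l m
    apply h.Wmap_inj I
    exact (this l m).trans (map_zero _).symm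
  have hqU : q ∈ U f D (I + D * d + p * B + p * d * D) := by
    refine Submodule.sum_mem _ fun l _ => Submodule.sum_mem _ fun m _ => ?_
    refine U_mono ?_ (U_mul (U_mul (hcU l m) (U_pow (D := D) xx_U (p * l))) (U_pow yy_U (p * m)))
    have e1 : p * (l:ℕ) ≤ p * B := Nat.mul_le_mul_left _ l.2.le
    have e2 : p * (m:ℕ) * D ≤ p * d * D := Nat.mul_le_mul_right _ (Nat.mul_le_mul_left _ m.2.le)
    omega
  refine h.zero_count hirr S M (Or.inr hS2) ?_ hqU hq0 ?_
  · intro ν hν h0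
    rw [CharP.cast_eq_zero_iff k p] at h0
    have := (hp.dvd_factorial).1 h0
    omega
  · intro P hP ν hν
    have hDp : ∀ a : AdjoinRoot f, Del f (a ^ p) = 0 := by
      intro a
      rw [Derivation.leibniz_pow]
      have : (p : AdjoinRoot f) = 0 := by
        rw [← map_natCast (algebraMap k (AdjoinRoot f)), CharP.cast_eq_zero, map_zero]
      rw [nsmul_eq_mul, this, zero_mul]
    have hDp2 : ∀ (a : AdjoinRoot f) (n : ℕ), Del f (a ^ (p * n)) = 0 := by
      intro a n; rw [mul_comm, pow_mul]; exact hDp _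
    have hred : ∀ m : ℕ, (P.1.2 ^ p) ^ m = ∑ s : Fin e, ev P ((hh m).coeff s) * (P.1.2 ^ p) ^ (s:ℕ) := by
      intro m
      obtain ⟨g, hg⟩ := h3 m
      have := congrArg (eval₂ (ev P : AdjoinRoot f →+* k) (P.1.2 ^ p)) hg
      rw [eval₂_mul, hS3 P hP, zero_mul, eval₂_sub, eval₂_X_pow, sub_eq_zero,
        eval₂_eq_sum_range' _ (h1 m), Finset.sum_range] at this
      exact this
    have key : (Del f)^[ν] q = ∑ l, ∑ m, (Del f)^[ν] (c l m) * xx f ^ (p * l) * yy f ^ (p * m) := by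
      rw [hq, iter_sum]
      refine Finset.sum_congr rfl fun l _ => ?_
      rw [iter_sum]
      refine Finset.sum_congr rfl fun m _ => ?_
      rw [iter_mul_const _ _ _ (hDp2 _ _), iter_mul_const _ _ _ (hDp2 _ _)]
    have key2 : ev P ((Del f)^[ν] q) = ∑ s : Fin e, (P.1.2 ^ p) ^ (s:ℕ) * ev P (Lam f d B I hh ν s v) := by
      rw [key]
      simp only [Lam, LinearMap.coe_mk, AddHom.coe_mk, map_sum, map_mul, map_pow, ev_xx, ev_yy, Finset.mul_sum]
      rw [Finset.sum_comm (s := (Finset.univ : Finset (Fin e)))]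
      refine Finset.sum_congr rfl fun l _ => ?_
      rw [Finset.sum_comm (s := (Finset.univ : Finset (Fin e)))]
      refine Finset.sum_congr rfl fun m _ => ?_
      rw [pow_mul, hS1 P hP, pow_mul, hred m, Finset.mul_sum]
      refine Finset.sum_congr rfl fun s _ => ?_
      ring
    rw [key2]
    refine Finset.sum_eq_zero fun s _ => ?_
    rw [hv' ⟨ν, hν⟩ s, map_zero, mul_zero]

end
end Stp


namespace Stp

/-- threshold for the prime -/
def P0 (d Q : ℕ) : ℕ := (1 + 2 * d * (Q+2) + Q + d * Q)^2 + 2 * d * Q + d * (Q+1) + d + 2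
/-- error constant -/
def C1 (d Q : ℕ) : ℕ := 1 + d * (1 + 2 * d * (Q+2)) + 2 * d * Q

lemma params (d Q e p : ℕ) (hd : 1 ≤ d) (hed : e ≤ d) (hp : P0 d Q ≤ p) :
    ∃ I M B : ℕ, 1 ≤ M ∧ M ≤ p ∧ d * (I + Q) < p ∧
      M * e * (d * ((I + Q) + M * Q + B + d * Q + 1)) < B * d * (d * (I + 1)) ∧
      ∀ s : ℕ, M * s ≤ d * (I + Q + p * B + p * Q + Q) → s ≤ e * p + 3 * C1 d Q * Nat.sqrt p := by
  set b0 := 2 * d * (Q+2) with hb0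
  set M := Nat.sqrt p with hM
  have hM1 : 1 + b0 + Q + d * Q ≤ M := by
    rw [hM, Nat.le_sqrt]
    unfold P0 at hp
    rw [← hb0] at hp
    have : (1 + b0 + Q + d * Q) * (1 + b0 + Q + d * Q) = (1 + b0 + Q + d * Q)^2 := by ring
    omega
  have hMsq : M * M ≤ p := Nat.sqrt_le p
  have hMlt : p < (M+1) * (M+1) := Nat.lt_succ_sqrt p
  have hp2 : 2 * d * Q + d * (Q+1) + 2 ≤ p := by unfold P0 at hp; omega
  have hIdef : ∃ I, I + Q = (p-1)/d := by
    refine ⟨(p-1)/d - Q, Nat.sub_add_cancel ?_⟩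
    rw [Nat.le_div_iff_mul_le (by omega)]
    have : d * (Q+1) = Q * d + d := by ring
    omega
  obtain ⟨I, hI⟩ := hIdef
  have hI1 : d * (I + Q) ≤ p - 1 := by rw [hI]; exact Nat.mul_div_le _ _
  have hI2 : p ≤ d * (I + Q + 1) := by
    have : p - 1 < d * ((p-1)/d + 1) := by
      have := Nat.lt_mul_div_succ (p-1) (show 0 < d by omega)
      exact this
    rw [← hI] at this; omega
  have hI3 : p ≤ 2 * (d * (I+1)) := by
    have e1 : d * (I+Q+1) = d * (I+1) + d * Q := by ring
    have e2 : 2 * d * Q = 2 * (d * Q) := by ring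
    have : 0 ≤ d * (Q+1) := Nat.zero_le _
    omega
  set B := M * e / d + 1 + b0 with hB
  have hB1 : M * e + d * b0 < d * B := by
    have : M * e < d * (M * e / d + 1) := Nat.lt_mul_div_succ (M*e) (show 0 < d by omega)
    have e2 : d * B = d * (M * e / d + 1) + d * b0 := by rw [hB]; ring
    omega
  have hB2 : d * B ≤ M * e + d * (1 + b0) := by
    have := Nat.mul_div_le (M*e) d
    have e2 : d * B = d * (M * e / d) + d * (1+b0) := by rw [hB]; ring
    omega
  have hB3 : B ≤ M + 1 + b0 := by
    have : M * e / d ≤ M := by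
      apply Nat.div_le_of_le_mul
      rw [mul_comm d]; exact Nat.mul_le_mul_left _ hed
    omega
  refine ⟨I, M, B, by omega, Nat.sqrt_le_self p, by omega, ?_, ?_⟩
  · have k1 : M * e * (Q + M * Q + B + d * Q) ≤ d * b0 * (I+1) := by
      calc M * e * (Q + M * Q + B + d * Q) ≤ M * d * (Q + M * Q + (M + 1 + b0) + d * Q) := by gcongr
        _ = M * d * (M * Q + M + (1 + b0 + Q + d * Q)) := by ring
        _ ≤ M * d * (M * Q + M + M) := by gcongr
        _ = (M * M) * (d * (Q+2)) := by ring
        _ ≤ p * (d * (Q+2)) := by gcongr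
        _ ≤ (2 * (d * (I+1))) * (d * (Q+2)) := by gcongr
        _ = d * b0 * (I+1) := by rw [hb0]; ring
    have k2 : (M * e + d * b0) * (I+1) < d * B * (I+1) := by gcongr
    have k3 : M * e * ((I + Q) + M * Q + B + d * Q + 1) < d * B * (I+1) := by
      calc M * e * ((I + Q) + M * Q + B + d * Q + 1) = M * e * (I+1) + M * e * (Q + M * Q + B + d * Q) := by ring
        _ ≤ M * e * (I+1) + d * b0 * (I+1) := by gcongr
        _ = (M * e + d * b0) * (I+1) := by ring
        _ < _ := k2
    calc M * e * (d * ((I + Q) + M * Q + B + d * Q + 1)) = d * (M * e * ((I + Q) + M * Q + B + d * Q + 1)) := by ring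
      _ < d * (d * B * (I+1)) := by gcongr
      _ = _ := by ring
  · intro s hs
    have hp3 : p ≤ 3 * (M * M) := by
      have : M ≤ M * M := Nat.le_mul_self M
      have : (M+1)*(M+1) = M * M + 2 * M + 1 := by ring
      omega
    have k1 : d * (I + Q + p * B + p * Q + Q) ≤ M * (e * p + 3 * C1 d Q * M) := by
      have hp1 : 1 ≤ p := by omega
      calc d * (I + Q + p * B + p * Q + Q) = d * (I+Q) + p * (d * B) + d * (p * Q) + d * (1 * Q) := by ring
        _ ≤ p + p * (M * e + d * (1 + b0)) + d * (p * Q) + d * (p * Q) := by gcongr; omega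
        _ = M * (e * p) + p * (1 + d * (1+b0) + 2 * d * Q) := by ring
        _ ≤ M * (e * p) + (3 * (M * M)) * (1 + d * (1+b0) + 2 * d * Q) := by gcongr
        _ = _ := by rw [hb0, C1]; ring
    exact Nat.le_of_mul_le_mul_left (hs.trans k1) (by omega)

section
variable {k : Type*} [Field k] {f : k[X][X]} {d D : ℕ}

lemma Good.bound (h : Good f d D) (hirr : Irreducible f)
    {K : Type*} [Field K] [Algebra k K] [Algebra (AdjoinRoot f) K] [IsScalarTower k (AdjoinRoot f) K]
    (hinj : Function.Injective (algebraMap (AdjoinRoot f) K))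
    (hK : Irreducible (f.map (mapRingHom (algebraMap k K))))
    {p : ℕ} (hp : p.Prime) [CharP k p]
    (hroot : f.eval₂ ((aeval (xx f ^ p) : k[X] →ₐ[k] AdjoinRoot f) : k[X] →+* AdjoinRoot f) (yy f ^ p) = 0)
    {e : ℕ} (he : 1 ≤ e) (hed : e ≤ d) (G : (AdjoinRoot f)[X]) (hGm : G.Monic) (hGe : G.natDegree = e)
    (hG : CU f D (D * d) G) (hpP : P0 d (D * d) ≤ p) (S : Finset (k × k))
    (hS0 : ∀ P ∈ S, f.eval₂ (evalRingHom P.1) P.2 = 0)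
    (hS1 : ∀ P ∈ S, P.1 ^ p = P.1)
    (hS2 : ∀ P ∈ S, (derivative f).eval₂ (evalRingHom P.1) P.2 ≠ 0)
    (hS3 : ∀ P : Pt f, P.1 ∈ S → G.eval₂ (ev P : AdjoinRoot f →+* k) (P.1.2 ^ p) = 0) :
    S.card ≤ e * p + 3 * C1 d (D * d) * Nat.sqrt p := by
  classical
  obtain ⟨I, M, B, hM1, hMp, hI, hcount, hfin⟩ := params d (D * d) e p h.dpos hed hpP
  let j : {x // x ∈ S} → Pt f := fun P => ⟨P.1, hS0 P.1 P.2⟩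
  have hj : Function.Injective j := by
    intro P Q hPQ
    exact Subtype.ext (Subtype.mk.inj hPQ)
  let S' : Finset (Pt f) := S.attach.map ⟨j, hj⟩
  have hmem : ∀ P ∈ S', P.1 ∈ S := by
    intro P hP
    obtain ⟨Q, _, rfl⟩ := Finset.mem_map.1 hP
    exact Q.2
  have hcard : S'.card = S.card := by simp [S']
  rw [← hcard]
  apply hfin
  have := h.step hirr hinj hK hp hroot he G hGm hGe hG S' (fun P hP => hS1 _ (hmem P hP))
    (fun P hP => by rw [ev_mk]; exact hS2 _ (hmem P hP)) (fun P hP => hS3 P (hmem P hP)) I M B hMp hI hcount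
  refine this.trans (le_of_eq ?_)
  ring

lemma Good.zero_bound (h : Good f d D) (hirr : Irreducible f) (hder : derivative f ≠ 0) (S : Finset (k × k))
    (hS0 : ∀ P ∈ S, f.eval₂ (evalRingHom P.1) P.2 = 0)
    (hS2 : ∀ P ∈ S, (derivative f).eval₂ (evalRingHom P.1) P.2 = 0) :
    S.card ≤ d * (D * d + D * d) := by
  classical
  let j : {x // x ∈ S} → Pt f := fun P => ⟨P.1, hS0 P.1 P.2⟩
  have hj : Function.Injective j := by
    intro P Q hPQ
    exact Subtype.ext (Subtype.mk.inj hPQ)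
  let S' : Finset (Pt f) := S.attach.map ⟨j, hj⟩
  have hmem : ∀ P ∈ S', P.1 ∈ S := by
    intro P hP
    obtain ⟨Q, _, rfl⟩ := Finset.mem_map.1 hP
    exact Q.2
  have hcard : S'.card = S.card := by simp [S']
  rw [← hcard]
  have := h.zero_count hirr S' 1 (Or.inl le_rfl) (by intro ν hν; interval_cases ν; simp)
    (U_mk (Pw_dY h.mem_Pw)) (by
      rw [Ne, AdjoinRoot.mk_eq_zero]
      intro hdvd
      have h1 := natDegree_le_of_dvd hdvd hder
      have h2 := natDegree_derivative_lt (p := f) (by rw [h.deg]; have := h.dpos; omega)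
      omega) (by
      intro P hP
      rw [Van_succ, ev_mk]
      exact ⟨hS2 _ (hmem P hP), fun ν hν => by omega⟩)
  omega

/-- first auxiliary polynomial -/
lemma G1_CU (hd : 1 ≤ d) : CU f D (D * d) (X - C (yy f)) := by
  intro s
  rw [coeff_sub]
  refine Submodule.sub_mem _ ?_ ?_
  · rw [coeff_X]; split_ifs
    · exact U_mono (Nat.zero_le _) U_one
    · exact Submodule.zero_mem _
  · rw [coeff_C]; split_ifs
    · exact U_mono (Nat.le_mul_of_pos_right D hd) yy_U
    · exact Submodule.zero_mem _

lemma Good.G2 (h : Good f d D) (hd : 2 ≤ d) : ∃ G : (AdjoinRoot f)[X], G.Monic ∧ G.natDegree = d - 1 ∧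
    CU f D (D * d) G ∧ f.map (AdjoinRoot.of f) = (X - C (yy f)) * G := by
  set fx := f.map (AdjoinRoot.of f) with hfx
  have hm : fx.Monic := h.monic.map _
  have hnt : Nontrivial (AdjoinRoot f) := by
    apply AdjoinRoot.nontrivial
    rw [degree_eq_natDegree h.monic.ne_zero, h.deg]
    simp; omega
  have hdx : fx.natDegree = d := by rw [hfx, h.monic.natDegree_map, h.deg]
  have hrt : fx.IsRoot (yy f) := by
    rw [IsRoot, hfx, eval_map]
    exact AdjoinRoot.eval₂_root f
  have hmul := mul_divByMonic_eq_iff_isRoot.2 hrt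
  refine ⟨fx /ₘ (X - C (yy f)), ?_, ?_, ?_, hmul.symm⟩
  · rw [← hmul] at hm
    exact (monic_X_sub_C _).of_mul_monic_left hm
  · rw [natDegree_divByMonic _ (monic_X_sub_C _), natDegree_X_sub_C, hdx]
  · intro s
    rw [coeff_divByMonic_X_sub_C]
    refine Submodule.sum_mem _ fun i hi => ?_
    rw [Finset.mem_Icc, hdx] at hi
    have h1 : fx.coeff i ∈ U f D D := by
      rw [hfx, coeff_map]
      exact U_mk (Pw_C ((dgX_le_iff _ _).1 h.dg i))
    refine U_mono ?_ (U_mul (U_pow yy_U _) h1)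
    calc (i - (s+1)) * D + D = (i - (s+1) + 1) * D := by ring
      _ ≤ d * D := by gcongr; omega
      _ = D * d := mul_comm _ _

end
end Stp


namespace Stp

lemma frob_eval {p : ℕ} [Fact p.Prime] {A : Type*} [CommRing A] [CharP A p] (f0 : (ZMod p)[X][X])
    (ψ ψ' : (ZMod p)[X] →+* A) (hX : ψ' X = ψ X ^ p) (y : A) (h : f0.eval₂ ψ y = 0) :
    f0.eval₂ ψ' (y ^ p) = 0 := by
  have h1 : ψ' = (frobenius A p).comp ψ := by
    apply Polynomial.ringHom_ext'
    · exact Subsingleton.elim _ _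
    · simp [hX, frobenius_def]
  rw [h1]
  have := congrArg (frobenius A p) h
  rw [hom_eval₂, map_zero, frobenius_def] at this
  exact this

lemma fixed_of_pow {p : ℕ} [Fact p.Prime] {k : Type*} [Field k] (φ : ZMod p →+* k) (y : k) (hy : y ^ p = y) :
    ∃ b, φ b = y := by
  classical
  have hp : p.Prime := Fact.out
  have hne : (X ^ p - X : k[X]) ≠ 0 := FiniteField.X_pow_card_sub_X_ne_zero k hp.one_lt
  have hsub : (Finset.univ.image φ) ⊆ (X ^ p - X : k[X]).roots.toFinset := by
    intro a ha
    obtain ⟨b, _, rfl⟩ := Finset.mem_image.1 ha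
    rw [Multiset.mem_toFinset, mem_roots hne, IsRoot]
    simp [← map_pow]
  have heq := Finset.eq_of_subset_of_card_le hsub (by
    rw [Finset.card_image_of_injective _ φ.injective, Finset.card_univ, ZMod.card]
    refine (Multiset.toFinset_card_le _).trans ((card_roots' _).trans ?_)
    rw [FiniteField.X_pow_card_sub_X_natDegree_eq k hp.one_lt])
  have : y ∈ (X ^ p - X : k[X]).roots.toFinset := by
    rw [Multiset.mem_toFinset, mem_roots hne, IsRoot]
    simp [hy]
  rw [← heq] at this
  obtain ⟨b, _, hb⟩ := Finset.mem_image.1 this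
  exact ⟨b, hb⟩

/-- error term -/
def Cw (d D : ℕ) : ℕ := 3 * C1 d (D * d) + (d + 1) * (d * (D * d + D * d))

theorem weil {p : ℕ} [Fact p.Prime] (f0 : (ZMod p)[X][X]) (d D : ℕ) (hd : 2 ≤ d) (hm : f0.Monic)
    (hdeg : f0.natDegree = d) (hD : dgX f0 ≤ D) (hpP : P0 d (D * d) ≤ p)
    (H : ∀ (κ : Type) [Field κ] (φ : ZMod p →+* κ), Irreducible (f0.map (mapRingHom φ))) :
    |((Finset.univ.filter fun P : ZMod p × ZMod p => f0.eval₂ (evalRingHom P.1) P.2 = 0).card : ℤ) - p|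
      ≤ Cw d D * Nat.sqrt p := by
  classical
  have hp : p.Prime := Fact.out
  have hdp : d < p := by unfold P0 at hpP; omega
  set k := AlgebraicClosure (ZMod p)
  set ι : ZMod p →+* k := algebraMap (ZMod p) k with hι
  set f : k[X][X] := f0.map (mapRingHom ι) with hf
  have hchar : CharP k p := charP_of_injective_algebraMap ι.injective p
  have hirr : Irreducible f := H k ι
  have h : Good f d D := ⟨hm.map _, by rw [hf, hm.natDegree_map, hdeg], by omega, by
    rw [dgX_le_iff] at hD ⊢
    intro j
    rw [hf, coeff_map]
    exact natDegree_map_le.trans (hD j)⟩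
  have hmm : ∀ (K' : Type) [Field K'] (φ : k →+* K'), Irreducible (f.map (mapRingHom φ)) := by
    intro K' _ φ
    have := H K' (φ.comp ι)
    rw [hf, Polynomial.map_map, mapRingHom_comp]
    exact this
  have hdom : IsDomain (AdjoinRoot f) := AdjoinRoot.isDomain_of_prime hirr.prime
  let K := FractionRing (AdjoinRoot f)
  have hinj : Function.Injective (algebraMap (AdjoinRoot f) K) := IsFractionRing.injective _ _
  have hK : Irreducible (f.map (mapRingHom (algebraMap k K))) := hmm K _
  have hcharA : CharP (AdjoinRoot f) p :=
    charP_of_injective_algebraMap (algebraMap k (AdjoinRoot f)).injective p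
  have hroot : f.eval₂ ((aeval (xx f ^ p) : k[X] →ₐ[k] AdjoinRoot f) : k[X] →+* AdjoinRoot f) (yy f ^ p) = 0 := by
    have : f.eval₂ (AdjoinRoot.of f) (yy f) = 0 := AdjoinRoot.eval₂_root f
    conv at this => lhs; arg 3; rw [hf]
    conv => lhs; arg 3; rw [hf]
    rw [eval₂_map] at this ⊢
    refine frob_eval f0 _ _ ?_ _ this
    simp [xx]
  -- the fibres
  set g : ZMod p → k[X] := fun a => f.map (evalRingHom (ι a)) with hg
  have hgm : ∀ a, (g a).Monic := fun a => h.monic.map _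
  have hgd : ∀ a, (g a).natDegree = d := fun a => by simp only [hg]; rw [h.monic.natDegree_map, h.deg]
  set r : ZMod p → Finset k := fun a => (g a).roots.toFinset with hr
  have hmr : ∀ a y, y ∈ r a ↔ f.eval₂ (evalRingHom (ι a)) y = 0 := by
    intro a y
    simp only [hr]
    rw [Multiset.mem_toFinset, mem_roots (hgm a).ne_zero, IsRoot, hg, eval_map]
  set T : Finset (Σ _ : ZMod p, k) := Finset.univ.sigma r with hT
  have hmT : ∀ t, t ∈ T ↔ f.eval₂ (evalRingHom (ι t.1)) t.2 = 0 := by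
    intro t; rw [hT, Finset.mem_sigma, hmr]; simp
  let dv : (Σ _ : ZMod p, k) → k := fun t => (derivative f).eval₂ (evalRingHom (ι t.1)) t.2
  let em : (Σ _ : ZMod p, k) → k × k := fun t => (ι t.1, t.2)
  have hem : Function.Injective em := by
    rintro ⟨a, y⟩ ⟨b, z⟩ hab
    simp only [em, Prod.mk.injEq] at hab
    obtain ⟨h1, h2⟩ := hab
    rw [ι.injective h1, h2]
  set Z := T.filter fun t => dv t = 0 with hZ
  set T1 := T.filter fun t => dv t ≠ 0 ∧ t.2 ^ p = t.2 with hT1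
  set T2 := T.filter fun t => dv t ≠ 0 ∧ t.2 ^ p ≠ t.2 with hT2
  have hder : derivative f ≠ 0 := by
    intro h0
    have h1 : (derivative f).coeff (d-1) = 0 := by rw [h0]; simp
    rw [coeff_derivative] at h1
    have h2 : f.coeff (d - 1 + 1) = 1 := by
      rw [show d - 1 + 1 = d by omega, ← h.deg]; exact h.monic
    rw [h2, one_mul] at h1
    have h3 : ((d : ℕ) : k[X]) = 0 := by
      rw [← h1, ← Nat.cast_add_one]; congr 1; omega
    have h4 : ((d : ℕ) : k) = 0 := by
      have := congrArg (eval 0) h3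
      simpa using this
    rw [CharP.cast_eq_zero_iff k p] at h4
    exact absurd (Nat.le_of_dvd (by omega) h4) (by omega)
  have hZc : Z.card ≤ d * (D * d + D * d) := by
    rw [← Finset.card_image_of_injective Z hem]
    apply h.zero_bound hirr hder
    · intro P hP
      obtain ⟨t, ht, rfl⟩ := Finset.mem_image.1 hP
      exact (hmT t).1 (Finset.mem_filter.1 ht).1
    · intro P hP
      obtain ⟨t, ht, rfl⟩ := Finset.mem_image.1 hP
      exact (Finset.mem_filter.1 ht).2
  have hιp : ∀ a, ι a ^ p = ι a := by intro a; rw [← map_pow, ZMod.pow_card]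
  have hT1c : T1.card ≤ 1 * p + 3 * C1 d (D * d) * Nat.sqrt p := by
    rw [← Finset.card_image_of_injective T1 hem]
    refine h.bound hirr hinj hK hp hroot le_rfl (by omega) (X - C (yy f)) (monic_X_sub_C _)
      (natDegree_X_sub_C _) (G1_CU (by omega)) hpP _ ?_ ?_ ?_ ?_
    · intro P hP
      obtain ⟨t, ht, rfl⟩ := Finset.mem_image.1 hP
      exact (hmT t).1 (Finset.mem_filter.1 ht).1
    · intro P hP
      obtain ⟨t, ht, rfl⟩ := Finset.mem_image.1 hP
      exact hιp _
    · intro P hP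
      obtain ⟨t, ht, rfl⟩ := Finset.mem_image.1 hP
      exact (Finset.mem_filter.1 ht).2.1
    · intro P hP
      obtain ⟨t, ht, hte⟩ := Finset.mem_image.1 hP
      have h1 : P.1.2 ^ p = P.1.2 := by rw [← hte]; exact (Finset.mem_filter.1 ht).2.2
      rw [eval₂_sub, eval₂_X, eval₂_C, h1]
      change _ - ev P (yy f) = 0
      rw [ev_yy, sub_self]
  have hT2c : T2.card ≤ (d-1) * p + 3 * C1 d (D * d) * Nat.sqrt p := by
    rw [← Finset.card_image_of_injective T2 hem]
    obtain ⟨G, hG1, hG2, hG3, hG4⟩ := h.G2 hd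
    refine h.bound hirr hinj hK hp hroot (by omega) (by omega) G hG1 hG2 hG3 hpP _ ?_ ?_ ?_ ?_
    · intro P hP
      obtain ⟨t, ht, rfl⟩ := Finset.mem_image.1 hP
      exact (hmT t).1 (Finset.mem_filter.1 ht).1
    · intro P hP
      obtain ⟨t, ht, rfl⟩ := Finset.mem_image.1 hP
      exact hιp _
    · intro P hP
      obtain ⟨t, ht, rfl⟩ := Finset.mem_image.1 hP
      exact (Finset.mem_filter.1 ht).2.1
    · intro P hP
      obtain ⟨t, ht, hte⟩ := Finset.mem_image.1 hP
      have h1 : P.1.2 ^ p ≠ P.1.2 := by rw [← hte]; exact (Finset.mem_filter.1 ht).2.2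
      have hx : P.1.1 ^ p = P.1.1 := by rw [← hte]; exact hιp _
      have h2 := congrArg (eval₂ (ev P : AdjoinRoot f →+* k) (P.1.2 ^ p)) hG4
      rw [eval₂_mul, eval₂_map] at h2
      have h3 : f.eval₂ ((ev P : AdjoinRoot f →+* k).comp (AdjoinRoot.of f)) (P.1.2 ^ p) = 0 := by
        have h4 := P.2
        conv at h4 => lhs; arg 3; rw [hf]
        conv => lhs; arg 3; rw [hf]
        rw [eval₂_map] at h4 ⊢
        refine frob_eval f0 _ _ ?_ _ h4
        have : ev P (AdjoinRoot.of f X) = P.1.1 := ev_xx P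
        simp [this, hx]
      rw [h3] at h2
      rcases mul_eq_zero.1 h2.symm with h5 | h5
      · exfalso
        apply h1
        rw [eval₂_sub, eval₂_X, eval₂_C] at h5
        change _ - ev P (yy f) = 0 at h5
        rw [ev_yy] at h5
        exact sub_eq_zero.1 h5
      · exact h5
  have hTc : d * p ≤ T.card + d * Z.card := by
    have e1 : T.card = ∑ a, (r a).card := Finset.card_sigma _ _
    have e2 : Z.card = ∑ a, ((r a).filter fun y => dv ⟨a, y⟩ = 0).card := by
      rw [← Finset.card_sigma]
      congr 1
      ext ⟨a, y⟩
      simp [hZ, hT]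
    rw [e1, e2, Finset.mul_sum, ← Finset.sum_add_distrib]
    have e3 : d * p = ∑ a : ZMod p, d := by simp [ZMod.card, mul_comm]
    rw [e3]
    refine Finset.sum_le_sum fun a _ => ?_
    by_cases hz : ((r a).filter fun y => dv ⟨a, y⟩ = 0).card = 0
    · have hnd : (g a).roots.Nodup := by
        rw [Multiset.nodup_iff_count_le_one]
        intro y
        by_contra hcon
        rw [count_roots, not_le, one_lt_rootMultiplicity_iff_isRoot (hgm a).ne_zero] at hcon
        rw [Finset.card_eq_zero] at hz
        have : y ∈ ((r a).filter fun y => dv ⟨a, y⟩ = 0) := by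
          rw [Finset.mem_filter]
          constructor
          · rw [hmr]
            have := hcon.1
            rwa [IsRoot, hg, eval_map] at this
          · have := hcon.2
            rw [IsRoot, hg, derivative_map, eval_map] at this
            exact this
        rw [hz] at this
        simp at this
      have hc : (r a).card = d := by
        rw [hr]
        simp only
        rw [Multiset.toFinset_card_of_nodup hnd, ← hgd a]
        exact (IsAlgClosed.splits (g a)).natDegree_eq_card_roots.symm
      omega
    · have : d * 1 ≤ d * ((r a).filter fun y => dv ⟨a, y⟩ = 0).card := Nat.mul_le_mul_left _ (by omega)
      omega
  have hpart : T.card ≤ T1.card + T2.card + Z.card := by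
    have : T ⊆ T1 ∪ T2 ∪ Z := by
      intro t ht
      simp only [Finset.mem_union, hT1, hT2, hZ, Finset.mem_filter, ht, true_and]
      tauto
    exact (Finset.card_le_card this).trans ((Finset.card_union_le _ _).trans
      (Nat.add_le_add_right (Finset.card_union_le _ _) _))
  have hN : (Finset.univ.filter fun P : ZMod p × ZMod p => f0.eval₂ (evalRingHom P.1) P.2 = 0).card
      = (T.filter fun t => t.2 ^ p = t.2).card := by
    have hev : ∀ a b : ZMod p, f.eval₂ (evalRingHom (ι a)) (ι b) = ι (f0.eval₂ (evalRingHom a) b) := by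
      intro a b
      rw [hf, eval₂_map, hom_eval₂]
      congr 1
      apply Polynomial.ringHom_ext'
      · exact Subsingleton.elim _ _
      · simp
    refine Finset.card_bij (fun P _ => ⟨P.1, ι P.2⟩) ?_ ?_ ?_
    · rintro ⟨a, b⟩ hP
      rw [Finset.mem_filter] at hP ⊢
      refine ⟨(hmT _).2 ?_, hιp b⟩
      simp only
      rw [hev, hP.2, map_zero]
    · rintro ⟨a, b⟩ _ ⟨a', b'⟩ _ hab
      simp only [Sigma.mk.injEq, heq_eq_eq] at hab
      rw [hab.1, ι.injective hab.2]
    · rintro ⟨a, y⟩ ht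
      rw [Finset.mem_filter] at ht
      obtain ⟨b, hb⟩ := fixed_of_pow ι y ht.2
      refine ⟨(a, b), ?_, by simp [hb]⟩
      rw [Finset.mem_filter]
      refine ⟨Finset.mem_univ _, ?_⟩
      have h1 := (hmT _).1 ht.1
      simp only at h1
      rw [← hb, hev] at h1
      exact (map_eq_zero ι).1 h1
  have hN1 : T1.card ≤ (T.filter fun t => t.2 ^ p = t.2).card := by
    apply Finset.card_le_card
    intro t ht
    rw [hT1, Finset.mem_filter] at ht
    exact Finset.mem_filter.2 ⟨ht.1, ht.2.2⟩
  have hN2 : (T.filter fun t => t.2 ^ p = t.2).card ≤ T1.card + Z.card := by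
    refine le_trans (Finset.card_le_card ?_) (Finset.card_union_le _ _)
    intro t ht
    rw [Finset.mem_filter] at ht
    simp only [Finset.mem_union, hT1, hZ, Finset.mem_filter, ht.1, ht.2, true_and]
    tauto
  rw [hN]
  set N := (T.filter fun t => t.2 ^ p = t.2).card
  set s := Nat.sqrt p with hs
  have hs1 : 1 ≤ s := by rw [hs, Nat.le_sqrt]; have := hp.one_lt; omega
  set W := d * (D * d + D * d) with hW
  have hWs : (d + 1) * W ≤ (d+1) * W * s := Nat.le_mul_of_pos_right _ hs1
  have hCw : Cw d D * s = 3 * C1 d (D * d) * s + (d+1) * W * s := by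
    rw [Cw, hW]; ring
  have hdZ : d * Z.card ≤ d * W := Nat.mul_le_mul_left _ hZc
  have e1 : (d+1) * W = d * W + W := by ring
  have e2 : (d - 1) * p + p = d * p := by
    obtain ⟨d', rfl⟩ : ∃ d', d = d' + 1 := ⟨d - 1, by omega⟩
    simp; ring
  rw [abs_le]
  have hCw' : ((Cw d D : ℤ) * s) = ((Cw d D * s : ℕ) : ℤ) := by push_cast; ring
  rw [hCw']
  constructor <;> omega

end Stp


namespace Stp

theorem weil_cert {p : ℕ} [Fact p.Prime] (f0 : (ZMod p)[X][X]) (d D : ℕ) (hd : 2 ≤ d) (hm : f0.Monic)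
    (hdeg : f0.natDegree = d) (hD : dgX f0 ≤ D) (hpP : P0 d (D * d) ≤ p)
    (r : Ix d D → Option (ℕ × ℕ)) (hr : (Mx f0 r).det ≠ 0) :
    |((Finset.univ.filter fun P : ZMod p × ZMod p => f0.eval₂ (evalRingHom P.1) P.2 = 0).card : ℤ) - p|
      ≤ Cw d D * Nat.sqrt p := by
  have hdp : d < p := by unfold P0 at hpP; omega
  refine weil f0 d D hd hm hdeg hD hpP ?_
  intro κ _ φ
  have hc : CharP κ p := charP_of_injective_ringHom φ.injective p
  refine irr_of_cert d D (by omega) _ (hm.map _) (by rw [hm.natDegree_map, hdeg]) ?_ ?_ ?_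
  · rw [dgX_le_iff] at hD ⊢
    intro j
    rw [coeff_map]
    exact natDegree_map_le.trans (hD j)
  · intro j h1 h2 h3
    rw [CharP.cast_eq_zero_iff κ p] at h3
    exact absurd (Nat.le_of_dvd h1 h3) (by omega)
  · apply cert_of_det _ r
    rw [← det_map]
    intro h0
    apply hr
    apply φ.injective
    rw [map_zero, ← h0, RingHom.map_det]
    rfl

/-- Extending a derivation to the fraction field. -/
lemma exists_frac_deriv {A K : Type*} [CommRing A] [IsDomain A] [Field K] [Algebra A K] [IsFractionRing A K]
    (δ : Derivation ℤ A A) :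
    ∃ δ' : Derivation ℤ K K, ∀ a, δ' (algebraMap A K a) = algebraMap A K (δ a) := by
  let φ : A →+* TrivSqZeroExt K K :=
    { toFun := fun a => TrivSqZeroExt.inl (algebraMap A K a) + TrivSqZeroExt.inr (algebraMap A K (δ a))
      map_one' := by simp
      map_zero' := by simp
      map_add' := by intro a b; ext <;> simp [Algebra.smul_def]
      map_mul' := by
        intro a b
        ext
        · simp
        · simp only [Derivation.leibniz, smul_eq_mul, map_add, map_mul, TrivSqZeroExt.snd_add, TrivSqZeroExt.snd_inl,
            TrivSqZeroExt.snd_inr, TrivSqZeroExt.snd_mul, TrivSqZeroExt.fst_add, TrivSqZeroExt.fst_inl,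
            TrivSqZeroExt.fst_inr, MulOpposite.smul_eq_mul_unop, MulOpposite.unop_op]
          ring }
  have hu : ∀ y : nonZeroDivisors A, IsUnit (φ y) := by
    intro y
    rw [TrivSqZeroExt.isUnit_iff_isUnit_fst]
    simp only [φ, RingHom.coe_mk, MonoidHom.coe_mk, OneHom.coe_mk]
    simp
  let Φ : K →+* TrivSqZeroExt K K := IsLocalization.lift (M := nonZeroDivisors A) hu
  have hΦ : ∀ a, Φ (algebraMap A K a) = φ a := fun a => IsLocalization.lift_eq hu a
  have hf : ∀ x, (Φ x).fst = x := by
    have : ((TrivSqZeroExt.fstHom K K K : TrivSqZeroExt K K →ₐ[K] K) : TrivSqZeroExt K K →+* K).comp Φ = RingHom.id K := by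
      apply IsLocalization.ringHom_ext (nonZeroDivisors A)
      ext a
      simp [hΦ, φ]
    intro x
    exact congrArg (fun ψ : K →+* K => ψ x) this
  refine ⟨Derivation.mk' (AddMonoidHom.toIntLinearMap
    { toFun := fun x => (Φ x).snd, map_add' := by simp, map_zero' := by simp }) ?_, ?_⟩
  · intro a b
    simp only [AddMonoidHom.coe_toIntLinearMap, AddMonoidHom.coe_mk, ZeroHom.coe_mk, map_mul, TrivSqZeroExt.snd_mul, hf]
    simp only [smul_eq_mul, MulOpposite.smul_eq_mul_unop, MulOpposite.unop_op]
    ring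
  · intro a
    change (Φ (algebraMap A K a)).snd = _
    rw [hΦ]
    simp only [φ, RingHom.coe_mk, MonoidHom.coe_mk, OneHom.coe_mk, TrivSqZeroExt.snd_add, TrivSqZeroExt.snd_inl, TrivSqZeroExt.snd_inr, zero_add]

/-- The coefficients of the minimal polynomial of the constant are constants. -/
lemma minpoly_const {K : Type*} [Field K] [Differential K] [CharZero K] (P G H : K[X])
    [hi : Fact (Irreducible P)] [hm : Fact P.Monic]
    (hT : P * (derivative G - Differential.mapCoeffs H) - G * derivative P + H * Differential.mapCoeffs P = 0)
    (c : AdjoinRoot P) (hc : c * AdjoinRoot.mk P (derivative P) = AdjoinRoot.mk P H) (j : ℕ) :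
    Differential.deriv ((minpoly K c).coeff j) = 0 := by
  let y := AdjoinRoot.root P
  have hmk : ∀ Q : K[X], AdjoinRoot.mk P Q = aeval y Q := fun Q => (AdjoinRoot.aeval_eq Q).symm
  have hPd : aeval y (derivative P) ≠ 0 := by
    rw [← hmk, Ne, AdjoinRoot.mk_eq_zero]
    have h0 : 0 < P.natDegree := hi.out.natDegree_pos
    apply not_dvd_of_natDegree_lt
    · intro nh
      simp_all
    · exact natDegree_derivative_lt (by omega)
  have hPy : aeval y P = 0 := by rw [← hmk]; exact AdjoinRoot.mk_self
  have hD := fun Q : K[X] => Differential.deriv_aeval_eq (A := K) y Q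
  have e1 := hD P
  rw [hPy, map_zero] at e1
  have e2 := congrArg (aeval y) hT
  simp only [map_add, map_sub, map_mul, map_zero, hPy, zero_mul, zero_sub] at e2
  have e3 := congrArg (fun Q => aeval y (derivative Q)) hT
  simp only [derivative_mul, map_add, map_sub, map_mul, map_zero, hPy, zero_mul] at e3
  have comm : derivative (Differential.mapCoeffs P) = Differential.mapCoeffs (derivative P) := by
    ext i
    simp only [coeff_derivative, Differential.coeff_mapCoeffs, Derivation.leibniz, smul_eq_mul]
    have : Differential.deriv ((i : K) + 1) = 0 := by
      have := Differential.deriv.map_natCast (i+1) (A := K)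
      push_cast at this
      exact this
    rw [this]; ring
  rw [comm] at e3
  have hg : aeval y G = - aeval y H * Differential.deriv y := by
    apply mul_right_cancel₀ hPd
    linear_combination -e2 - (aeval y) H * e1
  have hc1 := congrArg Differential.deriv hc
  rw [hmk, hmk] at hc hc1
  rw [Derivation.leibniz, smul_eq_mul, smul_eq_mul, hD H, hD (derivative P)] at hc1
  have hc' : Differential.deriv c = 0 := by
    apply mul_right_cancel₀ hPd
    apply mul_right_cancel₀ hPd
    rw [hg] at e3
    rw [zero_mul, zero_mul]
    linear_combination (aeval y) (derivative P) * hc1 - (aeval y (Differential.mapCoeffs (derivative P)) + aeval y (derivative (derivative P)) * Differential.deriv y) * hc - e3 - aeval y (derivative H) * e1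
  have hintc : IsIntegral K c := by
    have := (AdjoinRoot.powerBasis hm.out.ne_zero).finite
    exact IsIntegral.of_finite K c
  have h1 := Differential.deriv_aeval_eq (A := K) c (minpoly K c)
  rw [minpoly.aeval, hc', mul_zero, add_zero, map_zero] at h1
  have h2 : Differential.mapCoeffs (minpoly K c) = 0 := by
    by_contra hne
    have h3 := natDegree_le_natDegree (minpoly.degree_le_of_ne_zero K c hne h1.symm)
    have h4 : (Differential.mapCoeffs (minpoly K c)).coeff (Differential.mapCoeffs (minpoly K c)).natDegree ≠ 0 := by
      simpa using hne
    apply h4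
    rw [Differential.coeff_mapCoeffs]
    rcases h3.lt_or_eq with h5 | h5
    · rw [coeff_eq_zero_of_natDegree_lt h5, map_zero]
    · rw [← h5, coeff_natDegree, minpoly.monic hintc]
      simp
  rw [← Differential.coeff_mapCoeffs, h2, coeff_zero]

end Stp


namespace Stp

lemma wron {R : Type*} [CommRing R] [IsDomain R] [CharZero R] {a b : R[X]} (ha : a ≠ 0) (hb : b ≠ 0)
    (h : derivative a * b = a * derivative b) : a.natDegree = b.natDegree := by
  rcases hna : a.natDegree with _ | s
  · rw [eq_C_of_natDegree_eq_zero hna, derivative_C, zero_mul, ← eq_C_of_natDegree_eq_zero hna] at h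
    rcases mul_eq_zero.1 h.symm with h1 | h1
    · exact absurd h1 ha
    · exact (derivative_eq_zero.1 h1).symm
  rcases hnb : b.natDegree with _ | t
  · rw [eq_C_of_natDegree_eq_zero hnb, derivative_C, mul_zero, ← eq_C_of_natDegree_eq_zero hnb] at h
    rcases mul_eq_zero.1 h with h1 | h1
    · have := derivative_eq_zero.1 h1
      omega
    · exact absurd h1 hb
  have h1 := congrArg (fun q => q.coeff (s + (t + 1))) h
  have da : (derivative a).natDegree ≤ s := by
    have := natDegree_derivative_le a; omega
  have db : (derivative b).natDegree ≤ t := by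
    have := natDegree_derivative_le b; omega
  rw [coeff_mul_add_eq_of_natDegree_le da hnb.le, show s + (t+1) = (s+1) + t by ring,
    coeff_mul_add_eq_of_natDegree_le hna.le db, coeff_derivative, coeff_derivative, ← hna, ← hnb,
    coeff_natDegree, coeff_natDegree] at h1
  have h2 : ((s : R) + 1 - (t + 1)) * (a.leadingCoeff * b.leadingCoeff) = 0 := by
    linear_combination h1
  rcases mul_eq_zero.1 h2 with h3 | h3
  · have : ((s+1 : ℕ) : R) = ((t + 1 : ℕ) : R) := by push_cast; linear_combination h3
    exact_mod_cast this
  · simp [ha, hb] at h3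

lemma constq {R : Type*} [CommRing R] [IsDomain R] [CharZero R] {a b : R[X]} (hb : b ≠ 0)
    (h : derivative a * b = a * derivative b) : ∃ a0 b0 : R, b0 ≠ 0 ∧ a * C b0 = b * C a0 := by
  by_cases ha : a = 0
  · exact ⟨0, 1, one_ne_zero, by simp [ha]⟩
  refine ⟨a.leadingCoeff, b.leadingCoeff, by simpa using hb, ?_⟩
  have hab := wron ha hb h
  by_contra hne
  set e := a * C b.leadingCoeff - b * C a.leadingCoeff with he
  have he0 : e ≠ 0 := sub_ne_zero.2 hne
  have h1 : e.natDegree = b.natDegree := by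
    apply wron he0 hb
    rw [he]
    simp only [derivative_sub, derivative_mul, derivative_C]
    linear_combination C b.leadingCoeff * h
  have h2 : e.coeff e.natDegree = 0 := by
    rw [h1, he, coeff_sub, coeff_mul_C, coeff_mul_C, ← hab, coeff_natDegree, hab, coeff_natDegree]
    ring
  apply he0
  simpa using h2

/-- The derivation with respect to the first variable. -/
def dA (m : ℕ) : Derivation ℤ (MvPolynomial (Fin (m+1)) ℚ) (MvPolynomial (Fin (m+1)) ℚ) :=
  Derivation.mk' (AddMonoidHom.toIntLinearMap
    { toFun := fun a => (MvPolynomial.finSuccEquiv ℚ m).symm (derivative (MvPolynomial.finSuccEquiv ℚ m a))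
      map_add' := by simp
      map_zero' := by simp }) (by
    intro a b
    simp only [AddMonoidHom.coe_toIntLinearMap, AddMonoidHom.coe_mk, ZeroHom.coe_mk, map_mul, derivative_mul,
      map_add, AlgEquiv.symm_apply_apply, smul_eq_mul]
    ring)

lemma dA_apply (m : ℕ) (a : MvPolynomial (Fin (m+1)) ℚ) :
    MvPolynomial.finSuccEquiv ℚ m (dA m a) = derivative (MvPolynomial.finSuccEquiv ℚ m a) := by
  change MvPolynomial.finSuccEquiv ℚ m ((MvPolynomial.finSuccEquiv ℚ m).symm _) = _
  rw [AlgEquiv.apply_symm_apply]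

lemma const_RF (m : ℕ) {K : Type*} [Field K] [Differential K] [Algebra (MvPolynomial (Fin (m+1)) ℚ) K]
    [IsFractionRing (MvPolynomial (Fin (m+1)) ℚ) K]
    (hδ : ∀ a, Differential.deriv (algebraMap (MvPolynomial (Fin (m+1)) ℚ) K a) = algebraMap _ K (dA m a))
    (q : K) (hq : Differential.deriv q = 0) :
    ∃ a0 b0 : MvPolynomial (Fin m) ℚ, b0 ≠ 0 ∧
      q * algebraMap _ K ((MvPolynomial.finSuccEquiv ℚ m).symm (C b0)) =
        algebraMap _ K ((MvPolynomial.finSuccEquiv ℚ m).symm (C a0)) := by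
  set e := MvPolynomial.finSuccEquiv ℚ m with he
  obtain ⟨⟨a, b⟩, hab⟩ := IsLocalization.surj (nonZeroDivisors (MvPolynomial (Fin (m+1)) ℚ)) q
  simp only at hab
  have hb : (b : MvPolynomial (Fin (m+1)) ℚ) ≠ 0 := nonZeroDivisors.coe_ne_zero b
  have hbK : algebraMap _ K (b : MvPolynomial (Fin (m+1)) ℚ) ≠ 0 := by
    simpa using hb
  have h1 := congrArg Differential.deriv hab
  rw [Derivation.leibniz, hq, smul_zero, add_zero, hδ, hδ, smul_eq_mul] at h1
  have h2 : dA m a * b = a * dA m b := by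
    apply IsFractionRing.injective _ K
    rw [map_mul, map_mul, ← h1, ← hab]; ring
  have h3 := congrArg e h2
  rw [map_mul, map_mul, he, dA_apply, dA_apply, ← he] at h3
  obtain ⟨a0, b0, hb0, h4⟩ := constq (by simpa using hb) h3
  refine ⟨a0, b0, hb0, ?_⟩
  have h5 := congrArg e.symm h4
  rw [map_mul, map_mul, AlgEquiv.symm_apply_apply, AlgEquiv.symm_apply_apply] at h5
  have h6 := congrArg (algebraMap _ K) h5
  rw [map_mul, map_mul, ← hab] at h6
  apply mul_left_cancel₀ hbK
  rw [← h6]; ring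

lemma deg_C (m : ℕ) (b0 : MvPolynomial (Fin m) ℚ) :
    MvPolynomial.degreeOf 0 ((MvPolynomial.finSuccEquiv ℚ m).symm (C b0)) = 0 := by
  rw [← MvPolynomial.natDegree_finSuccEquiv, AlgEquiv.apply_symm_apply, natDegree_C]

lemma of_deg (m : ℕ) (a : MvPolynomial (Fin (m+1)) ℚ) (h : MvPolynomial.degreeOf 0 a = 0) :
    ∃ a0, MvPolynomial.finSuccEquiv ℚ m a = C a0 := by
  rw [← MvPolynomial.natDegree_finSuccEquiv] at h
  exact ⟨_, eq_C_of_natDegree_eq_zero h⟩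

lemma irr_frac {n : ℕ} (F : Polynomial (MvPolynomial (Fin n) ℤ)) (hF : AbsIrred F) (hm : F.Monic) :
    Irreducible (toFrac F) := by
  unfold toFrac toFracQ
  have hmq : (toQ F).Monic := hm.map _
  rw [← Monic.irreducible_iff_irreducible_map_fraction_map hmq]
  refine Monic.irreducible_of_irreducible_map (MvPolynomial.map (algebraMap ℚ (AlgebraicClosure ℚ))) _ hmq ?_
  unfold toQ AbsIrred at *
  rw [Polynomial.map_map]
  rw [show (MvPolynomial.map (algebraMap ℚ (AlgebraicClosure ℚ))).comp (MvPolynomial.map (Int.castRingHom ℚ))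
    = (MvPolynomial.map (Int.castRingHom (AlgebraicClosure ℚ)) : MvPolynomial (Fin n) ℤ →+* _) by
      apply MvPolynomial.ringHom_ext <;> simp]
  exact hF

/-- `F` with the first variable separated. -/
def sepF {m : ℕ} (F : Polynomial (MvPolynomial (Fin (m+1)) ℤ)) : (MvPolynomial (Fin m) ℤ)[X][X] :=
  F.map ((MvPolynomial.finSuccEquiv ℤ m : _ ≃ₐ[ℤ] _) : MvPolynomial (Fin (m+1)) ℤ →+* (MvPolynomial (Fin m) ℤ)[X])

/-- the structural map of the separated ring into the rational function field -/
def psA (m : ℕ) : (MvPolynomial (Fin m) ℤ)[X] →+* MvPolynomial (Fin (m+1)) ℚ :=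
  (((MvPolynomial.finSuccEquiv ℚ m).symm : _ ≃ₐ[ℚ] _) : (MvPolynomial (Fin m) ℚ)[X] →+* MvPolynomial (Fin (m+1)) ℚ).comp
    (mapRingHom (MvPolynomial.map (Int.castRingHom ℚ)))

lemma e_psA (m : ℕ) (a) : MvPolynomial.finSuccEquiv ℚ m (psA m a) = a.map (MvPolynomial.map (Int.castRingHom ℚ)) := by
  change MvPolynomial.finSuccEquiv ℚ m ((MvPolynomial.finSuccEquiv ℚ m).symm _) = _
  rw [AlgEquiv.apply_symm_apply]; rfl

lemma psA_inj (m : ℕ) : Function.Injective (psA m) := by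
  intro a b h
  have := congrArg (MvPolynomial.finSuccEquiv ℚ m) h
  rw [e_psA, e_psA] at this
  exact map_injective _ (MvPolynomial.map_injective _ Int.cast_injective) this

lemma dA_psA (m : ℕ) (a) : dA m (psA m a) = psA m (derivative a) := by
  apply (MvPolynomial.finSuccEquiv ℚ m).injective
  rw [dA_apply, e_psA, e_psA, derivative_map]

lemma psA_sep (m : ℕ) (F : Polynomial (MvPolynomial (Fin (m+1)) ℤ)) : (sepF F).map (psA m) = toQ F := by
  unfold sepF toQ
  rw [Polynomial.map_map]
  congr 1
  apply MvPolynomial.ringHom_ext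
  · intro r; simp
  · intro i
    apply (MvPolynomial.finSuccEquiv ℚ m).injective
    rw [RingHom.comp_apply, e_psA]
    refine Fin.cases ?_ (fun j => ?_) i
    · simp [MvPolynomial.finSuccEquiv_X_zero]
    · simp [MvPolynomial.finSuccEquiv_X_succ]

lemma cert_core (m : ℕ) {K : Type*} [Field K] [Differential K] [CharZero K]
    [Algebra (MvPolynomial (Fin (m+1)) ℚ) K]
    [IsFractionRing (MvPolynomial (Fin (m+1)) ℚ) K]
    (hδ : ∀ a, Differential.deriv (algebraMap (MvPolynomial (Fin (m+1)) ℚ) K a) = algebraMap _ K (dA m a))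
    (f : (MvPolynomial (Fin m) ℤ)[X][X]) (hf : f.Monic) (d D : ℕ) (hd : 1 ≤ d) (hfd : f.natDegree = d)
    (P : K[X]) (hP : P = f.map ((algebraMap (MvPolynomial (Fin (m+1)) ℚ) K).comp (psA m))) (hi : Irreducible P)
    (Mem : AdjoinRoot P → Prop)
    (hMem : ∀ z, Mem z ↔ ∃ a b : MvPolynomial (Fin (m+1)) ℚ, MvPolynomial.degreeOf 0 a = 0 ∧
      MvPolynomial.degreeOf 0 b = 0 ∧ algebraMap K (AdjoinRoot P) (algebraMap _ K b) ≠ 0 ∧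
      z * algebraMap K (AdjoinRoot P) (algebraMap _ K b) = algebraMap K (AdjoinRoot P) (algebraMap _ K a))
    (H : ∀ c : AdjoinRoot P, (∃ Q : Polynomial (AdjoinRoot P), Q ≠ 0 ∧ (∀ k, Mem (Q.coeff k)) ∧ eval c Q = 0) → Mem c) :
    Cert d D f := by
  intro g h hg hh _ _ hT h0
  set ψ := (algebraMap (MvPolynomial (Fin (m+1)) ℚ) K).comp (psA m) with hψ
  have hψi : Function.Injective ψ := (IsFractionRing.injective _ K).comp (psA_inj m)
  have hδψ : ∀ b, Differential.deriv (ψ b) = ψ (derivative b) := by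
    intro b
    rw [hψ, RingHom.comp_apply, RingHom.comp_apply, hδ, dA_psA]
  have hmc : ∀ q : (MvPolynomial (Fin m) ℤ)[X][X], Differential.mapCoeffs (q.map ψ) = (dX q).map ψ := by
    intro q
    ext i
    rw [Differential.coeff_mapCoeffs, coeff_map, coeff_map, coeff_dX, hδψ]
  have hPm : P.Monic := hP ▸ hf.map ψ
  have hPd : P.natDegree = d := by rw [hP, hf.natDegree_map, hfd]
  have : Fact (Irreducible P) := ⟨hi⟩
  have : Fact P.Monic := ⟨hPm⟩
  have hT' : P * (derivative (g.map ψ) - Differential.mapCoeffs (h.map ψ)) - (g.map ψ) * derivative P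
      + (h.map ψ) * Differential.mapCoeffs P = 0 := by
    rw [hP, hmc, hmc, derivative_map, derivative_map]
    have := congrArg (Polynomial.map ψ) hT
    unfold Tf at this
    simpa using this
  have hdd : (derivative P).natDegree < d := by
    rw [← hPd]; exact natDegree_derivative_lt (by omega)
  have hPne : AdjoinRoot.mk P (derivative P) ≠ 0 := by
    rw [Ne, AdjoinRoot.mk_eq_zero]
    apply not_dvd_of_natDegree_lt
    · intro nh
      have := derivative_eq_zero.1 nh
      omega
    · omega
  set c : AdjoinRoot P := AdjoinRoot.mk P (h.map ψ) / AdjoinRoot.mk P (derivative P) with hcdef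
  have hc : c * AdjoinRoot.mk P (derivative P) = AdjoinRoot.mk P (h.map ψ) := div_mul_cancel₀ _ hPne
  have hmin := minpoly_const P (g.map ψ) (h.map ψ) hT' c hc
  have hintc : IsIntegral K c := by
    have := (AdjoinRoot.powerBasis hPm.ne_zero).finite
    exact IsIntegral.of_finite K c
  have hcm : Mem c := by
    apply H
    refine ⟨(minpoly K c).map (algebraMap K (AdjoinRoot P)), ?_, ?_, ?_⟩
    · exact ((minpoly.monic hintc).map _).ne_zero
    · intro k
      rw [hMem, coeff_map]
      obtain ⟨a0, b0, hb0, hab⟩ := const_RF m hδ _ (hmin k)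
      refine ⟨_, _, deg_C m a0, deg_C m b0, ?_, ?_⟩
      · rw [Ne, map_eq_zero, IsFractionRing.to_map_eq_zero_iff]
        simpa using hb0
      · rw [← map_mul, hab]
    · rw [eval_map]
      exact minpoly.aeval K c
  obtain ⟨a, b, ha, hb, hb0, hab⟩ := (hMem c).1 hcm
  have hb0' : algebraMap _ K b ≠ 0 := fun h => hb0 (by rw [h, map_zero])
  have e1 : h.map ψ * C (algebraMap _ K b) = C (algebraMap _ K a) * derivative P := by
    have h1 : AdjoinRoot.mk P (h.map ψ * C (algebraMap _ K b) - C (algebraMap _ K a) * derivative P) = 0 := by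
      rw [map_sub, map_mul, map_mul, ← hc]
      change _ * _ * algebraMap K (AdjoinRoot P) _ - algebraMap K (AdjoinRoot P) _ * _ = 0
      rw [← hab]; ring
    rw [AdjoinRoot.mk_eq_zero] at h1
    rw [← sub_eq_zero]
    apply eq_zero_of_dvd_of_natDegree_lt h1
    rw [hPd]
    refine lt_of_le_of_lt (natDegree_sub_le _ _) (max_lt ?_ ?_)
    · exact lt_of_le_of_lt (natDegree_mul_C_le _ _) (lt_of_le_of_lt natDegree_map_le hh)
    · exact lt_of_le_of_lt (natDegree_C_mul_le _ _) hdd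
  have ha0 : a = 0 := by
    have e2 := congrArg (fun q => q.coeff (d-1)) e1
    simp only [coeff_mul_C, coeff_C_mul, coeff_map, coeff_derivative] at e2
    have h2 : P.coeff (d - 1 + 1) = 1 := by
      rw [show d - 1 + 1 = d by omega, ← hPd]; exact hPm
    rw [h2, one_mul, hψ, RingHom.comp_apply, ← map_mul, ← Nat.cast_add_one, show d - 1 + 1 = d by omega,
      ← map_natCast (algebraMap (MvPolynomial (Fin (m+1)) ℚ) K), ← map_mul] at e2
    have e3 := congrArg (MvPolynomial.finSuccEquiv ℚ m) (IsFractionRing.injective _ K e2)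
    obtain ⟨a0, ha0⟩ := of_deg m a ha
    obtain ⟨b0, hb0⟩ := of_deg m b hb
    rw [map_mul, map_mul, e_psA, ha0, hb0, map_natCast] at e3
    have e4 := congrArg (fun q => q.coeff 0) e3
    simp only [coeff_mul_C, coeff_map, h0, map_zero, zero_mul, coeff_C_mul] at e4
    rw [coeff_natCast_ite, if_pos rfl] at e4
    have e5 : a0 = 0 := by
      rcases mul_eq_zero.1 e4.symm with h5 | h5
      · exact h5
      · exfalso
        have : d = 0 := by exact_mod_cast h5
        omega
    rw [e5, C_0] at ha0
    simpa using ha0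
  have hh0 : h = 0 := by
    rw [ha0, map_zero, C_0, zero_mul] at e1
    rcases mul_eq_zero.1 e1 with h5 | h5
    · exact (Polynomial.map_eq_zero_iff hψi).1 h5
    · exact absurd (C_eq_zero.1 h5) hb0'
  refine ⟨?_, hh0⟩
  by_contra hg0
  rw [hh0] at hT
  unfold Tf at hT
  have := wron hg0 hf.ne_zero (by
    rw [map_zero, sub_zero, zero_mul, add_zero] at hT
    linear_combination hT)
  omega

set_option synthInstance.maxHeartbeats 400000 in
theorem gen_cert {m : ℕ} (F : Polynomial (MvPolynomial (Fin (m+1)) ℤ)) (hF : AbsIrred F) (hm : F.Monic)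
    (hd : 1 ≤ F.natDegree)
    (H : ∀ z : AdjoinRoot (toFrac F), AlgOverCoord 0 F z → CoordMem 0 F z) (D : ℕ) :
    Cert F.natDegree D (sepF F) := by
  obtain ⟨δ', hδ⟩ := exists_frac_deriv (A := MvPolynomial (Fin (m+1)) ℚ) (K := RF (m+1)) (dA m)
  letI : Differential (RF (m+1)) := ⟨δ'⟩
  refine cert_core m (K := RF (m+1)) hδ (sepF F) (hm.map _) F.natDegree D hd (hm.natDegree_map _) (toFrac F) ?_
    (irr_frac F hF hm) (CoordMem 0 F) (fun z => Iff.rfl) H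
  rw [← Polynomial.map_map, psA_sep]
  rfl

end Stp


namespace Stp

section
variable {σ : Type*}

/-- the sum of the absolute values of the coefficients -/
def nn (a : MvPolynomial σ ℤ) : ℕ := ∑ s ∈ a.support, (a.coeff s).natAbs

lemma nn_eq (a : MvPolynomial σ ℤ) (S : Finset (σ →₀ ℕ)) (h : a.support ⊆ S) :
    nn a = ∑ s ∈ S, (a.coeff s).natAbs := by
  unfold nn
  refine Finset.sum_subset h ?_
  intro s _ hs
  rw [MvPolynomial.notMem_support_iff.1 hs]; rfl

lemma nn_add (a b : MvPolynomial σ ℤ) : nn (a + b) ≤ nn a + nn b := by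
  classical
  rw [nn_eq a (a.support ∪ b.support) Finset.subset_union_left,
    nn_eq b (a.support ∪ b.support) Finset.subset_union_right,
    nn_eq (a + b) (a.support ∪ b.support) MvPolynomial.support_add, ← Finset.sum_add_distrib]
  refine Finset.sum_le_sum fun s _ => ?_
  rw [MvPolynomial.coeff_add]
  exact Int.natAbs_add_le _ _

lemma nn_zero : nn (0 : MvPolynomial σ ℤ) = 0 := by simp [nn]

lemma nn_sum {ι : Type*} (S : Finset ι) (f : ι → MvPolynomial σ ℤ) :
    nn (∑ i ∈ S, f i) ≤ ∑ i ∈ S, nn (f i) := by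
  classical
  induction S using Finset.induction_on with
  | empty => simp [nn_zero]
  | insert i S hi ih =>
    rw [Finset.sum_insert hi, Finset.sum_insert hi]
    exact (nn_add _ _).trans (Nat.add_le_add_left ih _)

lemma nn_monomial (s : σ →₀ ℕ) (k : ℤ) : nn (MvPolynomial.monomial s k) ≤ k.natAbs := by
  classical
  rw [nn_eq _ {s} MvPolynomial.support_monomial_subset, Finset.sum_singleton, MvPolynomial.coeff_monomial, if_pos rfl]

lemma nn_mul (a b : MvPolynomial σ ℤ) : nn (a * b) ≤ nn a * nn b := by
  have h : a * b = ∑ s ∈ a.support, ∑ t ∈ b.support, MvPolynomial.monomial (s + t) (a.coeff s * b.coeff t) := by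
    conv_lhs => rw [a.as_sum, b.as_sum, Finset.sum_mul_sum]
    simp only [MvPolynomial.monomial_mul]
  rw [h]
  refine (nn_sum _ _).trans ?_
  unfold nn
  rw [Finset.sum_mul_sum]
  refine Finset.sum_le_sum fun s _ => (nn_sum _ _).trans (Finset.sum_le_sum fun t _ => ?_)
  exact (nn_monomial _ _).trans (Int.natAbs_mul _ _).le

lemma nn_C (k : ℤ) : nn (MvPolynomial.C k : MvPolynomial σ ℤ) ≤ k.natAbs := nn_monomial _ _

lemma nn_neg (a : MvPolynomial σ ℤ) : nn (-a) = nn a := by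
  unfold nn
  rw [MvPolynomial.support_neg]
  simp

lemma coeff_le_nn (a : MvPolynomial σ ℤ) (s : σ →₀ ℕ) : (a.coeff s).natAbs ≤ nn a := by
  by_cases h : s ∈ a.support
  · exact Finset.single_le_sum (f := fun s => (a.coeff s).natAbs) (fun _ _ => Nat.zero_le _) h
  · rw [MvPolynomial.notMem_support_iff.1 h]; simp

/-- bounded size and degree -/
def Bd (B T : ℕ) (a : MvPolynomial σ ℤ) : Prop := nn a ≤ B ∧ a.totalDegree ≤ T

lemma Bd.zero (B T : ℕ) : Bd B T (0 : MvPolynomial σ ℤ) := ⟨by simp [nn_zero], by simp⟩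

lemma Bd.add {B B' T : ℕ} {a b : MvPolynomial σ ℤ} (h : Bd B T a) (h' : Bd B' T b) : Bd (B + B') T (a + b) :=
  ⟨(nn_add _ _).trans (Nat.add_le_add h.1 h'.1), (MvPolynomial.totalDegree_add _ _).trans (max_le h.2 h'.2)⟩

lemma Bd.neg {B T : ℕ} {a : MvPolynomial σ ℤ} (h : Bd B T a) : Bd B T (-a) :=
  ⟨by rw [nn_neg]; exact h.1, by rw [MvPolynomial.totalDegree_neg]; exact h.2⟩

lemma Bd.sub {B B' T : ℕ} {a b : MvPolynomial σ ℤ} (h : Bd B T a) (h' : Bd B' T b) : Bd (B + B') T (a - b) := by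
  rw [sub_eq_add_neg]; exact h.add h'.neg

lemma Bd.mono {B B' T : ℕ} {a : MvPolynomial σ ℤ} (h : Bd B T a) (hB : B ≤ B') : Bd B' T a :=
  ⟨h.1.trans hB, h.2⟩

lemma Bd.cast_mul {B T : ℕ} {a : MvPolynomial σ ℤ} (k : ℕ) (h : Bd B T a) : Bd (k * B) T ((k : MvPolynomial σ ℤ) * a) := by
  have hk : (k : MvPolynomial σ ℤ) = MvPolynomial.C (k : ℤ) := by simp
  rw [hk]
  refine ⟨(nn_mul _ _).trans (Nat.mul_le_mul ((nn_C _).trans (by simp)) h.1), ?_⟩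
  refine (MvPolynomial.totalDegree_mul _ _).trans ?_
  rw [MvPolynomial.totalDegree_C, zero_add]
  exact h.2

lemma Bd.one (T : ℕ) : Bd 1 T (1 : MvPolynomial σ ℤ) :=
  ⟨(nn_C 1).trans (by simp), by simp⟩

lemma det_Bd {ι : Type*} [Fintype ι] [DecidableEq ι] (A : Matrix ι ι (MvPolynomial σ ℤ)) (B T : ℕ)
    (h : ∀ i j, Bd B T (A i j)) :
    Bd ((Fintype.card ι).factorial * B ^ Fintype.card ι) (Fintype.card ι * T) A.det := by
  rw [Matrix.det_apply]
  have key : ∀ τ : Equiv.Perm ι, Bd (B ^ Fintype.card ι) (Fintype.card ι * T) (Equiv.Perm.sign τ • ∏ i, A (τ i) i) := by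
    intro τ
    have h1 : Bd (B ^ Fintype.card ι) (Fintype.card ι * T) (∏ i, A (τ i) i) := by
      constructor
      · have : ∀ S : Finset ι, nn (∏ i ∈ S, A (τ i) i) ≤ B ^ S.card := by
          intro S
          induction S using Finset.induction_on with
          | empty => simpa using (Bd.one (σ := σ) 0).1
          | insert i S hi ih =>
            rw [Finset.prod_insert hi, Finset.card_insert_of_notMem hi, pow_succ, mul_comm (B ^ _)]
            exact (nn_mul _ _).trans (Nat.mul_le_mul (h _ _).1 ih)
        exact this Finset.univ
      · refine (MvPolynomial.totalDegree_finsetProd _ _).trans ?_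
        refine (Finset.sum_le_sum fun i _ => (h _ _).2).trans ?_
        simp
    rcases Int.units_eq_one_or (Equiv.Perm.sign τ) with h2 | h2
    · rw [h2, one_smul]; exact h1
    · rw [h2, Units.neg_smul, one_smul]; exact h1.neg
  refine ⟨(nn_sum _ _).trans ((Finset.sum_le_sum fun τ _ => (key τ).1).trans ?_),
    MvPolynomial.totalDegree_finsetSum_le fun τ _ => (key τ).2⟩
  simp [Fintype.card_perm]

lemma shift_Bd (q : (MvPolynomial σ ℤ)[X][X]) (B T : ℕ) (hq : ∀ a b, Bd B T ((q.coeff a).coeff b))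
    (i j k a b : ℕ) :
    Bd (k * B) T (((monomial j (monomial i (k : MvPolynomial σ ℤ)) * q).coeff a).coeff b) := by
  rw [← C_mul_X_pow_eq_monomial, ← C_mul_X_pow_eq_monomial, mul_assoc, coeff_C_mul, mul_assoc, coeff_C_mul,
    coeff_X_pow_mul', coeff_X_pow_mul']
  split_ifs
  · exact (hq _ _).cast_mul k
  · rw [coeff_zero, mul_zero]; exact Bd.zero _ _
  · rw [mul_zero]; exact Bd.zero _ _

lemma gp_single_inl {R : Type*} [CommRing R] {d D : ℕ} (t : Fin d × Fin (D+1)) :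
    gp (fun t' => (Pi.single (Sum.inl t) 1 : Ix d D → R) (Sum.inl t')) = monomial (t.1 : ℕ) (monomial (t.2 : ℕ) 1) := by
  unfold gp
  rw [Finset.sum_eq_single t]
  · simp
  · intro b _ hb
    beta_reduce
    rw [Pi.single_eq_of_ne (by simpa using hb)]; simp
  · simp

lemma gp_single_inr {R : Type*} [CommRing R] {d D : ℕ} (t : Fin d × Fin (D+1)) :
    gp (fun t' => (Pi.single (Sum.inr t) 1 : Ix d D → R) (Sum.inr t')) = monomial (t.1 : ℕ) (monomial (t.2 : ℕ) 1) := by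
  unfold gp
  rw [Finset.sum_eq_single t]
  · simp
  · intro b _ hb
    beta_reduce
    rw [Pi.single_eq_of_ne (by simpa using hb)]; simp
  · simp

lemma gp_single_lr {R : Type*} [CommRing R] {d D : ℕ} (t : Fin d × Fin (D+1)) :
    gp (fun t' => (Pi.single (Sum.inl t) 1 : Ix d D → R) (Sum.inr t')) = 0 := by
  unfold gp
  refine Finset.sum_eq_zero fun b _ => ?_
  beta_reduce
  rw [Pi.single_eq_of_ne (by simp)]; simp

lemma gp_single_rl {R : Type*} [CommRing R] {d D : ℕ} (t : Fin d × Fin (D+1)) :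
    gp (fun t' => (Pi.single (Sum.inr t) 1 : Ix d D → R) (Sum.inl t')) = 0 := by
  unfold gp
  refine Finset.sum_eq_zero fun b _ => ?_
  beta_reduce
  rw [Pi.single_eq_of_ne (by simp)]; simp

lemma ent_Bd (f : (MvPolynomial σ ℤ)[X][X]) (d D B T : ℕ) (hB : 1 ≤ B) (hd : f.natDegree ≤ d) (hD : dgX f ≤ D)
    (hf : ∀ a b, Bd B T ((f.coeff a).coeff b)) (r : Option (ℕ × ℕ)) (c : Ix d D) :
    Bd (2 * (d + D + 1) * B) T (ent f r c) := by
  have hfY : ∀ a b, Bd (d * B) T (((derivative f).coeff a).coeff b) := by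
    intro a b
    rw [coeff_derivative]
    by_cases ha : a + 1 ≤ d
    · have : (f.coeff (a + 1) * ((a:(MvPolynomial σ ℤ)[X]) + 1)).coeff b = ((a + 1 : ℕ) : MvPolynomial σ ℤ) * (f.coeff (a+1)).coeff b := by
        rw [← Nat.cast_add_one, mul_comm, ← C_eq_natCast, coeff_C_mul]
      rw [this]
      exact ((hf _ _).cast_mul _).mono (Nat.mul_le_mul_right _ ha)
    · have h0 : f.coeff (a+1) = 0 := coeff_eq_zero_of_natDegree_lt (by omega)
      rw [h0, zero_mul, coeff_zero]; exact Bd.zero _ _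
  have hfX : ∀ a b, Bd (D * B) T (((dX f).coeff a).coeff b) := by
    intro a b
    rw [coeff_dX, coeff_derivative]
    by_cases ha : b + 1 ≤ D
    · have : ((f.coeff a).coeff (b+1) * ((b:MvPolynomial σ ℤ) + 1)) = ((b + 1 : ℕ) : MvPolynomial σ ℤ) * (f.coeff a).coeff (b+1) := by
        rw [← Nat.cast_add_one, mul_comm]
      rw [this]
      exact ((hf _ _).cast_mul _).mono (Nat.mul_le_mul_right _ ha)
    · have := (dgX_le_iff _ _).1 hD a
      have h0 : (f.coeff a).coeff (b+1) = 0 := coeff_eq_zero_of_natDegree_lt (by omega)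
      rw [h0, zero_mul]; exact Bd.zero _ _
  match r with
  | none =>
    have h1 : Bd 1 T (((gp (fun t => (Pi.single c 1 : Ix d D → MvPolynomial σ ℤ) (Sum.inr t))).coeff (d-1)).coeff 0) := by
      rcases c with t | t
      · rw [gp_single_lr, coeff_zero, coeff_zero]; exact Bd.zero _ _
      · rw [gp_single_inr, coeff_monomial]
        split_ifs
        · rw [coeff_monomial]
          split_ifs
          · exact Bd.one _
          · exact Bd.zero _ _
        · rw [coeff_zero]; exact Bd.zero _ _
    exact h1.mono (by nlinarith)
  | some ab =>
    rcases c with t | t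
    · simp only [ent, rowF]
      rw [gp_single_lr, gp_single_inl]
      have e : Tf f (monomial (t.1:ℕ) (monomial (t.2 : ℕ) (1 : MvPolynomial σ ℤ))) 0 =
          monomial ((t.1:ℕ) - 1) (monomial (t.2 : ℕ) ((t.1 : ℕ) : MvPolynomial σ ℤ)) * f
          - monomial (t.1:ℕ) (monomial (t.2 : ℕ) ((1 : ℕ) : MvPolynomial σ ℤ)) * derivative f := by
        unfold Tf
        rw [derivative_monomial, map_zero, sub_zero, zero_mul, add_zero, mul_comm f, Nat.cast_one]
        congr 3
        rw [← C_eq_natCast, monomial_mul_C, one_mul]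
      rw [e, coeff_sub, coeff_sub]
      refine ((shift_Bd f B T hf _ _ _ _ _).sub (shift_Bd _ _ T hfY _ _ _ _ _)).mono ?_
      have h1 : (t.1:ℕ) ≤ d := t.1.2.le
      have := Nat.mul_le_mul_right B h1
      nlinarith
    · simp only [ent, rowF]
      rw [gp_single_rl, gp_single_inr]
      have e : Tf f 0 (monomial (t.1:ℕ) (monomial (t.2 : ℕ) (1 : MvPolynomial σ ℤ))) =
          monomial (t.1:ℕ) (monomial (t.2 : ℕ) ((1 : ℕ) : MvPolynomial σ ℤ)) * dX f
          - monomial (t.1:ℕ) (monomial ((t.2 : ℕ) - 1) ((t.2 : ℕ) : MvPolynomial σ ℤ)) * f := by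
        unfold Tf
        rw [dX_monomial, derivative_monomial, one_mul, derivative_zero, Nat.cast_one]
        ring
      rw [e, coeff_sub, coeff_sub]
      refine ((shift_Bd _ _ T hfX _ _ _ _ _).sub (shift_Bd f B T hf _ _ _ _ _)).mono ?_
      have h1 : (t.2:ℕ) ≤ D := by have := t.2.2; omega
      have := Nat.mul_le_mul_right B h1
      nlinarith

end

section
variable {m : ℕ}

lemma totdeg_coeff (F : Polynomial (MvPolynomial (Fin (m+1)) ℤ)) (k : ℕ) : (F.coeff k).totalDegree ≤ totalDeg F := by
  by_cases h : k ∈ F.support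
  · have := Finset.le_sup (f := fun k => k + (F.coeff k).totalDegree) h
    unfold totalDeg
    exact le_trans (Nat.le_add_left _ _) this
  · rw [notMem_support_iff.1 h]; simp

lemma natDegree_le_totalDeg (F : Polynomial (MvPolynomial (Fin (m+1)) ℤ)) (hF : F ≠ 0) : F.natDegree ≤ totalDeg F := by
  have := Finset.le_sup (f := fun k => k + (F.coeff k).totalDegree) (natDegree_mem_support_of_nonzero hF)
  unfold totalDeg
  exact le_trans (Nat.le_add_right _ _) this

lemma coeff_le_norm (F : Polynomial (MvPolynomial (Fin (m+1)) ℤ)) (k : ℕ) (s) :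
    ((F.coeff k).coeff s).natAbs ≤ polyNorm F := by
  by_cases h : k ∈ F.support
  · refine le_trans ?_ (Finset.le_sup (f := fun k => mvNorm (F.coeff k)) h)
    by_cases hs : s ∈ (F.coeff k).support
    · exact Finset.le_sup (f := fun s => ((F.coeff k).coeff s).natAbs) hs
    · rw [MvPolynomial.notMem_support_iff.1 hs]; simp
  · rw [notMem_support_iff.1 h]; simp

lemma coeff_sepF (F : Polynomial (MvPolynomial (Fin (m+1)) ℤ)) (k : ℕ) :
    (sepF F).coeff k = MvPolynomial.finSuccEquiv ℤ m (F.coeff k) := by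
  unfold sepF; rw [coeff_map]; rfl

lemma dgX_sepF (F : Polynomial (MvPolynomial (Fin (m+1)) ℤ)) : dgX (sepF F) ≤ totalDeg F := by
  rw [dgX_le_iff]
  intro j
  rw [coeff_sepF, MvPolynomial.natDegree_finSuccEquiv]
  exact (MvPolynomial.degreeOf_le_totalDegree _ _).trans (totdeg_coeff F j)

lemma nn_le_card (a : MvPolynomial (Fin m) ℤ) (D B : ℕ) (hD : a.totalDegree ≤ D) (hB : ∀ s, (a.coeff s).natAbs ≤ B) :
    nn a ≤ (D + 1) ^ m * B := by
  have hc : a.support.card ≤ (D+1)^m := by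
    have : (Fintype.piFinset fun _ : Fin m => Finset.range (D+1)).card = (D+1)^m := by simp
    rw [← this]
    refine Finset.card_le_card_of_injOn (fun s => (s : Fin m → ℕ)) ?_ (fun _ _ _ _ h => DFunLike.coe_injective h)
    intro s hs
    simp only [Finset.mem_coe, Fintype.mem_piFinset, Finset.mem_range]
    intro i
    have h1 := MvPolynomial.le_degreeOf_of_mem_support (p := a) i hs
    have h2 := MvPolynomial.degreeOf_le_totalDegree a i
    omega
  unfold nn
  refine (Finset.sum_le_card_nsmul _ _ B fun s _ => hB s).trans ?_
  rw [smul_eq_mul]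
  exact Nat.mul_le_mul_right _ hc

lemma sepF_Bd (F : Polynomial (MvPolynomial (Fin (m+1)) ℤ)) (a b : ℕ) :
    Bd ((totalDeg F + 1) ^ m * polyNorm F) (totalDeg F) (((sepF F).coeff a).coeff b) := by
  rw [coeff_sepF]
  have h2 : ((MvPolynomial.finSuccEquiv ℤ m (F.coeff a)).coeff b).totalDegree ≤ totalDeg F := by
    by_cases h : (MvPolynomial.finSuccEquiv ℤ m (F.coeff a)).coeff b = 0
    · rw [h]; simp
    · have := MvPolynomial.totalDegree_coeff_finSuccEquiv_add_le (F.coeff a) b h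
      have := totdeg_coeff F a
      omega
  refine ⟨nn_le_card _ _ _ h2 fun s => ?_, h2⟩
  rw [MvPolynomial.finSuccEquiv_coeff_coeff]
  exact coeff_le_norm F a _

end

end Stp


namespace Stp

/-- number of prime factors -/
lemma omega_bound (a : ℕ) (ha : a ≠ 0) (L c : ℝ) (hL : 1 < L) (h : Real.log a ≤ c * L) :
    (a.primeFactors.card : ℝ) ≤ (2 + 2 * c) * L / Real.log L := by
  have hl : 0 < Real.log L := Real.log_pos hL
  have hs : 0 < Real.sqrt L := Real.sqrt_pos.2 (by linarith)
  have hls : Real.log (Real.sqrt L) = Real.log L / 2 := Real.log_sqrt (by linarith)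
  set t := ⌊Real.sqrt L⌋₊ with ht
  have ht1 : (t : ℝ) ≤ Real.sqrt L := Nat.floor_le hs.le
  set A := a.primeFactors.filter (fun p => p ≤ t) with hA
  set B := a.primeFactors.filter (fun p => ¬ p ≤ t) with hB
  have hcard : a.primeFactors.card = A.card + B.card :=
    (Finset.card_filter_add_card_filter_not _).symm
  have hAc : A.card ≤ t := by
    have : A ⊆ Finset.Icc 1 t := by
      intro p hp
      rw [hA, Finset.mem_filter] at hp
      rw [Finset.mem_Icc]
      exact ⟨(Nat.prime_of_mem_primeFactors hp.1).one_le, hp.2⟩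
    simpa using Finset.card_le_card this
  have hBp : (B.card : ℝ) * (Real.log L / 2) ≤ c * L := by
    have h1 : (∏ p ∈ B, p) ∣ a :=
      (Finset.prod_dvd_prod_of_subset _ _ _ (Finset.filter_subset _ _)).trans (Nat.prod_primeFactors_dvd a)
    have h2 : ((∏ p ∈ B, p : ℕ) : ℝ) ≤ a := by exact_mod_cast Nat.le_of_dvd (Nat.pos_of_ne_zero ha) h1
    have h3 : Real.sqrt L ^ B.card ≤ ((∏ p ∈ B, p : ℕ) : ℝ) := by
      push_cast
      rw [← Finset.prod_const]
      refine Finset.prod_le_prod (fun _ _ => hs.le) fun p hp => ?_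
      rw [hB, Finset.mem_filter] at hp
      have : t + 1 ≤ p := by omega
      have h4 : ((t:ℝ) + 1) ≤ p := by exact_mod_cast this
      exact ((Nat.lt_floor_add_one _).le).trans h4
    have h5 := Real.log_le_log (by positivity) (h3.trans h2)
    rw [Real.log_pow, hls] at h5
    linarith
  have hsq : Real.sqrt L * Real.log L ≤ 2 * L := by
    have h1 : Real.log L ≤ 2 * Real.sqrt L := by
      have := Real.log_le_sub_one_of_pos hs
      rw [hls] at this
      linarith
    calc _ ≤ Real.sqrt L * (2 * Real.sqrt L) := by gcongr
      _ = 2 * (Real.sqrt L * Real.sqrt L) := by ring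
      _ = 2 * L := by rw [Real.mul_self_sqrt (by linarith)]
  rw [le_div_iff₀ hl, hcard]
  push_cast
  have : (A.card : ℝ) ≤ Real.sqrt L := le_trans (by exact_mod_cast hAc) ht1
  nlinarith [mul_le_mul_of_nonneg_right this hl.le]

lemma log_ge {N : ℕ} (h : 3 ≤ N) : 1 < Real.log N := by
  rw [Real.lt_log_iff_exp_lt (by positivity)]
  have h1 := Real.exp_one_lt_d9
  have h2 : (3:ℝ) ≤ N := by exact_mod_cast h
  linarith

lemma omega_bound' (a N c1 c2 : ℕ) (ha : a ≠ 0) (hN : 3 ≤ N) (hc1 : 1 ≤ c1) (h : a ≤ c1 * N ^ c2) :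
    (a.primeFactors.card : ℝ) ≤ (2 + 2 * (Real.log c1 + c2)) * Real.log N / Real.log (Real.log N) := by
  have hL := log_ge hN
  have hc1' : (1:ℝ) ≤ c1 := by exact_mod_cast hc1
  have h0 := Real.log_nonneg hc1'
  refine omega_bound a ha _ _ hL ?_
  have h1 : (a:ℝ) ≤ c1 * (N:ℝ) ^ c2 := by exact_mod_cast h
  have hN0 : (0:ℝ) < N := by positivity
  have h2 := Real.log_le_log (by positivity) h1
  rw [Real.log_mul (by positivity) (by positivity), Real.log_pow] at h2
  nlinarith

section
variable {p : ℕ} [Fact p.Prime]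

lemma eZp_eq (a : ZMod p) : eZp p a = ZMod.stdAddChar a := by
  rw [ZMod.stdAddChar_apply, ZMod.toCircle_apply]
  rfl

lemma stdAddChar_sum {ι : Type*} (S : Finset ι) (f : ι → ZMod p) :
    (ZMod.stdAddChar (∑ i ∈ S, f i) : ℂ) = ∏ i ∈ S, ZMod.stdAddChar (f i) := by
  classical
  induction S using Finset.induction_on with
  | empty => simp
  | insert i S hi ih => rw [Finset.sum_insert hi, Finset.prod_insert hi, AddChar.map_add_eq_mul, ih]

lemma orth (m : ℕ) (z : Fin m → ZMod p) :
    ∑ u : Fin m → ZMod p, ZMod.stdAddChar (∑ i, u i * z i) = if z = 0 then (p:ℂ) ^ m else 0 := by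
  have h1 : ∀ u : Fin m → ZMod p, (ZMod.stdAddChar (∑ i, u i * z i) : ℂ) = ∏ i, ZMod.stdAddChar (u i * z i) :=
    fun u => stdAddChar_sum _ _
  simp_rw [h1]
  have h2 := Finset.prod_univ_sum (fun _ : Fin m => (Finset.univ : Finset (ZMod p)))
    (fun i a => (ZMod.stdAddChar (a * z i) : ℂ))
  rw [Fintype.piFinset_univ] at h2
  rw [← h2]
  have h3 : ∀ i, ∑ a : ZMod p, (ZMod.stdAddChar (a * z i) : ℂ) = if z i = 0 then (p:ℂ) else 0 := by
    intro i
    rw [AddChar.sum_mulShift _ (ZMod.isPrimitive_stdAddChar p), ZMod.card]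
    split_ifs <;> simp
  simp_rw [h3]
  split_ifs with hz
  · subst hz; simp
  · obtain ⟨i, hi⟩ := Function.ne_iff.1 hz
    exact Finset.prod_eq_zero (Finset.mem_univ i) (if_neg hi)

lemma parseval (m : ℕ) (g : (Fin m → ZMod p) → ℤ) :
    ∑ u : Fin m → ZMod p, ‖∑ x : Fin m → ZMod p, (g x : ℂ) * ZMod.stdAddChar (∑ i, u i * x i)‖ ^ 2
      = (p:ℝ)^m * ∑ x, (g x : ℝ)^2 := by
  have key : ∑ u : Fin m → ZMod p, (((‖∑ x : Fin m → ZMod p, (g x : ℂ) * ZMod.stdAddChar (∑ i, u i * x i)‖ ^ 2 : ℝ)) : ℂ)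
      = (p:ℂ)^m * ∑ x, (g x : ℂ)^2 := by
    have e : ∀ u : Fin m → ZMod p, (((‖∑ x : Fin m → ZMod p, (g x : ℂ) * ZMod.stdAddChar (∑ i, u i * x i)‖ ^ 2 : ℝ)) : ℂ)
        = ∑ x : Fin m → ZMod p, ∑ y : Fin m → ZMod p, (g x : ℂ) * g y * ZMod.stdAddChar (∑ i, u i * (x - y) i) := by
      intro u
      push_cast
      rw [← Complex.mul_conj', map_sum, Finset.sum_mul_sum]
      refine Finset.sum_congr rfl fun x _ => Finset.sum_congr rfl fun y _ => ?_
      have h1 : ∑ i, u i * (x - y) i = ∑ i, u i * x i + - ∑ i, u i * y i := by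
        rw [← sub_eq_add_neg, ← Finset.sum_sub_distrib]
        exact Finset.sum_congr rfl fun i _ => by rw [Pi.sub_apply, mul_sub]
      rw [h1, AddChar.map_add_eq_mul, AddChar.map_neg_eq_conj, map_mul, show (starRingEnd ℂ) (g y : ℂ) = g y from map_intCast _ _]
      ring
    simp_rw [e]
    rw [Finset.sum_comm, Finset.mul_sum]
    refine Finset.sum_congr rfl fun x _ => ?_
    rw [Finset.sum_comm]
    simp_rw [← Finset.mul_sum, orth]
    rw [Finset.sum_eq_single x]
    · simp; ring
    · intro y _ hy
      rw [if_neg (fun h => hy (sub_eq_zero.1 h).symm), mul_zero]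
    · simp
  have : (((∑ u : Fin m → ZMod p, ‖∑ x : Fin m → ZMod p, (g x : ℂ) * ZMod.stdAddChar (∑ i, u i * x i)‖ ^ 2 : ℝ)) : ℂ)
      = (((p:ℝ)^m * ∑ x, (g x : ℝ)^2 : ℝ) : ℂ) := by
    push_cast
    push_cast at key
    exact key
  exact_mod_cast this

lemma sum_cons {M : Type*} [AddCommMonoid M] (m : ℕ) (h : (Fin (m+1) → ZMod p) → M) :
    ∑ x, h x = ∑ x' : Fin m → ZMod p, ∑ a : ZMod p, h (Fin.cons a x') := by
  rw [Finset.sum_comm, ← Finset.sum_product', Finset.univ_product_univ]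
  exact (Equiv.sum_comp (Fin.consEquiv fun _ : Fin (m+1) => ZMod p) h).symm

lemma parseval0 (m : ℕ) (v : (Fin (m+1) → ZMod p) → ℕ) :
    ∑ u ∈ Finset.univ.filter (fun u : Fin (m+1) → ZMod p => u 0 = 0),
      ‖∑ x : Fin (m+1) → ZMod p, ((v x : ℂ) - 1) * eZp p (∑ i, u i * x i)‖ ^ 2
      = (p:ℝ)^m * ∑ x' : Fin m → ZMod p, (((∑ a : ZMod p, (v (Fin.cons a x') : ℤ)) - p : ℤ) : ℝ)^2 := by
  rw [← parseval, Finset.sum_filter, sum_cons]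
  refine Finset.sum_congr rfl fun u _ => ?_
  rw [Finset.sum_eq_single (0 : ZMod p)]
  · rw [Fin.cons_zero, if_pos rfl, sum_cons]
    congr 2
    refine Finset.sum_congr rfl fun x _ => ?_
    have : ∀ a : ZMod p, eZp p (∑ i, (Fin.cons 0 u : Fin (m+1) → ZMod p) i * (Fin.cons a x : Fin (m+1) → ZMod p) i)
        = ZMod.stdAddChar (∑ i, u i * x i) := by
      intro a
      rw [eZp_eq, Fin.sum_univ_succ]
      simp
    simp_rw [this]
    rw [← Finset.sum_mul, Finset.sum_sub_distrib]
    simp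
  · intro b _ hb
    rw [Fin.cons_zero, if_neg hb]
  · simp

end

end Stp


namespace Stp

section
variable {p : ℕ} [Fact p.Prime] {m : ℕ}

/-- number of roots -/
def vp (p : ℕ) [Fact p.Prime] (F : Polynomial (MvPolynomial (Fin (m+1)) ℤ)) (x : Fin (m+1) → ZMod p) : ℕ :=
  (Finset.univ.filter fun y : ZMod p => Polynomial.eval y
    ((F.map (MvPolynomial.map (Int.castRingHom (ZMod p)))).map (MvPolynomial.eval x)) = 0).card

lemma vp_le (F : Polynomial (MvPolynomial (Fin (m+1)) ℤ)) (hm : F.Monic) (x : Fin (m+1) → ZMod p) :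
    vp p F x ≤ F.natDegree := by
  unfold vp
  set G := (F.map (MvPolynomial.map (Int.castRingHom (ZMod p)))).map (MvPolynomial.eval x) with hG
  have hGm : G.Monic := (hm.map _).map _
  have hdeg : G.natDegree = F.natDegree := by rw [hG, (hm.map _).natDegree_map, hm.natDegree_map]
  rw [← hdeg]
  refine le_trans ?_ (card_roots' G)
  refine le_trans (Finset.card_le_card ?_) (Multiset.toFinset_card_le G.roots)
  intro y hy
  rw [Finset.mem_filter] at hy
  rw [Multiset.mem_toFinset, mem_roots hGm.ne_zero]
  exact hy.2

/-- specialisation of the last variables -/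
def f0 (p : ℕ) [Fact p.Prime] (F : Polynomial (MvPolynomial (Fin (m+1)) ℤ)) (x : Fin m → ZMod p) : (ZMod p)[X][X] :=
  (sepF F).map (mapRingHom (MvPolynomial.eval₂Hom (Int.castRingHom (ZMod p)) x))

lemma hom_eq (x : Fin m → ZMod p) (a : ZMod p) :
    (((evalRingHom a).comp (mapRingHom (MvPolynomial.eval₂Hom (Int.castRingHom (ZMod p)) x))).comp
      (MvPolynomial.finSuccEquiv ℤ m : MvPolynomial (Fin (m+1)) ℤ →+* (MvPolynomial (Fin m) ℤ)[X]))
    = (MvPolynomial.eval (Fin.cons a x : Fin (m+1) → ZMod p)).comp (MvPolynomial.map (Int.castRingHom (ZMod p))) := by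
  refine MvPolynomial.ringHom_ext (fun r => by simp) fun i => ?_
  refine Fin.cases ?_ (fun j => ?_) i
  · simp [MvPolynomial.finSuccEquiv_X_zero]
  · simp [MvPolynomial.finSuccEquiv_X_succ]

lemma count_eq (F : Polynomial (MvPolynomial (Fin (m+1)) ℤ)) (x : Fin m → ZMod p) :
    (Finset.univ.filter fun P : ZMod p × ZMod p => (f0 p F x).eval₂ (evalRingHom P.1) P.2 = 0).card
      = ∑ a : ZMod p, vp p F (Fin.cons a x) := by
  have h : ∀ a y : ZMod p, (f0 p F x).eval₂ (evalRingHom a) y = Polynomial.eval y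
      ((F.map (MvPolynomial.map (Int.castRingHom (ZMod p)))).map (MvPolynomial.eval (Fin.cons a x : Fin (m+1) → ZMod p))) := by
    intro a y
    rw [← eval_map, f0, sepF, Polynomial.map_map, Polynomial.map_map, Polynomial.map_map, ← hom_eq]
  simp_rw [h]
  unfold vp
  rw [← Finset.univ_product_univ, Finset.card_filter, Finset.sum_product]
  simp_rw [Finset.card_filter]

lemma N_triv (F : Polynomial (MvPolynomial (Fin (m+1)) ℤ)) (hm : F.Monic) (hd : 1 ≤ F.natDegree) (x : Fin m → ZMod p) :
    (((∑ a : ZMod p, (vp p F (Fin.cons a x) : ℤ)) - p : ℤ) : ℝ)^2 ≤ (F.natDegree : ℝ)^2 * (p:ℝ)^2 := by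
  have h1 : ∑ a : ZMod p, (vp p F (Fin.cons a x) : ℤ) ≤ F.natDegree * p := by
    refine (Finset.sum_le_card_nsmul _ _ (F.natDegree : ℤ) fun a _ => by exact_mod_cast vp_le F hm _).trans ?_
    simp [ZMod.card, mul_comm]
  have h0 : 0 ≤ ∑ a : ZMod p, (vp p F (Fin.cons a x) : ℤ) := Finset.sum_nonneg fun _ _ => by positivity
  set s := ∑ a : ZMod p, (vp p F (Fin.cons a x) : ℤ)
  have hp : (0:ℤ) ≤ p := by positivity
  have hd' : (1:ℤ) ≤ F.natDegree := by exact_mod_cast hd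
  have h2 : (s - p)^2 ≤ ((F.natDegree : ℤ) * p)^2 := by
    apply sq_le_sq'
    · nlinarith
    · linarith
  have h3 : (((s - p)^2 : ℤ) : ℝ) ≤ ((((F.natDegree : ℤ) * p)^2 : ℤ) : ℝ) := by exact_mod_cast h2
  push_cast at h3 ⊢
  rw [← mul_pow]; exact h3

lemma dgX_f0 (F : Polynomial (MvPolynomial (Fin (m+1)) ℤ)) (x : Fin m → ZMod p) : dgX (f0 p F x) ≤ totalDeg F := by
  rw [dgX_le_iff]
  intro j
  rw [f0, coeff_map]
  exact natDegree_map_le.trans ((dgX_le_iff _ _).1 (dgX_sepF F) j)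

lemma N_good (F : Polynomial (MvPolynomial (Fin (m+1)) ℤ)) (hm : F.Monic) (hd : 2 ≤ F.natDegree) (x : Fin m → ZMod p)
    (hp : P0 F.natDegree (totalDeg F * F.natDegree) ≤ p) (r : Ix F.natDegree (totalDeg F) → Option (ℕ × ℕ))
    (hr : MvPolynomial.eval x (MvPolynomial.map (Int.castRingHom (ZMod p)) (Mx (sepF F) r).det) ≠ 0) :
    (((∑ a : ZMod p, (vp p F (Fin.cons a x) : ℤ)) - p : ℤ) : ℝ)^2 ≤ (Cw F.natDegree (totalDeg F) : ℝ)^2 * (p:ℝ) := by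
  have h1 := weil_cert (f0 p F x) F.natDegree (totalDeg F) hd ((hm.map _).map _)
    (by rw [f0, sepF, (hm.map _).natDegree_map, hm.natDegree_map]) (dgX_f0 F x) hp r ?_
  · rw [count_eq] at h1
    push_cast at h1
    set s := ∑ a : ZMod p, (vp p F (Fin.cons a x) : ℤ)
    have h2 : (s - p)^2 ≤ ((Cw F.natDegree (totalDeg F) : ℤ) * Nat.sqrt p)^2 := by
      rw [← sq_abs]
      exact pow_le_pow_left₀ (abs_nonneg _) h1 2
    have h4 : ((Nat.sqrt p : ℕ) : ℤ)^2 ≤ p := by exact_mod_cast Nat.sqrt_le' p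
    have h5 : (s - p)^2 ≤ (Cw F.natDegree (totalDeg F) : ℤ)^2 * p := by
      rw [mul_pow] at h2
      exact h2.trans (mul_le_mul_of_nonneg_left h4 (by positivity))
    exact_mod_cast h5
  · have h2 : (MvPolynomial.eval₂Hom (Int.castRingHom (ZMod p)) x) (Mx (sepF F) r).det = (Mx (f0 p F x) r).det := by
      rw [f0, ← det_map, RingHom.map_det]; rfl
    rw [← h2]
    rw [MvPolynomial.eval_map] at hr
    exact hr

lemma bad_count (Φ : MvPolynomial (Fin m) (ZMod p)) (hΦ : Φ ≠ 0) (T : ℕ) (hT : Φ.totalDegree ≤ T) :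
    ((Finset.univ.filter fun x : Fin m → ZMod p => MvPolynomial.eval x Φ = 0).card : ℝ) * p ≤ T * (p:ℝ)^m := by
  have h := MvPolynomial.schwartz_zippel_totalDegree hΦ (Finset.univ : Finset (ZMod p))
  have hp : 0 < p := (Fact.out : p.Prime).pos
  rw [Fintype.piFinset_univ, Finset.card_univ, ZMod.card, div_le_div_iff₀ (by positivity) (by positivity)] at h
  have h2 : (Finset.univ.filter fun x : Fin m → ZMod p => MvPolynomial.eval x Φ = 0).card * p ≤ Φ.totalDegree * p^m := by
    exact_mod_cast h
  have h3 := h2.trans (Nat.mul_le_mul_right (p^m) hT)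
  exact_mod_cast h3

lemma sum_bound (F : Polynomial (MvPolynomial (Fin (m+1)) ℤ)) (hm : F.Monic) (hd : 2 ≤ F.natDegree)
    (r : Ix F.natDegree (totalDeg F) → Option (ℕ × ℕ)) (T : ℕ)
    (hT : ((Mx (sepF F) r).det).totalDegree ≤ T)
    (hr : MvPolynomial.map (Int.castRingHom (ZMod p)) (Mx (sepF F) r).det ≠ 0) :
    (p:ℝ)^m * ∑ x : Fin m → ZMod p, (((∑ a : ZMod p, (vp p F (Fin.cons a x) : ℤ)) - p : ℤ) : ℝ)^2
      ≤ ((Cw F.natDegree (totalDeg F) : ℝ)^2 + T * (F.natDegree : ℝ)^2 +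
          (F.natDegree : ℝ)^2 * P0 F.natDegree (totalDeg F * F.natDegree)) * (p:ℝ)^(2*m+1) := by
  have hp : (0:ℝ) < p := by exact_mod_cast (Fact.out : p.Prime).pos
  have hcardU : ((Finset.univ : Finset (Fin m → ZMod p)).card : ℝ) = (p:ℝ)^m := by
    simp [ZMod.card]
  have hpp : (p:ℝ)^(2*m+1) = p^m * (p^m * p) := by ring
  rw [hpp, ← mul_assoc, mul_comm _ ((p:ℝ)^m), mul_assoc]
  refine mul_le_mul_of_nonneg_left ?_ (by positivity)
  by_cases hP : P0 F.natDegree ((totalDeg F) * F.natDegree) ≤ p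
  · set Φ := MvPolynomial.map (Int.castRingHom (ZMod p)) (Mx (sepF F) r).det with hΦ
    have hb := bad_count Φ hr T ((Finset.sup_mono (MvPolynomial.support_map_subset _ _)).trans hT)
    set Bad := (Finset.univ.filter fun x : Fin m → ZMod p => MvPolynomial.eval x Φ = 0) with hBad
    have h1 : ∀ x : Fin m → ZMod p, (((∑ a : ZMod p, (vp p F (Fin.cons a x) : ℤ)) - p : ℤ) : ℝ)^2 ≤
        (Cw F.natDegree (totalDeg F) : ℝ)^2 * p + if MvPolynomial.eval x Φ = 0 then (F.natDegree:ℝ)^2 * (p:ℝ)^2 else 0 := by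
      intro x
      split_ifs with hx
      · exact (N_triv F hm (by omega) x).trans (le_add_of_nonneg_left (by positivity))
      · rw [add_zero]
        exact N_good F hm hd x hP r hx
    refine (Finset.sum_le_sum fun x _ => h1 x).trans ?_
    rw [Finset.sum_add_distrib, Finset.sum_const, nsmul_eq_mul, hcardU, ← Finset.sum_filter, Finset.sum_const, nsmul_eq_mul]
    have h2 : (Bad.card : ℝ) * ((F.natDegree:ℝ)^2 * (p:ℝ)^2) ≤ T * (p:ℝ)^m * ((F.natDegree:ℝ)^2 * p) := by
      have := mul_le_mul_of_nonneg_right hb (show (0:ℝ) ≤ (F.natDegree:ℝ)^2 * p by positivity)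
      calc _ = (Bad.card : ℝ) * p * ((F.natDegree:ℝ)^2 * p) := by ring
        _ ≤ _ := this
    have h3 : (0:ℝ) ≤ (F.natDegree:ℝ)^2 * (P0 F.natDegree ((totalDeg F)*F.natDegree) : ℝ) * ((p:ℝ)^m * p) := by positivity
    nlinarith
  · push Not at hP
    refine (Finset.sum_le_card_nsmul _ _ _ fun x _ => N_triv F hm (by omega) x).trans ?_
    rw [nsmul_eq_mul, hcardU]
    have hP' : (p:ℝ) ≤ P0 F.natDegree ((totalDeg F)*F.natDegree) := by exact_mod_cast hP.le
    have h1 : (F.natDegree:ℝ)^2 * ((p:ℝ)^m * p) * p ≤ (F.natDegree:ℝ)^2 * ((p:ℝ)^m * p) * (P0 F.natDegree ((totalDeg F)*F.natDegree) : ℝ) :=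
      mul_le_mul_of_nonneg_left hP' (by positivity)
    have h2 : (0:ℝ) ≤ ((Cw F.natDegree (totalDeg F) : ℝ)^2 + T * (F.natDegree:ℝ)^2) * ((p:ℝ)^m * p) := by positivity
    nlinarith

end

section
variable {m : ℕ}

/-- size of the matrix -/
def sz (d D : ℕ) : ℕ := Fintype.card (Ix d D)

/-- first constant -/
def k1 (m d D : ℕ) : ℕ := (sz d D).factorial * (2 * (d + D + 1) * (D + 1)^m) ^ sz d D

lemma main_fixed (F : Polynomial (MvPolynomial (Fin (m+1)) ℤ)) (hF : AbsIrred F) (hm : F.Monic)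
    (hd : 2 ≤ F.natDegree) (hN : 3 ≤ polyNorm F)
    (H : ∀ z : AdjoinRoot (toFrac F), AlgOverCoord 0 F z → CoordMem 0 F z) (d D : ℕ) (hd' : F.natDegree = d)
    (hD' : totalDeg F = D) :
    ∃ E : Finset ℕ, (∀ p ∈ E, p.Prime) ∧
      (E.card : ℝ) ≤ (2 + 2 * (Real.log (k1 m d D) + sz d D)) * Real.log (polyNorm F) / Real.log (Real.log (polyNorm F)) ∧
      ∀ p : ℕ, ∀ hp : p.Prime, p ∉ E → haveI : Fact p.Prime := ⟨hp⟩;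
        (p:ℝ)^m * ∑ x : Fin m → ZMod p, (((∑ a : ZMod p, (vp p F (Fin.cons a x) : ℤ)) - p : ℤ) : ℝ)^2
        ≤ ((Cw d D : ℝ)^2 + (sz d D * D : ℕ) * (d : ℝ)^2 + (d : ℝ)^2 * P0 d (D * d)) * (p:ℝ)^(2*m+1) := by
  subst hd' hD'
  obtain ⟨r, hr⟩ := det_of_cert (by omega) _ (gen_cert F hF hm (by omega) H (totalDeg F))
  have hB := det_Bd (Mx (sepF F) r) _ _ fun i j =>
    ent_Bd (sepF F) F.natDegree (totalDeg F) _ _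
      (Nat.mul_pos (by positivity) (by omega : 0 < polyNorm F)) (by rw [sepF]; exact natDegree_map_le) (dgX_sepF F) (sepF_Bd F) (r i) j
  set Φ := (Mx (sepF F) r).det with hΦ
  obtain ⟨s, hs⟩ := MvPolynomial.ne_zero_iff.1 hr
  have ha : (Φ.coeff s).natAbs ≠ 0 := by simpa using hs
  refine ⟨(Φ.coeff s).natAbs.primeFactors, fun p hp => Nat.prime_of_mem_primeFactors hp, ?_, ?_⟩
  · refine omega_bound' _ _ _ _ ha hN ?_ ?_
    · exact Nat.mul_pos (Nat.factorial_pos _) (by positivity)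
    · refine ((coeff_le_nn Φ s).trans hB.1).trans ?_
      unfold k1
      rw [mul_assoc (Nat.factorial _), ← mul_pow, ← mul_assoc (2 * (F.natDegree + totalDeg F + 1))]
      exact le_rfl
  · intro p hp hpE
    have : Fact p.Prime := ⟨hp⟩
    refine sum_bound F hm hd r _ hB.2 ?_
    intro h0
    have h1 := congrArg (MvPolynomial.coeff s) h0
    rw [MvPolynomial.coeff_map, MvPolynomial.coeff_zero, eq_intCast, ZMod.intCast_zmod_eq_zero_iff_dvd] at h1
    apply hpE
    rw [Nat.mem_primeFactors]
    exact ⟨hp, Int.natCast_dvd.1 h1, ha⟩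

end

end Stp

theorem statement18 (n : ℕ) (hn : 2 ≤ n) (D : ℕ) :
    ∃ C C' : ℝ, 0 < C ∧ 0 < C' ∧
      ∀ F : Polynomial (MvPolynomial (Fin n) ℤ),
        AbsIrred F → F.Monic → 2 ≤ F.natDegree → 3 ≤ polyNorm F → totalDeg F = D →
        (∀ z : AdjoinRoot (toFrac F),
          AlgOverCoord (⟨0, by omega⟩ : Fin n) F z →
            CoordMem (⟨0, by omega⟩ : Fin n) F z) →
        ∃ E : Finset ℕ, (∀ p ∈ E, p.Prime) ∧
          (E.card : ℝ) ≤
            C * Real.log (polyNorm F : ℝ) / Real.log (Real.log (polyNorm F : ℝ)) ∧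
          ∀ p : ℕ, ∀ hp : p.Prime, p ∉ E →
            haveI : NeZero p := ⟨hp.ne_zero⟩;
            (∑ u ∈ Finset.univ.filter (fun u : Fin n → ZMod p => u ⟨0, by omega⟩ = 0),
              ‖∑ x : Fin n → ZMod p,
                  (((Finset.univ.filter fun y : ZMod p =>
                      Polynomial.eval y
                        ((F.map (MvPolynomial.map (Int.castRingHom (ZMod p)))).map
                          (MvPolynomial.eval x)) = 0).card : ℂ) - 1) *
                    eZp p (∑ i, u i * x i)‖ ^ 2)
              ≤ C' * (p : ℝ) ^ (2 * n - 1) := by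
  obtain ⟨m, rfl⟩ : ∃ m, n = m + 1 := ⟨n - 1, by omega⟩
  set cA : ℕ → ℝ := fun d => 2 + 2 * (Real.log (Stp.k1 m d D) + Stp.sz d D) with hcA
  set cB : ℕ → ℝ := fun d => (Stp.Cw d D : ℝ)^2 + (Stp.sz d D * D : ℕ) * (d : ℝ)^2 + (d : ℝ)^2 * Stp.P0 d (D * d)
    with hcB
  have hA0 : ∀ d, 0 ≤ cA d := fun d => by
    have : 0 ≤ Real.log (Stp.k1 m d D) := Real.log_natCast_nonneg _
    simp only [hcA]
    positivity
  have hB0 : ∀ d, 0 ≤ cB d := fun d => by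
    simp only [hcB]
    positivity
  refine ⟨1 + ∑ d ∈ Finset.range (D+1), cA d, 1 + ∑ d ∈ Finset.range (D+1), cB d,
    add_pos_of_pos_of_nonneg one_pos (Finset.sum_nonneg fun d _ => hA0 d),
    add_pos_of_pos_of_nonneg one_pos (Finset.sum_nonneg fun d _ => hB0 d), ?_⟩
  intro F hF hm hd hN hD H
  obtain ⟨E, hE1, hE2, hE3⟩ := Stp.main_fixed F hF hm hd hN H F.natDegree D rfl hD
  have hdD : F.natDegree ∈ Finset.range (D+1) := by
    have := Stp.natDegree_le_totalDeg F hm.ne_zero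
    rw [Finset.mem_range]; omega
  have hL := Stp.log_ge hN
  have hLL := Real.log_pos hL
  refine ⟨E, hE1, hE2.trans ?_, ?_⟩
  · have h1 : cA F.natDegree ≤ 1 + ∑ d ∈ Finset.range (D+1), cA d := by
      have := Finset.single_le_sum (f := cA) (fun d _ => hA0 d) hdD
      linarith
    gcongr
  · intro p hp hpE
    have : Fact p.Prime := ⟨hp⟩
    have h1 := hE3 p hp hpE
    have h2 := Stp.parseval0 (p := p) m (fun x => Stp.vp p F x)
    have h3 : cB F.natDegree ≤ 1 + ∑ d ∈ Finset.range (D+1), cB d := by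
      have := Finset.single_le_sum (f := cB) (fun d _ => hB0 d) hdD
      linarith
    have h4 : 2 * (m + 1) - 1 = 2 * m + 1 := by omega
    rw [h4]
    refine le_trans (le_of_eq ?_) ((h2.le.trans h1).trans (mul_le_mul_of_nonneg_right h3 (by positivity)))
    rfl
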